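/- Let p(t) = (t−λ₁)^{k₁}⋯(t−λₙ)^{kₙ} be a complex polynomial with distinct roots λ₁,…,λₙ and all multiplicities kᵢ ≥ 2. Then the relation 'p(x) = 0, ‖x‖ ≤ 1' is stable in the following sense (equivalent to semiprojectivity of its universal C*-algebra): for every C*-algebra A, every increasing sequence I₁ ⊆ I₂ ⊆ ⋯ of closed two-sided ideals of A with I = closure(⋃ₙ Iₙ), and every x ∈ A/I with p(x) = 0 and ‖x‖ ≤ 1, there exist N ∈ ℕ and y ∈ A/I_N with p(y) = 0, ‖y‖ ≤ 1, such that the canonical surjection A/I_N → A/I maps y to x. -/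

import Mathlib

/-!
Write `q : A → A/I` for the quotient map and `x = q X`. The proof has four ingredients.

*Block form.* The range projections of the spectral idempotents of `x` form an `x`-invariant flag,
and their differences `P i` are orthogonal projections with sum one, with respect to which `x` is
block upper triangular with `i`-th diagonal block `lam i` plus an element of nilpotency order `k i`
(`exists_blocks`). Conversely every element of this shape is annihilated by the polynomial
(`prod_eq_zero_of_blocks`).

*Projections.* The `P i` are functions of a self-adjoint element with finite spectrum. The
spectral gaps persist modulo `I N`, for large `N`, in a self-adjoint lift of it to `A`, so the `P i`
lift to orthogonal projections with sum one in some `A/I N` (`exists_lift_proj`). It remains to lift a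
contraction along one surjection `π : A/I N → A/I`, keeping it block triangular of the given type.

*Peripheral eigenvalues.* As `x` is a contraction, the block of an eigenvalue outside the closed
unit disc vanishes, and the block of a unimodular eigenvalue is scalar and splits off as an
orthogonal summand (`exists_peripheral`). Thus all `lam i` may be assumed to satisfy
`‖lam i‖ ≤ d < 1`, so that the diagonal element `D = ∑ lam i P i` has norm at most `d`.

*Lifting triangular contractions* (`OrthProj.lift_tri`). Elements with small `k`-th power are
uniformly close to elements with zero `k`-th power (`nil_approx`), and this can be realised by a
linear map all of whose values are nilpotent and which asymptotically commutes with left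
multiplication by quasi-central approximate units (`QuasiLocal`). Starting from a lift of `x` that
is approximately triangular of the right type, such a map makes the shape exact at the cost of a small
change. This may push the norm slightly above `1`; since `‖D‖ < 1`, moving the element slightly
towards `D` over the ideal `ker π`, by means of a quasi-central approximate unit, restores the norm
bound while hardly changing the image under `π` (`norm_correction`). Hence a triangular contraction
whose image is close to `x` is close to triangular contractions whose image is arbitrarily close to
`x` (`OrthProj.step`), and iteration yields an exact lift (`OrthProj.lift_near`). Because the
closeness required is uniform, the exact lift `D` of the image of `D` can be transported in finitely
many such steps along the segment from that image to `x`.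
-/

namespace PolyLift

universe u

/-! ### Norm estimates and approximate units -/

section Basic

variable {A : Type u} [CStarAlgebra A]

lemma norm_one_le : ‖(1 : A)‖ ≤ 1 := by
  have := CStarRing.norm_star_mul_self (x := (1 : A))
  simp only [star_one, mul_one] at this
  nlinarith [norm_nonneg (1 : A)]

/-- Comparison of norms: `x⋆x ≤ y` forces `‖x‖² ≤ ‖y‖`; the difference is exhibited as a sum of
two squares `c⋆c + e⋆e`, so that no order on `A` has to be mentioned. -/
lemma norm_sq_le_of_add {x y c e : A} (h : star x * x + star c * c + star e * e = y) :
    ‖x‖ ^ 2 ≤ ‖y‖ := by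
  let _ := CStarAlgebra.spectralOrder A
  have := CStarAlgebra.spectralOrderedRing A
  rw [sq, ← CStarRing.norm_star_mul_self]
  refine CStarAlgebra.norm_le_norm_of_nonneg_of_le (star_mul_self_nonneg x) ?_
  rw [← h, add_assoc]
  exact le_add_of_nonneg_right (add_nonneg (star_mul_self_nonneg c) (star_mul_self_nonneg e))

/-- `M² - a⋆a` is a square as soon as `‖a‖ ≤ M`. -/
lemma exists_sq_compl {a : A} {M : ℝ} (ha : ‖a‖ ≤ M) :
    ∃ c : A, star a * a + star c * c = (M ^ 2 : ℝ) • (1 : A) := by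
  let _ := CStarAlgebra.spectralOrder A
  have := CStarAlgebra.spectralOrderedRing A
  have h1 : star a * a ≤ algebraMap ℝ A (‖a‖ ^ 2) := CStarAlgebra.star_mul_le_algebraMap_norm_sq
  have h2 : algebraMap ℝ A (‖a‖ ^ 2) ≤ algebraMap ℝ A (M ^ 2) :=
    algebraMap_mono A (by gcongr)
  obtain ⟨c, hc⟩ := CStarAlgebra.nonneg_iff_eq_star_mul_self.1 (sub_nonneg.2 (h1.trans h2))
  refine ⟨c, ?_⟩
  rw [← hc, add_sub_cancel, Algebra.algebraMap_eq_smul_one]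

/-- If `s, c` are commuting self-adjoint elements with `s² + c² = 1`, then
`s b s + c a c` is a compression of the diagonal operator `b ⊕ a` by an isometry. -/
lemma norm_conj_add_le {s c a b : A} {M : ℝ} (hs : IsSelfAdjoint s) (hc : IsSelfAdjoint c)
    (hsc : s * c = c * s) (h1 : s * s + c * c = 1) (ha : ‖a‖ ≤ M) (hb : ‖b‖ ≤ M) :
    ‖s * b * s + c * a * c‖ ≤ M := by
  have hM : 0 ≤ M := (norm_nonneg a).trans ha
  have key : ∀ (x y : A), ‖s * x + c * y‖ ^ 2 ≤ ‖star x * x + star y * y‖ := by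
    intro x y
    have hs' := hs.star_eq
    have hc' := hc.star_eq
    refine norm_sq_le_of_add (c := c * x - s * y) (e := 0) ?_
    have e1 : star x * x = star x * (s * s + c * c) * x := by rw [h1, mul_one]
    have e2 : star y * y = star y * (s * s + c * c) * y := by rw [h1, mul_one]
    rw [e1, e2]
    simp only [star_add, star_sub, star_mul, hs', hc', star_zero, mul_zero, add_zero]
    have e3 : star x * s * (c * y) = star x * c * (s * y) := by
      rw [mul_assoc, ← mul_assoc s, hsc]; simp only [mul_assoc]
    have e4 : star y * c * (s * x) = star y * s * (c * x) := by
      rw [mul_assoc, ← mul_assoc c, ← hsc]; simp only [mul_assoc]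
    simp only [mul_add, add_mul, mul_sub, sub_mul, e3, e4]
    noncomm_ring
  obtain ⟨a', ha'⟩ := exists_sq_compl ha
  obtain ⟨b', hb'⟩ := exists_sq_compl hb
  have h2 := key (b * s) (a * c)
  have h3 : ‖star (b * s) * (b * s) + star (a * c) * (a * c)‖ ≤ M ^ 2 := by
    let _ := CStarAlgebra.spectralOrder A
    have := CStarAlgebra.spectralOrderedRing A
    have h4 : star (b * s) * (b * s) + star (a * c) * (a * c) ≤ (M ^ 2 : ℝ) • (1 : A) := by
      have : (M ^ 2 : ℝ) • (1 : A) = (star (b * s) * (b * s) + star (a * c) * (a * c)) +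
          (star (b' * s) * (b' * s) + star (a' * c) * (a' * c)) := by
        have : (M ^ 2 : ℝ) • (1 : A) =
            s * ((M ^ 2 : ℝ) • (1 : A)) * s + c * ((M ^ 2 : ℝ) • (1 : A)) * c := by
          simp only [mul_smul_comm, smul_mul_assoc, mul_one, ← smul_add, h1]
        rw [this]
        nth_rw 1 [← hb']
        rw [← ha']
        simp only [star_mul, hs.star_eq, hc.star_eq]
        noncomm_ring
      rw [this]
      exact le_add_of_nonneg_right (add_nonneg (star_mul_self_nonneg _) (star_mul_self_nonneg _))
    have h5 := CStarAlgebra.norm_le_norm_of_nonneg_of_le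
      (add_nonneg (star_mul_self_nonneg _) (star_mul_self_nonneg _)) h4
    refine h5.trans ?_
    rw [norm_smul]
    have h6 := norm_one_le (A := A)
    rw [Real.norm_of_nonneg (by positivity)]
    nlinarith [sq_nonneg M]
  have h4 : s * b * s + c * a * c = s * (b * s) + c * (a * c) := by simp only [mul_assoc]
  rw [h4]
  exact abs_le_of_sq_le_sq' (h2.trans h3) hM |>.2

lemma norm_proj_le {p : A} (hp : IsSelfAdjoint p) (hp2 : p * p = p) : ‖p‖ ≤ 1 := by
  have := CStarRing.norm_star_mul_self (x := p)
  rw [hp.star_eq, hp2] at this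
  nlinarith [norm_nonneg p]

lemma cfc_conj {a : A} (ha : IsSelfAdjoint a) {h : ℝ → ℝ} (hh : Continuous h) :
    cfc h a * a * cfc h a = cfc (fun t => h t * t * h t) a := by
  rw [cfc_mul (fun t => h t * t) h a (hh.mul continuous_id').continuousOn hh.continuousOn,
    cfc_mul h (fun t => t) a hh.continuousOn continuousOn_id, cfc_id' ℝ a]

/-- Approximate units: finitely many elements of a two-sided ideal are almost fixed by a positive
contraction of the ideal, namely by `a (a + κ)⁻¹` with `a` the sum of the `j j⋆`. -/
lemma exists_approx_unit (K : Ideal A) [K.IsTwoSided] (F : Finset A) (hF : ∀ j ∈ F, j ∈ K)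
    {η : ℝ} (hη : 0 < η) :
    ∃ v ∈ K, IsSelfAdjoint v ∧ ‖v‖ ≤ 1 ∧ ‖1 - v‖ ≤ 1 ∧ ∀ j ∈ F, ‖(1 - v) * j‖ ≤ η := by
  let _ := CStarAlgebra.spectralOrder A
  have := CStarAlgebra.spectralOrderedRing A
  set a : A := ∑ j ∈ F, j * star j with ha
  have ha0 : 0 ≤ a := Finset.sum_nonneg fun j _ => mul_star_self_nonneg j
  have haK : a ∈ K := Ideal.sum_mem _ fun j hj => Ideal.mul_mem_right _ _ (hF j hj)
  have hsp : ∀ t ∈ spectrum ℝ a, 0 ≤ t := fun t ht => spectrum_nonneg_of_nonneg ha0 ht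
  set κ : ℝ := η ^ 2 with hκ
  have hκ0 : 0 < κ := by positivity
  have hne : ∀ t : ℝ, |t| + κ ≠ 0 := fun t => by positivity
  have hcont : Continuous fun t : ℝ => (|t| + κ)⁻¹ :=
    (continuous_abs.add continuous_const).inv₀ hne
  have hcont2 : Continuous fun t : ℝ => (|t| + κ)⁻¹ * t := hcont.mul continuous_id
  have hsa : IsSelfAdjoint a := .of_nonneg ha0
  set v : A := cfc (fun t : ℝ => (|t| + κ)⁻¹ * t) a with hv
  have hvsa : IsSelfAdjoint v := cfc_predicate _ _
  have hv1 : 1 - v = cfc (fun t : ℝ => 1 - (|t| + κ)⁻¹ * t) a := by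
    rw [cfc_sub (fun _ => (1 : ℝ)) (fun t => (|t| + κ)⁻¹ * t) a (by fun_prop)
      hcont2.continuousOn, cfc_const_one ℝ a]
  have hb : ∀ t : ℝ, 0 ≤ t → 1 - (|t| + κ)⁻¹ * t = κ / (t + κ) := by
    intro t ht
    rw [abs_of_nonneg ht]
    field_simp
    ring
  refine ⟨v, ?_, hvsa, ?_, ?_, ?_⟩
  · rw [hv, cfc_mul (fun t : ℝ => (|t| + κ)⁻¹) (fun t => t) a hcont.continuousOn (by fun_prop),
      cfc_id' ℝ a]
    exact K.mul_mem_left _ haK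
  · refine norm_cfc_le zero_le_one fun t ht => ?_
    have := hsp t ht
    rw [Real.norm_of_nonneg (by positivity), abs_of_nonneg this, inv_mul_le_iff₀ (by positivity)]
    linarith
  · rw [hv1]
    refine norm_cfc_le zero_le_one fun t ht => ?_
    have := hsp t ht
    rw [hb t this, Real.norm_of_nonneg (by positivity), div_le_one (by positivity)]
    linarith
  · intro j hj
    have h1 : IsSelfAdjoint (1 - v) := (IsSelfAdjoint.one A).sub hvsa
    have h2 : (1 - v) * (j * star j) * (1 - v) ≤ (1 - v) * a * (1 - v) := by
      have h3 : j * star j ≤ a :=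
        Finset.single_le_sum (f := fun j => j * star j) (fun j _ => mul_star_self_nonneg j) hj
      simpa [h1.star_eq] using star_left_conjugate_le_conjugate h3 (1 - v)
    have h4 : ‖(1 - v) * a * (1 - v)‖ ≤ κ := by
      have hc3 : Continuous fun t : ℝ => 1 - (|t| + κ)⁻¹ * t := continuous_const.sub hcont2
      have : (1 - v) * a * (1 - v) =
          cfc (fun t : ℝ => (1 - (|t| + κ)⁻¹ * t) * t * (1 - (|t| + κ)⁻¹ * t)) a := by
        rw [hv1, cfc_conj hsa hc3]
      rw [this]
      refine norm_cfc_le hκ0.le fun t ht => ?_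
      have h0 := hsp t ht
      rw [hb t h0, Real.norm_of_nonneg (by positivity)]
      have : κ / (t + κ) * t * (κ / (t + κ)) = κ * ((t / (t + κ)) * (κ / (t + κ))) := by ring
      rw [this]
      have e1 : t / (t + κ) ≤ 1 := by rw [div_le_one (by positivity)]; linarith
      have e2 : κ / (t + κ) ≤ 1 := by rw [div_le_one (by positivity)]; linarith
      have e3 : 0 ≤ κ / (t + κ) := by positivity
      have e4 : 0 ≤ t / (t + κ) := by positivity
      nlinarith [mul_le_one₀ e1 e3 e2]
    have h5 : ‖(1 - v) * j‖ ^ 2 ≤ η ^ 2 := by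
      have : (1 - v) * (j * star j) * (1 - v) = ((1 - v) * j) * star ((1 - v) * j) := by
        rw [star_mul, h1.star_eq]; simp only [mul_assoc]
      rw [sq, ← CStarRing.norm_self_mul_star, ← this, ← hκ]
      refine (CStarAlgebra.norm_le_norm_of_nonneg_of_le ?_ h2).trans h4
      rw [this]
      exact mul_star_self_nonneg _
    exact abs_le_of_sq_le_sq' h5 hη.le |>.2

/-- Closed two-sided ideals are self-adjoint. -/
lemma star_mem_of_closed (K : Ideal A) [K.IsTwoSided] (hK : IsClosed (K : Set A)) {a : A}
    (ha : a ∈ K) : star a ∈ K := by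
  rw [← SetLike.mem_coe, ← hK.closure_eq, Metric.mem_closure_iff]
  intro ε hε
  obtain ⟨v, hv, hsa, -, -, h⟩ := exists_approx_unit K {a} (by simpa using ha) (half_pos hε)
  refine ⟨star a * v, K.mul_mem_left _ hv, ?_⟩
  rw [dist_eq_norm]
  have : star a - star a * v = star ((1 - v) * a) := by
    rw [star_mul, star_sub, hsa.star_eq, star_one, mul_sub, mul_one]
  rw [this, norm_star]
  have := h a (by simp)
  linarith

end Basic

/-! ### Quotient C⋆-algebras -/

section Quotient
variable {A : Type u} [CStarAlgebra A]

lemma norm_quot_mk (K : Ideal A) (a : A) :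
    ‖(Submodule.Quotient.mk a : A ⧸ K)‖ = Metric.infDist a (K : Set A) :=
  QuotientAddGroup.norm_mk (S := K.toAddSubgroup) a

/-- The quotient norm satisfies the `C⋆`-inequality: with `v` an approximate unit of `K`,
`‖a (1 - v)‖² = ‖(1 - v) a⋆a (1 - v)‖` is almost at most `‖a⋆a + k‖`, for each `k ∈ K`. -/
lemma infDist_sq_le (K : Ideal A) [K.IsTwoSided] (a : A) :
    Metric.infDist a (K : Set A) * Metric.infDist a (K : Set A) ≤
      Metric.infDist (star a * a) (K : Set A) := by
  refine (Metric.le_infDist ⟨0, K.zero_mem⟩).2 fun k hk => le_of_forall_pos_le_add fun ε hε => ?_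
  obtain ⟨v, hv, hsa, h1, h2, h3⟩ := exists_approx_unit K {k} (by simpa using hk) hε
  have hsa' : star (1 - v) = 1 - v := by rw [star_sub, star_one, hsa.star_eq]
  have hle : Metric.infDist a (K : Set A) ≤ ‖a * (1 - v)‖ := by
    have h := Metric.infDist_le_dist_of_mem (x := a) (show a * v ∈ (K : Set A) from
      K.mul_mem_left _ hv)
    rwa [dist_eq_norm, show a - a * v = a * (1 - v) by rw [mul_sub, mul_one]] at h
  have h5 : ‖a * (1 - v)‖ * ‖a * (1 - v)‖ ≤ dist (star a * a) k + ε := by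
    rw [← CStarRing.norm_star_mul_self, dist_eq_norm]
    have e : star (a * (1 - v)) * (a * (1 - v)) =
        (1 - v) * (star a * a - k) * (1 - v) + (1 - v) * k * (1 - v) := by
      rw [star_mul, hsa']; noncomm_ring
    rw [e]
    refine (norm_add_le _ _).trans (add_le_add ?_ ?_)
    · calc _ ≤ ‖1 - v‖ * ‖star a * a - k‖ * ‖1 - v‖ := norm_mul₃_le
        _ ≤ 1 * ‖star a * a - k‖ * 1 := by gcongr
        _ = _ := by ring
    · calc _ ≤ ‖(1 - v) * k‖ * ‖1 - v‖ := norm_mul_le _ _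
        _ ≤ ε * 1 := by gcongr; exact h3 k (by simp)
        _ = ε := by ring
  exact (mul_le_mul hle hle Metric.infDist_nonneg (norm_nonneg _)).trans h5

/-- The norm and involution on the quotient of a C⋆-algebra by a closed two-sided ideal. -/
@[reducible] noncomputable def quotientCStar (K : Ideal A) [K.IsTwoSided]
    (hK : IsClosed (K : Set A)) : CStarAlgebra (A ⧸ K) := by
  have hsurj : Function.Surjective (Ideal.Quotient.mk K) := Ideal.Quotient.mk_surjective
  have hnorm : ∀ a, ‖Ideal.Quotient.mk K a‖ = Metric.infDist a (K : Set A) := norm_quot_mk K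
  haveI := hK
  letI i1 : NormedRing (A ⧸ K) :=
    { (inferInstance : Ring (A ⧸ K)), Submodule.Quotient.normedAddCommGroup K with
      norm_mul_le := by
        intro x y
        obtain ⟨a, rfl⟩ := hsurj x
        obtain ⟨b, rfl⟩ := hsurj y
        rw [← map_mul, hnorm, hnorm, hnorm]
        have key : ∀ k ∈ K, ∀ l ∈ K, Metric.infDist (a * b) (K : Set A) ≤ dist a k * dist b l := by
          intro k hk l hl
          have hm : a * b - (a - k) * (b - l) ∈ (K : Set A) := by
            have : a * b - (a - k) * (b - l) = a * l + k * (b - l) := by noncomm_ring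
            rw [this]
            exact K.add_mem (K.mul_mem_left _ hl) (Ideal.mul_mem_right _ _ hk)
          refine (Metric.infDist_le_dist_of_mem hm).trans ?_
          rw [dist_eq_norm, dist_eq_norm, dist_eq_norm, sub_sub_cancel]
          exact norm_mul_le _ _
        have hne : (K : Set A).Nonempty := ⟨0, K.zero_mem⟩
        refine le_of_forall_pos_le_add fun ε hε => ?_
        have hlim : Filter.Tendsto (fun t : ℝ => (Metric.infDist a (K : Set A) + t) *
            (Metric.infDist b (K : Set A) + t)) (nhdsWithin 0 (Set.Ioi 0))
            (nhds ((Metric.infDist a (K : Set A) + 0) * (Metric.infDist b (K : Set A) + 0))) :=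
          Filter.Tendsto.mono_left (Continuous.tendsto (by fun_prop) 0) nhdsWithin_le_nhds
        rw [add_zero, add_zero] at hlim
        obtain ⟨t, ht1, ht2⟩ := ((hlim.eventually (gt_mem_nhds (lt_add_of_pos_right _ hε))).and
          self_mem_nhdsWithin).exists
        have ht0 : (0 : ℝ) < t := ht2
        obtain ⟨k, hk, hk'⟩ := (Metric.infDist_lt_iff hne).1
          (lt_add_of_pos_right (Metric.infDist a (K : Set A)) ht0)
        obtain ⟨l, hl, hl'⟩ := (Metric.infDist_lt_iff hne).1
          (lt_add_of_pos_right (Metric.infDist b (K : Set A)) ht0)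
        refine (key k hk l hl).trans (le_trans ?_ ht1.le)
        exact mul_le_mul hk'.le hl'.le dist_nonneg (add_nonneg Metric.infDist_nonneg ht0.le) }
  let st : A ⧸ K → A ⧸ K := fun x => Ideal.Quotient.mk K (star (Function.surjInv hsurj x))
  have hst : ∀ a, st (Ideal.Quotient.mk K a) = Ideal.Quotient.mk K (star a) := by
    intro a
    refine Ideal.Quotient.eq.2 ?_
    rw [← star_sub]
    exact star_mem_of_closed K hK (Ideal.Quotient.eq.1 (Function.surjInv_eq hsurj _))
  letI i2 : StarRing (A ⧸ K) :=
    { star := st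
      star_involutive := by
        intro x; obtain ⟨a, rfl⟩ := hsurj x
        exact (congrArg st (hst a)).trans ((hst _).trans (by rw [star_star]))
      star_mul := by
        intro x y; obtain ⟨a, rfl⟩ := hsurj x; obtain ⟨b, rfl⟩ := hsurj y
        change st _ = st _ * st _
        rw [← map_mul, hst, hst, hst, star_mul, map_mul]
      star_add := by
        intro x y; obtain ⟨a, rfl⟩ := hsurj x; obtain ⟨b, rfl⟩ := hsurj y
        change st _ = st _ + st _
        rw [← map_add, hst, hst, hst, star_add, map_add] }
  exact
    { i1, i2, (inferInstance : Algebra ℂ (A ⧸ K)) with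
      complete := (Submodule.Quotient.completeSpace K).complete
      norm_mul_self_le := by
        intro x; obtain ⟨a, rfl⟩ := hsurj x
        change _ ≤ ‖st _ * _‖
        rw [hst, ← map_mul, hnorm, hnorm]
        exact infDist_sq_le K a
      norm_smul_le := (Submodule.Quotient.normedSpace K ℂ).norm_smul_le
      star_smul := by
        intro c x; obtain ⟨a, rfl⟩ := hsurj x
        change st (c • Ideal.Quotient.mk K a) = star c • st _
        have : ∀ (c : ℂ) (b : A), c • Ideal.Quotient.mk K b = Ideal.Quotient.mk K (c • b) :=
          fun _ _ => rfl
        rw [this, hst, hst, this, star_smul] }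

/-- Quotients of C⋆-algebras by closed two-sided ideals, with the quotient norm expressed as a
distance. -/
theorem exists_quotient (K : Ideal A) [K.IsTwoSided] (hK : IsClosed (K : Set A)) :
    ∃ (Q : Type u) (_ : CStarAlgebra Q) (q : A →⋆ₐ[ℂ] Q), Function.Surjective q ∧
      (∀ a, q a = 0 ↔ a ∈ K) ∧ ∀ a, ‖q a‖ = Metric.infDist a (K : Set A) := by
  let _ := quotientCStar K hK
  refine ⟨A ⧸ K, quotientCStar K hK,
    { Ideal.Quotient.mkₐ ℂ K with
      map_star' := fun a => ?_ }, Ideal.Quotient.mk_surjective,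
    fun a => Ideal.Quotient.eq_zero_iff_mem, norm_quot_mk K⟩
  refine Ideal.Quotient.eq.2 ?_
  rw [← star_sub]
  refine star_mem_of_closed K hK (Ideal.Quotient.eq.1 ?_)
  exact (Function.surjInv_eq Ideal.Quotient.mk_surjective _).symm

end Quotient

/-! ### Quasi-central approximate units -/

section QuasiCentral
variable {A : Type u} [CStarAlgebra A]

/-- The averaging step towards quasi-central approximate units. `S` is a sum of `m` approximate
units `u₁, …, u_m` of `K`, and `c b = ∑ (1 - uᵢ) b uᵢ`; the `uᵢ` are chosen successively so that the
summands of `c b` are almost orthogonal, whence `‖c b‖` grows only like `√m`. -/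
lemma quasicentral_sum (K : Ideal A) [K.IsTwoSided] (F G : Finset A)
    (hG : ∀ j ∈ G, j ∈ K) {β : ℝ} (hβ0 : 0 ≤ β)
    (hβ : ∀ b ∈ F, ‖b‖ ≤ β) {η : ℝ} (hη : 0 < η) (m : ℕ) :
    ∃ (S : A) (c : A → A), S ∈ K ∧ IsSelfAdjoint S ∧ ‖S‖ ≤ m ∧ ‖(m : ℂ) • 1 - S‖ ≤ m ∧
      (∀ j ∈ G, ‖((m : ℂ) • 1 - S) * j‖ ≤ m * η) ∧
      ∀ b ∈ F, c b ∈ K ∧ ‖c b‖ ^ 2 ≤ m * (β ^ 2 + 1) ∧ S * b - b * S = star (c (star b)) - c b := by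
  classical
  induction m with
  | zero => exact ⟨0, fun _ => 0, by simp⟩
  | succ m ih =>
    obtain ⟨S, c, hSK, hS, hS1, hS2, hSG, hc⟩ := ih
    obtain ⟨u, huK, hu, hu1, hu2, hu3⟩ := exists_approx_unit K (G ∪ F.image c) (by
      intro j hj
      rcases Finset.mem_union.1 hj with h | h
      · exact hG j h
      · obtain ⟨b, hb, rfl⟩ := Finset.mem_image.1 h
        exact (hc b hb).1) (η := min η (1 / (2 * (β + 1)))) (by positivity)
    have hu' : star (1 - u) = 1 - u := by rw [star_sub, star_one, hu.star_eq]
    have hm : ((m + 1 : ℕ) : ℂ) • (1 : A) - (S + u) = ((m : ℂ) • 1 - S) + (1 - u) := by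
      push_cast
      rw [add_smul, one_smul]; abel
    have hnu : ∀ b ∈ F, ‖(1 - u) * b * u‖ ≤ β := fun b hb =>
      calc _ ≤ ‖1 - u‖ * ‖b‖ * ‖u‖ := norm_mul₃_le
        _ ≤ 1 * β * 1 := by
          have := hβ b hb
          gcongr
        _ = β := by ring
    refine ⟨S + u, fun b => c b + (1 - u) * b * u, K.add_mem hSK huK, hS.add hu, ?_, ?_, ?_, ?_⟩
    · push_cast
      exact (norm_add_le _ _).trans (add_le_add hS1 hu1)
    · rw [hm]; push_cast
      exact (norm_add_le _ _).trans (add_le_add hS2 hu2)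
    · intro j hj
      rw [hm, add_mul]; push_cast
      have h1 := hSG j hj
      have h2 := hu3 j (Finset.mem_union_left _ hj)
      have h3 := min_le_left η (1 / (2 * (β + 1)))
      refine (norm_add_le _ _).trans ?_
      linarith
    · intro b hb
      obtain ⟨h1, h2, h3⟩ := hc b hb
      refine ⟨K.add_mem h1 (K.mul_mem_left _ huK), ?_, ?_⟩
      · have h4 : ‖(1 - u) * c b‖ ≤ 1 / (2 * (β + 1)) :=
          (hu3 _ (Finset.mem_union_right _ (Finset.mem_image_of_mem c hb))).trans (min_le_right _ _)
        have h5 : ‖star (c b) * ((1 - u) * b * u)‖ ≤ 1 / 2 := by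
          have : star (c b) * ((1 - u) * b * u) = star ((1 - u) * c b) * b * u := by
            rw [star_mul, hu']; simp only [mul_assoc]
          rw [this]
          calc _ ≤ ‖star ((1 - u) * c b)‖ * ‖b‖ * ‖u‖ := norm_mul₃_le
            _ ≤ 1 / (2 * (β + 1)) * β * 1 := by
              rw [norm_star]
              have := hβ b hb
              gcongr
            _ ≤ 1 / 2 := by
              rw [mul_one, div_mul_eq_mul_div, div_le_div_iff₀ (by positivity) two_pos]
              linarith
        set y := (1 - u) * b * u with hy
        have h6 : star (c b + y) * (c b + y) = star (c b) * c b + star (c b) * y +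
            star (star (c b) * y) + star y * y := by
          simp only [star_add, star_mul, star_star]; noncomm_ring
        rw [sq, ← CStarRing.norm_star_mul_self, h6]
        have h7 : ‖star (c b) * c b‖ ≤ m * (β ^ 2 + 1) := by
          rw [CStarRing.norm_star_mul_self, ← sq]; exact h2
        have h8 : ‖star y * y‖ ≤ β ^ 2 := by
          rw [CStarRing.norm_star_mul_self, sq]
          exact mul_self_le_mul_self (norm_nonneg _) (hnu b hb)
        have h9 := norm_add₄_le (a := star (c b) * c b) (b := star (c b) * y)
          (c := star (star (c b) * y)) (d := star y * y)
        rw [norm_star] at h9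
        push_cast
        linarith
      · have e : star (star b) = b := star_star b
        simp only [star_add, star_mul, hu', hu.star_eq, e]
        have : (S + u) * b - b * (S + u) = (S * b - b * S) + (u * b - b * u) := by noncomm_ring
        rw [this, h3]
        noncomm_ring

/-- Quasi-central approximate units. -/
lemma exists_quasicentral (K : Ideal A) [K.IsTwoSided] (F G : Finset A)
    (hG : ∀ j ∈ G, j ∈ K) {η : ℝ} (hη : 0 < η) :
    ∃ v ∈ K, IsSelfAdjoint v ∧ ‖v‖ ≤ 1 ∧ ‖1 - v‖ ≤ 1 ∧ (∀ b ∈ F, ‖v * b - b * v‖ ≤ η) ∧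
      ∀ j ∈ G, ‖(1 - v) * j‖ ≤ η := by
  classical
  set F' := F ∪ F.image star with hF'
  set β : ℝ := ∑ b ∈ F', ‖b‖ with hβ
  have hβ0 : 0 ≤ β := Finset.sum_nonneg fun _ _ => norm_nonneg _
  have hβ1 : ∀ b ∈ F', ‖b‖ ≤ β := fun b hb =>
    Finset.single_le_sum (f := fun b => ‖b‖) (fun _ _ => norm_nonneg _) hb
  have hst : ∀ b ∈ F', star b ∈ F' := by
    intro b hb
    rcases Finset.mem_union.1 hb with h | h
    · exact Finset.mem_union_right _ (Finset.mem_image_of_mem _ h)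
    · obtain ⟨a, ha, rfl⟩ := Finset.mem_image.1 h
      rw [star_star]
      exact Finset.mem_union_left _ ha
  obtain ⟨m, hm⟩ := exists_nat_gt (4 * (β ^ 2 + 1) / η ^ 2)
  have hm0 : (0 : ℝ) < m := lt_of_le_of_lt (by positivity) hm
  obtain ⟨S, c, hSK, hS, hS1, hS2, hSG, hc⟩ := quasicentral_sum K F' G hG hβ0 hβ1 hη m
  have hmc : (m : ℂ) ≠ 0 := by exact_mod_cast hm0.ne'
  have hnm : ‖((m : ℂ)⁻¹)‖ = (m : ℝ)⁻¹ := by simp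
  have h1v : 1 - (m : ℂ)⁻¹ • S = (m : ℂ)⁻¹ • ((m : ℂ) • 1 - S) := by
    rw [smul_sub, smul_smul, inv_mul_cancel₀ hmc, one_smul]
  refine ⟨(m : ℂ)⁻¹ • S, ?_, ?_, ?_, ?_, ?_, ?_⟩
  · rw [← smul_one_mul]; exact K.mul_mem_left _ hSK
  · rw [isSelfAdjoint_iff, star_smul, hS.star_eq]; simp
  · rw [norm_smul, hnm, inv_mul_le_iff₀ hm0, mul_one]; exact hS1
  · rw [h1v, norm_smul, hnm, inv_mul_le_iff₀ hm0, mul_one]; exact hS2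
  · intro b hb
    have hb' : b ∈ F' := Finset.mem_union_left _ hb
    obtain ⟨-, h2, h3⟩ := hc b hb'
    obtain ⟨-, h4, -⟩ := hc _ (hst b hb')
    rw [smul_mul_assoc, mul_smul_comm, ← smul_sub, norm_smul, hnm, inv_mul_le_iff₀ hm0, h3]
    have hlt : (m : ℝ) * (β ^ 2 + 1) ≤ (m * η / 2) ^ 2 := by
      rw [div_lt_iff₀ (by positivity)] at hm
      nlinarith
    have h5 : ‖c b‖ ≤ m * η / 2 := abs_le_of_sq_le_sq' (h2.trans hlt) (by positivity) |>.2
    have h6 : ‖c (star b)‖ ≤ m * η / 2 := abs_le_of_sq_le_sq' (h4.trans hlt) (by positivity) |>.2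
    refine (norm_sub_le _ _).trans ?_
    rw [norm_star]; linarith
  · intro j hj
    rw [h1v, smul_mul_assoc, norm_smul, hnm, inv_mul_le_iff₀ hm0]
    exact hSG j hj

end QuasiCentral

/-! ### Norm correction inside the fibres of a homomorphism -/

section NormCorrection
variable {A : Type u} [CStarAlgebra A]

lemma norm_le_one_of_sq_add {s c : A} (hs : IsSelfAdjoint s) (hc : IsSelfAdjoint c)
    (h1 : s * s + c * c = 1) : ‖s‖ ≤ 1 := by
  have := norm_sq_le_of_add (x := s) (y := 1) (c := c) (e := 0)
    (by rw [hs.star_eq, hc.star_eq, star_zero, mul_zero, add_zero, h1])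
  have h2 := norm_one_le (A := A)
  exact abs_le_of_sq_le_sq' (by linarith : ‖s‖ ^ 2 ≤ 1 ^ 2) zero_le_one |>.2

/-- A quasi-central partition `s² + c² = 1` with `s` in the ideal. It is the rational
parametrisation `s = 2v / (1 + v²)`, `c = (1 - v²) / (1 + v²)` of the circle, evaluated at a
quasi-central approximate unit `v`; rationality makes the commutators easy to estimate. -/
lemma exists_quasicentral_partition (K : Ideal A) [K.IsTwoSided] (F G : Finset A)
    (hG : ∀ j ∈ G, j ∈ K) {η : ℝ} (hη : 0 < η) :
    ∃ s ∈ K, ∃ c : A, IsSelfAdjoint s ∧ IsSelfAdjoint c ∧ s * c = c * s ∧ s * s + c * c = 1 ∧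
      (∀ b ∈ F, ‖s * b - b * s‖ ≤ η) ∧ (∀ b ∈ F, ‖c * b - b * c‖ ≤ η) ∧
      ∀ j ∈ G, ‖c * j‖ ≤ η := by
  obtain ⟨v, hvK, hv, hv1, hv2, hvF, hvG⟩ := exists_quasicentral K F G hG
    (show (0 : ℝ) < η / 8 by positivity)
  have hpos : ∀ t : ℝ, 0 < 1 + t * t := fun t => by nlinarith [sq_nonneg t]
  have hcont : Continuous fun t : ℝ => (1 + t * t)⁻¹ :=
    (by fun_prop : Continuous fun t : ℝ => 1 + t * t).inv₀ fun t => hpos t |>.ne'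
  obtain ⟨w, hw⟩ : ∃ w : A, w = cfc (fun t : ℝ => (1 + t * t)⁻¹) v := ⟨_, rfl⟩
  have hwsa : IsSelfAdjoint w := by rw [hw]; exact cfc_predicate _ _
  have hwv : w * v = v * w := by
    rw [hw]
    exact ((Commute.refl v).cfc_real _).eq
  have hw1 : w * (1 + v * v) = 1 := by
    have h2 : (1 + v * v) = cfc (fun t : ℝ => 1 + t * t) v := by
      rw [cfc_add v (fun _ => (1 : ℝ)) (fun t => t * t), cfc_const_one ℝ v,
        cfc_mul (fun t => t) (fun t => t) v, cfc_id' ℝ v]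
    rw [h2, hw, ← cfc_mul _ _ v hcont.continuousOn (by fun_prop)]
    rw [cfc_congr (g := fun _ => (1 : ℝ)) (fun t _ => inv_mul_cancel₀ (hpos t).ne'),
      cfc_const_one ℝ v]
  have hw1' : (1 + v * v) * w = 1 := by
    have : Commute w (1 + v * v) :=
      (Commute.one_right w).add_right (Commute.mul_right hwv hwv)
    rw [← this.eq, hw1]
  have hwn : ‖w‖ ≤ 1 := by
    rw [hw]
    refine norm_cfc_le zero_le_one fun t _ => ?_
    rw [Real.norm_of_nonneg (inv_nonneg.2 (hpos t).le)]
    exact inv_le_one_of_one_le₀ (by nlinarith [sq_nonneg t])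
  have hvv : ∀ b ∈ F, ‖v * v * b - b * (v * v)‖ ≤ η / 4 := fun b hb => by
    have e : v * v * b - b * (v * v) = v * (v * b - b * v) + (v * b - b * v) * v := by noncomm_ring
    have h := hvF b hb
    rw [e]
    calc _ ≤ ‖v‖ * ‖v * b - b * v‖ + ‖v * b - b * v‖ * ‖v‖ :=
          (norm_add_le _ _).trans (add_le_add (norm_mul_le _ _) (norm_mul_le _ _))
      _ ≤ 1 * (η / 8) + (η / 8) * 1 := by gcongr
      _ = η / 4 := by ring
  have hww : ∀ b ∈ F, ‖w * b - b * w‖ ≤ η / 4 := fun b hb => by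
    have e : w * b - b * w = w * (b * (v * v) - v * v * b) * w := by
      calc w * b - b * w = w * b * ((1 + v * v) * w) - (w * (1 + v * v)) * b * w := by
            rw [hw1, hw1', mul_one, one_mul]
        _ = _ := by noncomm_ring
    rw [e]
    have h := hvv b hb
    rw [← norm_neg, neg_sub] at h
    calc _ ≤ ‖w‖ * ‖b * (v * v) - v * v * b‖ * ‖w‖ := norm_mul₃_le
      _ ≤ 1 * (η / 4) * 1 := by gcongr
      _ = η / 4 := by ring
  have hvw : Commute v w := hwv.symm
  have n1 : ‖1 - v * v‖ ≤ 2 := by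
    have : 1 - v * v = (1 - v) + v * (1 - v) := by noncomm_ring
    rw [this]
    calc _ ≤ ‖1 - v‖ + ‖v‖ * ‖1 - v‖ := (norm_add_le _ _).trans (by gcongr; exact norm_mul_le _ _)
      _ ≤ 1 + 1 * 1 := by gcongr
      _ = 2 := by norm_num
  refine ⟨v * w + v * w, K.add_mem (Ideal.mul_mem_right _ _ hvK) (Ideal.mul_mem_right _ _ hvK),
    (1 - v * v) * w, ?_, ?_, ?_, ?_, ?_, ?_, ?_⟩
  · rw [isSelfAdjoint_iff, star_add, star_mul, hv.star_eq, hwsa.star_eq, hwv]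
  · rw [isSelfAdjoint_iff, star_mul, star_sub, star_mul, star_one, hv.star_eq, hwsa.star_eq,
      mul_sub, sub_mul, mul_one, one_mul, ← mul_assoc, hwv, mul_assoc, hwv, mul_assoc]
  · have h3 : Commute (v * w + v * w) ((1 - v * v) * w) := by
      have a1 : Commute v ((1 - v * v) * w) :=
        ((Commute.one_right v).sub_right ((Commute.refl v).mul_right (Commute.refl v))).mul_right hvw
      have a2 : Commute w ((1 - v * v) * w) :=
        ((Commute.one_right w).sub_right (hvw.symm.mul_right hvw.symm)).mul_right (Commute.refl w)
      exact (a1.mul_left a2).add_left (a1.mul_left a2)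
    exact h3.eq
  · have a3 : Commute w (1 - v * v) :=
      (Commute.one_right w).sub_right (hvw.symm.mul_right hvw.symm)
    have e1 : (v * w + v * w) * (v * w + v * w) = (4 : ℂ) • (v * v) * (w * w) := by
      have : v * w * (v * w) = v * v * (w * w) := by
        rw [mul_assoc, ← mul_assoc w, hwv]; simp only [mul_assoc]
      rw [mul_add, add_mul, this, smul_mul_assoc]
      module
    have e2 : (1 - v * v) * w * ((1 - v * v) * w) = (1 - v * v) * (1 - v * v) * (w * w) := by
      rw [mul_assoc, ← mul_assoc w, a3.eq]; simp only [mul_assoc]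
    have e3 : (1 + v * v) * (1 + v * v) * (w * w) = 1 := by
      calc _ = (1 + v * v) * ((1 + v * v) * w) * w := by simp only [mul_assoc]
        _ = 1 := by rw [hw1', mul_one, hw1']
    refine Eq.trans ?_ e3
    rw [e1, e2, ← add_mul]
    congr 1
    have : (4 : ℂ) • (v * v) = v * v + v * v + v * v + v * v := by module
    rw [this]
    noncomm_ring
  · intro b hb
    have e : (v * w + v * w) * b - b * (v * w + v * w) =
        (v * (w * b - b * w) + (v * b - b * v) * w) +
        (v * (w * b - b * w) + (v * b - b * v) * w) := by noncomm_ring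
    have h : ‖v * (w * b - b * w) + (v * b - b * v) * w‖ ≤ η / 2 := by
      have h1 := hvF b hb
      have h2 := hww b hb
      calc _ ≤ ‖v‖ * ‖w * b - b * w‖ + ‖v * b - b * v‖ * ‖w‖ :=
          (norm_add_le _ _).trans (add_le_add (norm_mul_le _ _) (norm_mul_le _ _))
        _ ≤ 1 * (η / 4) + (η / 8) * 1 := by gcongr
        _ ≤ η / 2 := by linarith
    rw [e]
    exact (norm_add_le _ _).trans (by linarith)
  · intro b hb
    have e : (1 - v * v) * w * b - b * ((1 - v * v) * w) =
        (1 - v * v) * (w * b - b * w) - (v * v * b - b * (v * v)) * w := by noncomm_ring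
    have h1 := hvv b hb
    have h2 := hww b hb
    rw [e]
    calc _ ≤ ‖1 - v * v‖ * ‖w * b - b * w‖ + ‖v * v * b - b * (v * v)‖ * ‖w‖ :=
          (norm_sub_le _ _).trans (add_le_add (norm_mul_le _ _) (norm_mul_le _ _))
      _ ≤ 2 * (η / 4) + (η / 4) * 1 := by gcongr
      _ ≤ η := by linarith
  · intro j hj
    have a3 : Commute w (1 - v * v) :=
      (Commute.one_right w).sub_right (hvw.symm.mul_right hvw.symm)
    have e : (1 - v * v) * w * j = w * ((1 - v) * j) + w * (v * ((1 - v) * j)) := by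
      rw [← a3.eq]; noncomm_ring
    have h := hvG j hj
    rw [e]
    calc _ ≤ ‖w‖ * ‖(1 - v) * j‖ + ‖w‖ * (‖v‖ * ‖(1 - v) * j‖) := by
          refine (norm_add_le _ _).trans (add_le_add (norm_mul_le _ _) ?_)
          exact (norm_mul_le _ _).trans (by gcongr; exact norm_mul_le _ _)
      _ ≤ 1 * (η / 8) + 1 * (1 * (η / 8)) := by gcongr
      _ ≤ η := by linarith

/-- A bounded operator `Φ` on `A` is quasi-local if it is asymptotically left linear over elements
that asymptotically commute with finite subsets of `A`. -/
def QuasiLocal (Φ : A →L[ℂ] A) : Prop :=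
  ∀ Z : A, ∀ η > 0, ∃ F : Finset A, ∃ κ > 0, ∀ u : A, (∀ b ∈ F, ‖u * b - b * u‖ ≤ κ) →
    ‖Φ (u * Z) - u * Φ Z‖ ≤ η

lemma QuasiLocal.zero : QuasiLocal (0 : A →L[ℂ] A) := fun Z η hη =>
  ⟨∅, 1, one_pos, fun u _ => by simpa using hη.le⟩

lemma QuasiLocal.add {Φ Ψ : A →L[ℂ] A} (hΦ : QuasiLocal Φ) (hΨ : QuasiLocal Ψ) :
    QuasiLocal (Φ + Ψ) := by
  classical
  intro Z η hη
  obtain ⟨F, κ, hκ, h⟩ := hΦ Z (η / 2) (half_pos hη)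
  obtain ⟨F', κ', hκ', h'⟩ := hΨ Z (η / 2) (half_pos hη)
  refine ⟨F ∪ F', min κ κ', lt_min hκ hκ', fun u hu => ?_⟩
  have h1 := h u fun b hb => (hu b (Finset.mem_union_left _ hb)).trans (min_le_left _ _)
  have h2 := h' u fun b hb => (hu b (Finset.mem_union_right _ hb)).trans (min_le_right _ _)
  have e : (Φ + Ψ) (u * Z) - u * (Φ + Ψ) Z =
      (Φ (u * Z) - u * Φ Z) + (Ψ (u * Z) - u * Ψ Z) := by
    simp only [_root_.add_apply, mul_add]; abel
  rw [e]
  exact (norm_add_le _ _).trans (by linarith)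

lemma QuasiLocal.sum {ι : Type*} (s : Finset ι) (Φ : ι → A →L[ℂ] A)
    (h : ∀ i ∈ s, QuasiLocal (Φ i)) : QuasiLocal (∑ i ∈ s, Φ i) := by
  classical
  induction s using Finset.induction_on with
  | empty => simpa using QuasiLocal.zero
  | insert i s hi ih =>
    rw [Finset.sum_insert hi]
    exact (h i (Finset.mem_insert_self _ _)).add
      (ih fun j hj => h j (Finset.mem_insert_of_mem hj))

lemma QuasiLocal.comp {Φ Ψ : A →L[ℂ] A} (hΦ : QuasiLocal Φ) (hΨ : QuasiLocal Ψ) :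
    QuasiLocal (Φ.comp Ψ) := by
  classical
  intro Z η hη
  obtain ⟨F, κ, hκ, h⟩ := hΦ (Ψ Z) (η / 2) (half_pos hη)
  obtain ⟨F', κ', hκ', h'⟩ := hΨ Z (η / (2 * (‖Φ‖ + 1))) (by positivity)
  refine ⟨F ∪ F', min κ κ', lt_min hκ hκ', fun u hu => ?_⟩
  have h1 := h u fun b hb => (hu b (Finset.mem_union_left _ hb)).trans (min_le_left _ _)
  have h2 := h' u fun b hb => (hu b (Finset.mem_union_right _ hb)).trans (min_le_right _ _)
  have e : (Φ.comp Ψ) (u * Z) - u * (Φ.comp Ψ) Z =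
      Φ (Ψ (u * Z) - u * Ψ Z) + (Φ (u * Ψ Z) - u * Φ (Ψ Z)) := by
    simp only [ContinuousLinearMap.comp_apply, map_sub]; abel
  rw [e]
  have h3 : ‖Φ (Ψ (u * Z) - u * Ψ Z)‖ ≤ η / 2 :=
    calc _ ≤ ‖Φ‖ * ‖Ψ (u * Z) - u * Ψ Z‖ := Φ.le_opNorm _
      _ ≤ (‖Φ‖ + 1) * (η / (2 * (‖Φ‖ + 1))) := by gcongr; linarith
      _ = η / 2 := by field_simp
  exact (norm_add_le _ _).trans (by linarith)

/-- The two-sided multiplication `Z ↦ a Z b`. -/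
noncomputable def mulLR (a b : A) : A →L[ℂ] A :=
  (ContinuousLinearMap.mul ℂ A a).comp ((ContinuousLinearMap.mul ℂ A).flip b)

@[simp] lemma mulLR_apply (a b Z : A) : mulLR a b Z = a * (Z * b) := rfl

lemma QuasiLocal.mulLR (a b : A) : QuasiLocal (mulLR a b) := by
  intro Z η hη
  refine ⟨{a}, η / (‖Z * b‖ + 1), by positivity, fun u hu => ?_⟩
  have h := hu a (by simp)
  have e : PolyLift.mulLR a b (u * Z) - u * PolyLift.mulLR a b Z = -(u * a - a * u) * (Z * b) := by
    simp only [mulLR_apply]; noncomm_ring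
  rw [e]
  calc _ ≤ ‖u * a - a * u‖ * ‖Z * b‖ := by
        refine (norm_mul_le _ _).trans ?_
        rw [norm_neg]
    _ ≤ η / (‖Z * b‖ + 1) * (‖Z * b‖ + 1) := by gcongr; linarith
    _ = η := by field_simp

variable {C : Type u} [CStarAlgebra C]

lemma norm_map_le' (π : A →⋆ₐ[ℂ] C) (a : A) : ‖π a‖ ≤ ‖a‖ := NonUnitalStarAlgHom.norm_apply_le π a

/-- Norm correction. If `Y = D + Φ Z` has norm slightly above `1` while its image is nearly a
contraction, then `Z` can be modified inside the fibre of `π` so that the norm gets arbitrarily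
close to `1`; the modification `Z ↦ Z - t u Z` with `u` a quasi-central approximate unit of `ker π`
moves `Y` towards `D` only over `ker π`. -/
lemma norm_correction (π : A →⋆ₐ[ℂ] C)
    (hq : ∀ c : C, ∀ ε, ‖c‖ < ε → ∃ b, π b = c ∧ ‖b‖ < ε)
    {Φ : A →L[ℂ] A} (hΦ : QuasiLocal Φ) (D Z : A) {d ω η t : ℝ} (hη : 0 < η)
    (ht0 : 0 ≤ t) (ht1 : t ≤ 1) (hD : ‖D‖ ≤ d) (hY : ‖D + Φ Z‖ ≤ 1 + ω)
    (hπ : ‖π (D + Φ Z)‖ ≤ 1 + η) (ht : (1 - t) * (1 + ω) + t * d ≤ 1) :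
    ∃ Z', π Z' = π Z ∧ ‖D + Φ Z'‖ ≤ 1 + 2 * η ∧ ‖Φ Z' - Φ Z‖ ≤ t * ‖Φ Z‖ + η ∧
      ‖π (Φ Z' - Φ Z)‖ ≤ η ∧ ∃ u, Z' = Z - u * Z ∧ π u = 0 := by
  classical
  set Y := D + Φ Z with hYd
  obtain ⟨F, κ, hκ, hF⟩ := hΦ Z (η / 5) (by positivity)
  -- up to small errors the corrected element is `s b s + c Y₁ c`, where `s² + c² = 1`, `b` is the
  -- contraction obtained by moving `Y` towards `D`, and `Y₁` is a lift of `π Y` of small norm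
  obtain ⟨Y₁, hY₁, hY₁n⟩ := hq (π Y) (1 + η + η / 5) (by linarith)
  set b : A := ((1 - t : ℝ) : ℂ) • Y + ((t : ℝ) : ℂ) • D with hb
  have hbn : ‖b‖ ≤ 1 := by
    refine (norm_add_le _ _).trans ?_
    rw [norm_smul, norm_smul, Complex.norm_of_nonneg ht0, Complex.norm_of_nonneg (by linarith)]
    calc _ ≤ (1 - t) * (1 + ω) + t * d := by gcongr
      _ ≤ 1 := ht
  let K : Ideal A := RingHom.ker π
  obtain ⟨s, hsK, c, hs, hc, hsc, h1, hsF, hcF, hcG⟩ := exists_quasicentral_partition K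
    (F ∪ {Y, b}) {Y - Y₁} (by
      intro j hj
      rw [Finset.mem_singleton] at hj
      rw [hj]
      change π _ = 0
      rw [map_sub, hY₁, sub_self]) (η := min (η / 5) (κ / 2)) (by positivity)
  have hπs : π s = 0 := hsK
  have hsn := norm_le_one_of_sq_add hs hc h1
  have hcn := norm_le_one_of_sq_add hc hs (by rw [add_comm, h1])
  have hη5 : min (η / 5) (κ / 2) ≤ η / 5 := min_le_left _ _
  have hu := hF (s * s) (fun x hx => by
    have h2 := (hsF x (Finset.mem_union_left _ hx)).trans (min_le_right _ _)
    have e : s * s * x - x * (s * s) = s * (s * x - x * s) + (s * x - x * s) * s := by noncomm_ring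
    rw [e]
    calc _ ≤ ‖s‖ * ‖s * x - x * s‖ + ‖s * x - x * s‖ * ‖s‖ :=
          (norm_add_le _ _).trans (add_le_add (norm_mul_le _ _) (norm_mul_le _ _))
      _ ≤ 1 * (κ / 2) + (κ / 2) * 1 := by gcongr
      _ = κ := by ring)
  have htn : ‖((t : ℝ) : ℂ)‖ = t := Complex.norm_of_nonneg ht0
  set R := Φ (s * s * Z) - s * s * Φ Z with hR
  have hdiff : Φ (Z - ((t : ℝ) : ℂ) • (s * s) * Z) - Φ Z =
      -((t : ℝ) : ℂ) • (s * s * Φ Z) - ((t : ℝ) : ℂ) • R := by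
    rw [smul_mul_assoc, map_sub, map_smul, hR]
    module
  have htR : ‖((t : ℝ) : ℂ) • R‖ ≤ η / 5 := by
    rw [norm_smul, htn]
    calc _ ≤ 1 * (η / 5) := by gcongr
      _ = η / 5 := one_mul _
  have hπu : π (((t : ℝ) : ℂ) • (s * s)) = 0 := by rw [map_smul, map_mul, hπs, mul_zero, smul_zero]
  refine ⟨Z - ((t : ℝ) : ℂ) • (s * s) * Z, ?_, ?_, ?_, ?_, _, rfl, hπu⟩
  · rw [map_sub, map_mul, hπu, zero_mul, sub_zero]
  · have hYin : Y ∈ F ∪ {Y, b} := Finset.mem_union_right _ (by simp)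
    have hbin : b ∈ F ∪ {Y, b} := Finset.mem_union_right _ (by simp)
    have k1 := (hcF Y hYin).trans hη5
    have k2 := (hsF b hbin).trans hη5
    have k3 := (hcG (Y - Y₁) (by simp)).trans hη5
    have e : D + Φ (Z - ((t : ℝ) : ℂ) • (s * s) * Z) = (s * b * s + c * Y₁ * c) +
        (c * (Y - Y₁)) * c + c * (c * Y - Y * c) + s * (s * b - b * s) -
        ((t : ℝ) : ℂ) • R := by
      have e1 : D + Φ (Z - ((t : ℝ) : ℂ) • (s * s) * Z) =
          Y + (Φ (Z - ((t : ℝ) : ℂ) • (s * s) * Z) - Φ Z) := by rw [hYd]; abel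
      have e2 : Y = s * s * Y + c * c * Y := by rw [← add_mul, h1, one_mul]
      have e3 : Φ Z = Y - D := by rw [hYd]; abel
      have e4 : s * s * Y + -((t : ℝ) : ℂ) • (s * s * Φ Z) = s * s * b := by
        rw [e3, hb, mul_add (s * s) (_ • Y), mul_smul_comm, mul_smul_comm, mul_sub]
        push_cast
        module
      have e5 : Y + -((t : ℝ) : ℂ) • (s * s * Φ Z) = s * s * b + c * c * Y := by
        rw [← e4]; nth_rw 1 [e2]; abel
      rw [e1, hdiff, ← add_sub_assoc, e5]
      noncomm_ring
    have n1 := norm_conj_add_le hs hc hsc h1 hY₁n.le (b := b) (by linarith)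
    have n2 : ‖(c * (Y - Y₁)) * c‖ ≤ η / 5 := by
      calc _ ≤ ‖c * (Y - Y₁)‖ * ‖c‖ := norm_mul_le _ _
        _ ≤ η / 5 * 1 := by gcongr
        _ = _ := mul_one _
    have n3 : ‖c * (c * Y - Y * c)‖ ≤ η / 5 := by
      calc _ ≤ ‖c‖ * ‖c * Y - Y * c‖ := norm_mul_le _ _
        _ ≤ 1 * (η / 5) := by gcongr
        _ = _ := one_mul _
    have n4 : ‖s * (s * b - b * s)‖ ≤ η / 5 := by
      calc _ ≤ ‖s‖ * ‖s * b - b * s‖ := norm_mul_le _ _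
        _ ≤ 1 * (η / 5) := by gcongr
        _ = _ := one_mul _
    rw [e]
    have := norm_sub_le ((s * b * s + c * Y₁ * c) +
        (c * (Y - Y₁)) * c + c * (c * Y - Y * c) + s * (s * b - b * s)) (((t : ℝ) : ℂ) • R)
    have := norm_add₄_le (a := s * b * s + c * Y₁ * c) (b := (c * (Y - Y₁)) * c)
      (c := c * (c * Y - Y * c)) (d := s * (s * b - b * s))
    linarith
  · rw [hdiff]
    refine (norm_sub_le _ _).trans (add_le_add ?_ (by linarith))
    rw [neg_smul, norm_neg, norm_smul, htn]
    gcongr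
    calc _ ≤ ‖s * s‖ * ‖Φ Z‖ := norm_mul_le _ _
      _ ≤ (1 * 1) * ‖Φ Z‖ := by
        gcongr
        exact (norm_mul_le _ _).trans (by gcongr)
      _ = _ := by ring
  · rw [hdiff, map_sub, map_smul, map_mul, map_mul, hπs]
    simp only [zero_mul, smul_zero, zero_sub, norm_neg]
    exact (norm_map_le' π _).trans (by linarith)

end NormCorrection

/-! ### Spectral cut-offs -/

section Cut
variable {A : Type u} [CStarAlgebra A]

lemma spectrum_star_mul_self {a : A} {t : ℝ} (ht : t ∈ spectrum ℝ (star a * a)) :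
    0 ≤ t ∧ t ≤ ‖a‖ ^ 2 := by
  let _ := CStarAlgebra.spectralOrder A
  have := CStarAlgebra.spectralOrderedRing A
  have h0 : 0 ≤ t := spectrum_nonneg_of_nonneg (star_mul_self_nonneg a) ht
  refine ⟨h0, ?_⟩
  have h1 := spectrum.norm_le_norm_mul_of_mem ht
  rw [CStarRing.norm_star_mul_self, Real.norm_of_nonneg h0] at h1
  nlinarith [norm_one_le (A := A), norm_nonneg (1 : A), mul_self_nonneg ‖a‖]

lemma cfc_mul_id {a : A} (ha : IsSelfAdjoint a) {h : ℝ → ℝ} (hh : Continuous h) :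
    cfc h a * a = cfc (fun t => h t * t) a := by
  rw [cfc_mul h (fun t => t) a hh.continuousOn continuousOn_id, cfc_id' ℝ a]

/-- The cut-off function `t ↦ min(max(t,0),1)`. -/
noncomputable def ramp (t : ℝ) : ℝ := max 0 (min 1 t)

lemma continuous_ramp : Continuous ramp := by unfold ramp; fun_prop

lemma ramp_nonneg (t : ℝ) : 0 ≤ ramp t := le_max_left _ _

lemma ramp_le_one (t : ℝ) : ramp t ≤ 1 := max_le zero_le_one (min_le_left _ _)

/-- `t ↦ (δ + |t|)^(-1/4)`. -/
noncomputable def damp (δ t : ℝ) : ℝ := (√(√(δ + |t|)))⁻¹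

lemma damp_sq {δ : ℝ} (t : ℝ) : damp δ t * damp δ t = (√(δ + |t|))⁻¹ := by
  rw [damp, ← mul_inv, Real.mul_self_sqrt (Real.sqrt_nonneg _)]

lemma continuous_damp {δ : ℝ} (hδ : 0 < δ) : Continuous (damp δ) := by
  unfold damp
  refine Continuous.inv₀ (by fun_prop) fun t => ?_
  have : 0 < √(√(δ + |t|)) := by positivity
  exact this.ne'

/-- `(W W⋆ + δ)^(-1/4)`. -/
noncomputable def dampEl (δ : ℝ) (W : A) : A := cfc (damp δ) (W * star W)

/-- `X⋆ (W W⋆ + δ)^(-1/2) X`. -/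
noncomputable def cutM (δ : ℝ) (W X : A) : A := star (dampEl δ W * X) * (dampEl δ W * X)

/-- Spectral cut-off of `cutM` at height `1`. -/
noncomputable def cutF (δ : ℝ) (W X : A) : A := cfc ramp (cutM δ W X)

/-- Spectral cut-off of `cutM` at height `2`; it is absorbed by `cutF`. -/
noncomputable def cutG (δ : ℝ) (W X : A) : A := cfc (fun t => ramp (t - 1)) (cutM δ W X)

variable {δ : ℝ} {W X : A}

lemma cutM_sa : IsSelfAdjoint (cutM δ W X) := IsSelfAdjoint.star_mul_self _

lemma dampEl_sa : IsSelfAdjoint (dampEl δ W) := cfc_predicate _ _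

lemma cutF_sa : IsSelfAdjoint (cutF δ W X) := cfc_predicate _ _

lemma cutG_sa : IsSelfAdjoint (cutG δ W X) := cfc_predicate _ _

lemma continuous_ramp_sub : Continuous fun t => ramp (t - 1) :=
  continuous_ramp.comp (continuous_id.sub continuous_const)

lemma cutG_mul_cutF : cutG δ W X * cutF δ W X = cutG δ W X := by
  rw [cutG, cutF, ← cfc_mul _ _ _ continuous_ramp_sub.continuousOn continuous_ramp.continuousOn]
  refine cfc_congr fun t _ => ?_
  simp only [ramp]
  rcases le_total t 1 with h | h
  · rw [max_eq_left (min_le_of_right_le (by linarith)), zero_mul]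
  · rw [min_eq_left h, max_eq_right zero_le_one, mul_one]

lemma norm_cutF_le : ‖cutF δ W X‖ ≤ 1 :=
  norm_cfc_le zero_le_one fun t _ => by
    rw [Real.norm_of_nonneg (ramp_nonneg t)]; exact ramp_le_one t

lemma norm_cutG_le : ‖cutG δ W X‖ ≤ 1 :=
  norm_cfc_le zero_le_one fun t _ => by
    rw [Real.norm_of_nonneg (ramp_nonneg _)]; exact ramp_le_one _

lemma continuous_inv_max : Continuous fun t : ℝ => (max 1 t)⁻¹ :=
  (by fun_prop : Continuous fun t : ℝ => max 1 t).inv₀ fun t =>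
    (lt_max_of_lt_left one_pos).ne'

lemma cutG_mul_eq_zero {b : A} (h : X * b = 0) : cutG δ W X * b = 0 := by
  have e : cutG δ W X = cfc (fun t => ramp (t - 1) * (max 1 t)⁻¹) (cutM δ W X) * cutM δ W X := by
    have hc : Continuous fun t => ramp (t - 1) * (max 1 t)⁻¹ :=
      continuous_ramp_sub.mul continuous_inv_max
    rw [cfc_mul_id cutM_sa hc, cutG]
    refine cfc_congr fun t _ => ?_
    simp only [ramp]
    rcases le_total t 1 with h | h
    · rw [max_eq_left (min_le_of_right_le (by linarith)), zero_mul, zero_mul]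
    · have h0 : t ≠ 0 := by linarith
      rw [max_eq_right h]; field_simp
  rw [e, cutM, mul_assoc, mul_assoc, mul_assoc, h, mul_zero, mul_zero, mul_zero]

lemma commute_cuts {P : A} (h1 : Commute X P) (h2 : Commute (star X) P) (hW : Commute W P)
    (hW' : Commute (star W) P) : Commute (cutF δ W X) P ∧ Commute (cutG δ W X) P := by
  have h3 : Commute (dampEl δ W) P := (hW.mul_left hW').cfc_real _
  have h4 : Commute (cutM δ W X) P := by
    rw [cutM, star_mul, dampEl_sa.star_eq]
    exact (h2.mul_left h3).mul_left (h3.mul_left h1)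
  exact ⟨h4.cfc_real _, h4.cfc_real _⟩

lemma map_cuts {C : Type u} [CStarAlgebra C] (π : A →⋆ₐ[ℂ] C) (hδ : 0 < δ) :
    π (cutF δ W X) = cutF δ (π W) (π X) ∧ π (cutG δ W X) = cutG δ (π W) (π X) := by
  have hc : Continuous π := AddMonoidHomClass.continuous_of_bound π 1 fun a => by
    rw [one_mul]; exact norm_map_le' π a
  have h1 : π (dampEl δ W) = dampEl δ (π W) := by
    rw [dampEl, StarAlgHom.map_cfc π (damp δ) (W * star W) (continuous_damp hδ).continuousOn hc
      (.mul_star_self _) ((IsSelfAdjoint.mul_star_self W).map π), map_mul, map_star, dampEl]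
  have h2 : π (cutM δ W X) = cutM δ (π W) (π X) := by
    rw [cutM, map_mul, map_star, map_mul, h1, cutM]
  constructor
  · rw [cutF, StarAlgHom.map_cfc π _ _ continuous_ramp.continuousOn hc
      cutM_sa (cutM_sa.map π), h2, cutF]
  · rw [cutG, StarAlgHom.map_cfc π _ _ continuous_ramp_sub.continuousOn hc
      cutM_sa (cutM_sa.map π), h2, cutG]

/-- `X⋆X ≤ κ X⋆(WW⋆ + δ)^(-1/2)X` with `κ² = δ + ‖W‖²`, compressed by `h(M)`. -/
lemma norm_mul_cfc_cutM (hδ : 0 < δ) {h : ℝ → ℝ} (hh : Continuous h) {L : ℝ} (hL : 0 ≤ L)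
    (hb : ∀ t, 0 ≤ t → h t * t * h t ≤ L) :
    ‖X * cfc h (cutM δ W X)‖ ^ 2 ≤ √(δ + ‖W‖ ^ 2) * L := by
  set κ := √(δ + ‖W‖ ^ 2) with hκ
  have hκ0 : 0 < κ := by positivity
  set H := cfc h (cutM δ W X) with hH
  have hHsa : star H = H := (cfc_predicate h (cutM δ W X) : IsSelfAdjoint _).star_eq
  set e : A := cfc (fun t => √(κ * (damp δ t * damp δ t) - 1)) (W * star W) with he
  have hec : Continuous fun t => κ * (damp δ t * damp δ t) - 1 := by
    have := continuous_damp hδ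
    fun_prop
  have hesa : star e = e :=
    (cfc_predicate (fun t => √(κ * (damp δ t * damp δ t) - 1)) (W * star W) :
      IsSelfAdjoint _).star_eq
  have hsa : IsSelfAdjoint (W * star W) := .mul_star_self _
  have hee : e * e + 1 = (κ : ℝ) • (dampEl δ W * dampEl δ W) := by
    have hd := (continuous_damp hδ).continuousOn (s := spectrum ℝ (W * star W))
    have hc2 : Continuous fun t => √(κ * (damp δ t * damp δ t) - 1) *
        √(κ * (damp δ t * damp δ t) - 1) := hec.sqrt.mul hec.sqrt
    rw [he, dampEl, ← cfc_mul _ _ _ hd hd, ← cfc_smul κ (fun t => damp δ t * damp δ t) _ (hd.mul hd),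
      ← cfc_mul _ _ _ hec.sqrt.continuousOn hec.sqrt.continuousOn, ← cfc_const_one ℝ (W * star W),
      ← cfc_add _ _ _ hc2.continuousOn (by fun_prop)]
    refine cfc_congr fun t ht => ?_
    have ht' : t ∈ spectrum ℝ (star (star W) * star W) := by rwa [star_star]
    obtain ⟨h0, h1⟩ := spectrum_star_mul_self ht'
    rw [norm_star] at h1
    have h2 : 1 ≤ κ * (damp δ t * damp δ t) := by
      rw [damp_sq, abs_of_nonneg h0, ← div_eq_mul_inv, one_le_div (by positivity)]
      exact Real.sqrt_le_sqrt (by linarith)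
    simp only [smul_eq_mul]
    rw [Real.mul_self_sqrt (by linarith)]
    ring
  have h1 := norm_sq_le_of_add (x := X * H) (c := e * (X * H)) (e := 0)
    (y := (κ : ℝ) • (H * cutM δ W X * H)) (by
      have e1 : star (X * H) * (X * H) + star (e * (X * H)) * (e * (X * H)) =
          star (X * H) * (e * e + 1) * (X * H) := by
        rw [star_mul e, hesa]; noncomm_ring
      rw [star_zero, zero_mul, add_zero, e1, hee, cutM, star_mul, hHsa, star_mul, dampEl_sa.star_eq,
        mul_smul_comm, smul_mul_assoc]
      simp only [mul_assoc])
  refine h1.trans ?_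
  rw [norm_smul, Real.norm_of_nonneg hκ0.le]
  gcongr
  rw [hH, cfc_conj cutM_sa hh]
  refine norm_cfc_le hL fun t ht => ?_
  obtain ⟨h0, -⟩ := spectrum_star_mul_self ht
  have : h t * t * h t = (h t) ^ 2 * t := by ring
  rw [Real.norm_of_nonneg (by rw [this]; positivity)]
  exact hb t h0

lemma norm_mul_one_sub_cutG (hδ : 0 < δ) :
    ‖X * (1 - cutG δ W X)‖ ^ 2 ≤ √(δ + ‖W‖ ^ 2) * 2 := by
  have e : 1 - cutG δ W X = cfc (fun t => 1 - ramp (t - 1)) (cutM δ W X) := by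
    rw [cfc_sub (fun _ => (1 : ℝ)) (fun t => ramp (t - 1)) _ (by fun_prop)
      continuous_ramp_sub.continuousOn, cfc_const_one ℝ _ cutM_sa, cutG]
  rw [e]
  refine norm_mul_cfc_cutM hδ (continuous_const.sub continuous_ramp_sub) two_pos.le fun t ht => ?_
  have h0 := ramp_nonneg (t - 1)
  have h1 := ramp_le_one (t - 1)
  change (1 - ramp (t - 1)) * t * (1 - ramp (t - 1)) ≤ 2
  rcases le_total t 2 with h | h
  · have : (1 - ramp (t - 1)) * (1 - ramp (t - 1)) ≤ 1 := by nlinarith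
    nlinarith
  · have : ramp (t - 1) = 1 := by
      rw [ramp, min_eq_left (by linarith), max_eq_right zero_le_one]
    rw [this]; norm_num

/-- If `W = X^(k+1)` is small then so is `f X^k`, because
`f = s(M) M = [s(M) (nX)⋆] [nX]` and `‖n X^(k+1)‖² ≤ ‖X^(k+1)‖`. -/
lemma norm_cutF_mul_le (hδ : 0 < δ) {V : A} (hV : X * V = W) :
    ‖cutF δ W X * V‖ ^ 2 ≤ ‖W‖ := by
  set M := cutM δ W X with hM
  have hMsa : IsSelfAdjoint M := cutM_sa
  set S := cfc (fun t : ℝ => (max 1 t)⁻¹) M with hS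
  have hSsa : star S = S := (cfc_predicate (fun t : ℝ => (max 1 t)⁻¹) M : IsSelfAdjoint _).star_eq
  have e : cutF δ W X = S * M := by
    rw [hS, cfc_mul_id hMsa continuous_inv_max, cutF]
    refine cfc_congr fun t ht => ?_
    obtain ⟨h0, -⟩ := spectrum_star_mul_self ht
    simp only [ramp]
    rcases le_total t 1 with h | h
    · rw [min_eq_right h, max_eq_right h0, max_eq_left h]; simp
    · have h0 : t ≠ 0 := by linarith
      rw [min_eq_left h, max_eq_right h, max_eq_right zero_le_one]; field_simp
  set N := dampEl δ W with hN
  have hNsa : star N = N := dampEl_sa.star_eq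
  have e2 : cutF δ W X * V = S * star (N * X) * (N * W) := by
    rw [e, hM, cutM]; simp only [mul_assoc, hV, ← hN]
  have n1 : ‖S * star (N * X)‖ ≤ 1 := by
    have : ‖S * star (N * X)‖ ^ 2 ≤ 1 ^ 2 := by
      rw [sq, ← CStarRing.norm_self_mul_star, star_mul S, star_star, hSsa]
      have : S * star (N * X) * (N * X * S) = S * M * S := by
        rw [hM, cutM, ← hN]; simp only [mul_assoc]
      rw [this, hS, cfc_conj hMsa continuous_inv_max]
      refine norm_cfc_le (by norm_num) fun t ht => ?_
      obtain ⟨h0, -⟩ := spectrum_star_mul_self ht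
      have hm : 0 < max 1 t := lt_max_of_lt_left one_pos
      rw [Real.norm_of_nonneg (by positivity)]
      have a1 : (max 1 t)⁻¹ * t ≤ 1 := by
        rw [inv_mul_le_iff₀ hm, mul_one]; exact le_max_right _ _
      have a2 : (max 1 t)⁻¹ ≤ 1 := inv_le_one_of_one_le₀ (le_max_left _ _)
      rw [one_pow]
      exact mul_le_one₀ a1 (by positivity) a2
    exact abs_le_of_sq_le_sq' this zero_le_one |>.2
  have n2 : ‖N * W‖ ^ 2 ≤ ‖W‖ := by
    rw [sq, ← CStarRing.norm_self_mul_star, star_mul, hNsa]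
    have : N * W * (star W * N) = N * (W * star W) * N := by simp only [mul_assoc]
    rw [this, hN, dampEl, cfc_conj (.mul_star_self _) (continuous_damp hδ)]
    refine norm_cfc_le (norm_nonneg _) fun t ht => ?_
    have ht' : t ∈ spectrum ℝ (star (star W) * star W) := by rwa [star_star]
    obtain ⟨h0, h1⟩ := spectrum_star_mul_self ht'
    rw [norm_star] at h1
    have e3 : damp δ t * t * damp δ t = (√(δ + |t|))⁻¹ * t := by rw [← damp_sq]; ring
    rw [e3, Real.norm_of_nonneg (by positivity), inv_mul_le_iff₀ (by positivity),
      abs_of_nonneg h0]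
    have e4 : √t ≤ ‖W‖ := Real.sqrt_le_iff.2 ⟨norm_nonneg _, h1⟩
    calc t = √t * √t := (Real.mul_self_sqrt h0).symm
      _ ≤ √(δ + t) * ‖W‖ := by
        gcongr; linarith
  have n3 : ‖cutF δ W X * V‖ ≤ ‖N * W‖ := by
    rw [e2]
    calc _ ≤ ‖S * star (N * X)‖ * ‖N * W‖ := norm_mul_le _ _
      _ ≤ 1 * ‖N * W‖ := by gcongr
      _ = _ := one_mul _
  calc _ ≤ ‖N * W‖ ^ 2 := by gcongr
    _ ≤ _ := n2

/-- The truncation `T = f X g` satisfies `T^k ≈ f X^k`. -/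
lemma norm_cut_pow_le (hδ : 0 < δ) (hX : ‖X‖ ≤ 1) {k : ℕ} (hk : 1 ≤ k) {e : ℝ}
    (he : 0 ≤ e) (hκ : √(δ + ‖X ^ (k + 1)‖ ^ 2) * 2 ≤ e ^ 2) :
    ‖(cutF δ (X ^ (k + 1)) X * X * cutG δ (X ^ (k + 1)) X) ^ k‖ ≤
      √‖X ^ (k + 1)‖ + k * e := by
  set W := X ^ (k + 1) with hW
  set f := cutF δ W X with hf
  set g := cutG δ W X with hg
  have hgf : g * f = g := cutG_mul_cutF
  have hfn : ‖f‖ ≤ 1 := norm_cutF_le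
  have hgn : ‖g‖ ≤ 1 := norm_cutG_le
  have h1 : ‖X * (1 - g)‖ ≤ e :=
    abs_le_of_sq_le_sq' ((norm_mul_one_sub_cutG hδ).trans hκ) he |>.2
  have h2 : ‖f * X ^ k‖ ≤ √‖W‖ := by
    have := norm_cutF_mul_le (W := W) hδ (V := X ^ k) (by rw [hW, pow_succ'])
    exact Real.le_sqrt_of_sq_le this
  have hTn : ‖f * X * g‖ ≤ 1 :=
    calc _ ≤ ‖f‖ * ‖X‖ * ‖g‖ := norm_mul₃_le
      _ ≤ 1 * 1 * 1 := by gcongr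
      _ = 1 := by norm_num
  have h3 : ∀ m : ℕ, ‖X ^ m‖ ≤ 1 := by
    intro m
    induction m with
    | zero => rw [pow_zero]; exact norm_one_le
    | succ m ih =>
      rw [pow_succ]
      exact (norm_mul_le _ _).trans (mul_le_one₀ ih (norm_nonneg _) hX)
  have h4 : ∀ m : ℕ, ‖f * X * (1 - g) * X ^ m‖ ≤ e := fun m =>
    calc _ = ‖f * (X * (1 - g)) * X ^ m‖ := by simp only [mul_assoc]
      _ ≤ ‖f‖ * ‖X * (1 - g)‖ * ‖X ^ m‖ := norm_mul₃_le
      _ ≤ 1 * e * 1 := by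
        gcongr
        exact h3 m
      _ = e := by ring
  have h5 : ∀ m : ℕ, ‖(f * X * g) ^ (m + 1) - f * X ^ (m + 1)‖ ≤ (m + 1 : ℕ) * e := by
    intro m
    induction m with
    | zero =>
      have e1 : (f * X * g) ^ (0 + 1) - f * X ^ (0 + 1) = -(f * X * (1 - g) * X ^ 0) := by
        simp only [zero_add, pow_one, pow_zero]; noncomm_ring
      rw [e1, norm_neg]; simpa using h4 0
    | succ m ih =>
      have e1 : (f * X * g) ^ (m + 1 + 1) - f * X ^ (m + 1 + 1) =
          f * X * g * ((f * X * g) ^ (m + 1) - f * X ^ (m + 1)) - f * X * (1 - g) * X ^ (m + 1) := by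
        have : f * X * g * (f * X ^ (m + 1)) = f * X * g * X ^ (m + 1) := by
          rw [← mul_assoc (f * X * g), mul_assoc (f * X), hgf]
        rw [mul_sub, this, pow_succ' _ (m + 1), pow_succ' X (m + 1)]
        noncomm_ring
      rw [e1]
      have h6 : ‖f * X * g * ((f * X * g) ^ (m + 1) - f * X ^ (m + 1))‖ ≤ (m + 1 : ℕ) * e :=
        (norm_mul_le _ _).trans (by
          calc _ ≤ 1 * ((m + 1 : ℕ) * e) := by gcongr
            _ = _ := one_mul _)
      refine (norm_sub_le _ _).trans ?_
      have := h4 (m + 1)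
      push_cast at h6 ⊢
      linarith
  obtain ⟨m, rfl⟩ : ∃ m, k = m + 1 := ⟨k - 1, by omega⟩
  have h6 := h5 m
  have h7 : (f * X * g) ^ (m + 1) =
    f * X ^ (m + 1) + ((f * X * g) ^ (m + 1) - f * X ^ (m + 1)) := by abel
  rw [h7]
  exact (norm_add_le _ _).trans (add_le_add h2 h6)

end Cut

/-! ### Approximation by nilpotents -/

section Nilpotent

/-- `Φ` replaces `X` by a nearby element of nilpotency order `k`, and moreover sends every element
to such a nilpotent; the closeness is measured both in `A` (`ε₁`) and after applying `π` (`ε₂`). -/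
structure NilApprox {A C : Type u} [CStarAlgebra A] [CStarAlgebra C] (π : A →⋆ₐ[ℂ] C) (k : ℕ)
    (X : A) (ε₁ ε₂ : ℝ) (Φ : A →L[ℂ] A) : Prop where
  quasiLocal : QuasiLocal Φ
  pow_eq_zero : ∀ Z, Φ Z ^ k = 0
  ker_le : ∀ b, X * b = 0 → ∀ Z, Φ Z * b = 0
  commute : ∀ P, Commute X P → Commute (star X) P → ∀ Z, Commute Z P → Commute (Φ Z) P
  close : ‖Φ X - X‖ ≤ ε₁
  close_map : ‖π (Φ X - X)‖ ≤ ε₂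

lemma exists_small {ε γ₀ : ℝ} (hε : 0 < ε) (hγ₀ : 0 < γ₀) (k : ℕ) :
    ∃ γ > 0, ∀ δ α : ℝ, 0 ≤ α → α ≤ γ → 0 < δ → δ ≤ γ →
      ∃ e, 0 ≤ e ∧ √(δ + α ^ 2) * 2 ≤ e ^ 2 ∧ e ≤ ε ∧ √α + k * e ≤ γ₀ := by
  set e : ℝ := min ε (γ₀ / (2 * (k + 1))) with he
  have he0 : 0 < e := by positivity
  refine ⟨min 1 (min (γ₀ ^ 2 / 4) (e ^ 4 / 8)), by positivity, fun δ α h0 h1 h2 h3 =>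
    ⟨e, he0.le, ?_, min_le_left _ _, ?_⟩⟩
  · have a1 : α ≤ 1 := h1.trans (min_le_left _ _)
    have a2 : α ≤ e ^ 4 / 8 := h1.trans ((min_le_right _ _).trans (min_le_right _ _))
    have a3 : δ ≤ e ^ 4 / 8 := h3.trans ((min_le_right _ _).trans (min_le_right _ _))
    have a4 : √(δ + α ^ 2) ≤ e ^ 2 / 2 := by
      rw [Real.sqrt_le_iff]
      refine ⟨by positivity, ?_⟩
      nlinarith
    linarith
  · have a1 : √α ≤ γ₀ / 2 := by
      rw [Real.sqrt_le_iff]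
      refine ⟨by positivity, ?_⟩
      have := h1.trans ((min_le_right _ _).trans (min_le_left _ _))
      linarith [this, (by ring : (γ₀ / 2) ^ 2 = γ₀ ^ 2 / 4)]
    have a2 : (k : ℝ) * e ≤ γ₀ / 2 := by
      calc (k : ℝ) * e ≤ (k + 1) * (γ₀ / (2 * (k + 1))) := by
            have := min_le_right ε (γ₀ / (2 * ((k : ℝ) + 1)))
            gcongr
            linarith
        _ = γ₀ / 2 := by field_simp
    linarith

lemma pow_add_of_mul_eq_zero {A : Type u} [Ring A] {y U : A} (h1 : y * U = 0) (h2 : U * U = 0)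
    (m : ℕ) : (y + U) ^ (m + 1) = y ^ (m + 1) + U * y ^ m := by
  induction m with
  | zero => simp
  | succ m ih =>
    rw [pow_succ', ih]
    have e1 : y * (U * y ^ m) = 0 := by rw [← mul_assoc, h1, zero_mul]
    have e2 : U * (U * y ^ m) = 0 := by rw [← mul_assoc, h2, zero_mul]
    rw [add_mul, mul_add, mul_add, e1, e2, add_zero, add_zero, ← pow_succ']

/-- Elements with small `k`-th power are close to elements with vanishing `k`-th power, uniformly
and by means of a linear, quasi-local map. Induction on `k`: with the cut-offs `f, g` attached to
`X^(k+1)`, the truncation `T = f X g` has small `k`-th power and `X ≈ T + (1 - f) X g`, where the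
second summand is square zero and annihilated by `T` from the left. -/
lemma nil_approx (k : ℕ) : ∃ γ : ℝ → ℝ, (∀ ε > 0, 0 < γ ε) ∧
    ∀ (A C : Type u) [CStarAlgebra A] [CStarAlgebra C] (π : A →⋆ₐ[ℂ] C) (X : A), ‖X‖ ≤ 1 →
      ∀ ε₁ > 0, ∀ ε₂ > 0, ‖X ^ (k + 1)‖ ≤ γ ε₁ → ‖π X ^ (k + 1)‖ ≤ γ ε₂ →
        ∃ Φ, NilApprox π (k + 1) X ε₁ ε₂ Φ := by
  induction k with
  | zero =>
    refine ⟨fun ε => ε, fun ε h => h, fun A C _ _ π X _ ε₁ _ ε₂ _ h1 h2 => ⟨0, ?_⟩⟩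
    refine ⟨.zero, by simp, by simp, by simp, by simpa using h1, by simpa using h2⟩
  | succ k ih =>
    obtain ⟨γ, hγ, H⟩ := ih
    have hex : ∀ ε : ℝ, ∃ γ' > 0, 0 < ε → ∀ δ α : ℝ, 0 ≤ α → α ≤ γ' → 0 < δ → δ ≤ γ' →
        ∃ e, 0 ≤ e ∧ √(δ + α ^ 2) * 2 ≤ e ^ 2 ∧ e ≤ ε / 2 ∧
          √α + ((k + 1 : ℕ) : ℝ) * e ≤ γ (ε / 2) := by
      intro ε
      by_cases hε : 0 < ε
      · obtain ⟨γ', h1, h2⟩ := exists_small (half_pos hε) (hγ _ (half_pos hε)) (k + 1)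
        exact ⟨γ', h1, fun _ => h2⟩
      · exact ⟨1, one_pos, fun h => absurd h hε⟩
    choose γ' hγ' H' using hex
    refine ⟨γ', fun ε _ => hγ' ε, ?_⟩
    intro A C _ _ π X hX ε₁ hε₁ ε₂ hε₂ h1 h2
    set δ := min (γ' ε₁) (γ' ε₂) with hδd
    have hδ : 0 < δ := lt_min (hγ' _) (hγ' _)
    set W := X ^ (k + 1 + 1) with hW
    set f := cutF δ W X with hf
    set g := cutG δ W X with hg
    have hπW : π W = π X ^ (k + 1 + 1) := by rw [hW, map_pow]
    obtain ⟨hπf, hπg⟩ := map_cuts (W := W) (X := X) π hδ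
    have hgf : g * f = g := cutG_mul_cutF
    obtain ⟨e₁, he0, he1, he2, he3⟩ :=
      H' ε₁ hε₁ δ ‖W‖ (norm_nonneg _) h1 hδ (min_le_left _ _)
    obtain ⟨e₂, he0', he1', he2', he3'⟩ :=
      H' ε₂ hε₂ δ ‖π X ^ (k + 1 + 1)‖ (norm_nonneg _) h2 hδ (min_le_right _ _)
    have hfn : ‖f‖ ≤ 1 := norm_cutF_le
    have hgn : ‖g‖ ≤ 1 := norm_cutG_le
    set T := f * X * g with hT
    have hTn : ‖T‖ ≤ 1 :=
      calc _ ≤ ‖f‖ * ‖X‖ * ‖g‖ := norm_mul₃_le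
        _ ≤ 1 * 1 * 1 := by gcongr
        _ = 1 := by norm_num
    have hT1 : ‖T ^ (k + 1)‖ ≤ γ (ε₁ / 2) :=
      (norm_cut_pow_le hδ hX (by omega) he0 he1).trans he3
    have hπT : π T = cutF δ (π X ^ (k + 1 + 1)) (π X) * π X *
        cutG δ (π X ^ (k + 1 + 1)) (π X) := by
      rw [hT, map_mul, map_mul, hf, hg, hπf, hπg, hπW]
    have hT2 : ‖π T ^ (k + 1)‖ ≤ γ (ε₂ / 2) := by
      rw [hπT]
      exact (norm_cut_pow_le hδ ((norm_map_le' π X).trans hX) (by omega) he0' he1').trans he3'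
    obtain ⟨Φ, hΦ⟩ := H A C π T hTn (ε₁ / 2) (half_pos hε₁) (ε₂ / 2) (half_pos hε₂) hT1 hT2
    have hXg1 : ‖X * (1 - g)‖ ≤ e₁ :=
      abs_le_of_sq_le_sq' ((norm_mul_one_sub_cutG hδ).trans he1) he0 |>.2
    have hXg2 : ‖π (X * (1 - g))‖ ≤ e₂ := by
      rw [map_mul, map_sub, map_one, hg, hπg, hπW]
      exact abs_le_of_sq_le_sq' ((norm_mul_one_sub_cutG hδ).trans he1') he0' |>.2
    have happ : ∀ Z, (Φ.comp (mulLR f g) + mulLR (1 - f) g) Z =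
        Φ (f * Z * g) + (1 - f) * Z * g := fun Z => by simp [mul_assoc]
    have hdiff : (Φ.comp (mulLR f g) + mulLR (1 - f) g) X - X = (Φ T - T) - X * (1 - g) := by
      rw [happ, hT]; noncomm_ring
    refine ⟨Φ.comp (mulLR f g) + mulLR (1 - f) g,
      (hΦ.quasiLocal.comp (.mulLR _ _)).add (.mulLR _ _), ?_, ?_, ?_, ?_, ?_⟩
    · intro Z
      -- `T` annihilates `1 - f` on the right because `g f = g`, hence so do all values of `Φ`
      have k1 : Φ (f * Z * g) * (1 - f) = 0 := hΦ.ker_le _ (by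
        rw [hT, mul_assoc, mul_sub, mul_one, hgf, sub_self, mul_zero]) _
      have k2 : Φ (f * Z * g) * ((1 - f) * Z * g) = 0 := by
        rw [mul_assoc (1 - f), ← mul_assoc, k1, zero_mul]
      have k3 : (1 - f) * Z * g * ((1 - f) * Z * g) = 0 := by
        have : g * (1 - f) = 0 := by rw [mul_sub, mul_one, hgf, sub_self]
        calc _ = (1 - f) * Z * (g * (1 - f)) * (Z * g) := by simp only [mul_assoc]
          _ = 0 := by rw [this, mul_zero, zero_mul]
      have k4 := hΦ.pow_eq_zero (f * Z * g)
      rw [happ, pow_add_of_mul_eq_zero k2 k3, pow_succ, k4, zero_mul, mul_zero, add_zero]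
    · intro b hb Z
      have k1 : g * b = 0 := cutG_mul_eq_zero hb
      rw [happ, add_mul, hΦ.ker_le b (by rw [hT, mul_assoc, k1, mul_zero]), mul_assoc _ g, k1,
        mul_zero, add_zero]
    · intro P hP hP' Z hZ
      have hW1 : Commute W P := hP.pow_left _
      have hW2 : Commute (star W) P := by rw [hW, star_pow]; exact hP'.pow_left _
      obtain ⟨hfP, hgP⟩ := commute_cuts (δ := δ) hP hP' hW1 hW2
      rw [happ]
      refine (hΦ.commute P ((hfP.mul_left hP).mul_left hgP) ?_ _
        ((hfP.mul_left hZ).mul_left hgP)).add_left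
        ((((Commute.one_left P).sub_left hfP).mul_left hZ).mul_left hgP)
      rw [hT, star_mul, star_mul, hf, hg, cutF_sa.star_eq, cutG_sa.star_eq]
      exact hgP.mul_left (hP'.mul_left hfP)
    · rw [hdiff]
      refine (norm_sub_le _ _).trans ?_
      have := hΦ.close
      linarith
    · rw [hdiff, map_sub]
      refine (norm_sub_le _ _).trans ?_
      have := hΦ.close_map
      linarith

/-- The same for elements of norm at most `3`, and with exponent `k ≥ 1`. -/
lemma nil_approx_three (k : ℕ) (hk : 1 ≤ k) : ∃ γ : ℝ → ℝ, (∀ ε > 0, 0 < γ ε) ∧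
    ∀ (A C : Type u) [CStarAlgebra A] [CStarAlgebra C] (π : A →⋆ₐ[ℂ] C) (X : A), ‖X‖ ≤ 3 →
      ∀ ε₁ > 0, ∀ ε₂ > 0, ‖X ^ k‖ ≤ γ ε₁ → ‖π X ^ k‖ ≤ γ ε₂ →
        ∃ Φ, NilApprox π k X ε₁ ε₂ Φ := by
  obtain ⟨m, rfl⟩ : ∃ m, k = m + 1 := ⟨k - 1, by omega⟩
  obtain ⟨γ, hγ, H⟩ := nil_approx.{u} m
  refine ⟨fun ε => γ (ε / 3), fun ε h => hγ _ (by positivity), ?_⟩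
  intro A C _ _ π X hX ε₁ hε₁ ε₂ hε₂ h1 h2
  have h3 : ‖(3 : ℂ)⁻¹‖ = 3⁻¹ := by simp
  have hpow : ∀ {D : Type u} [CStarAlgebra D] (y : D),
      ‖((3 : ℂ)⁻¹ • y) ^ (m + 1)‖ ≤ ‖y ^ (m + 1)‖ := by
    intro D _ y
    rw [smul_pow, norm_smul, norm_pow, h3]
    have : ((3 : ℝ)⁻¹) ^ (m + 1) ≤ 1 := pow_le_one₀ (by norm_num) (by norm_num)
    nlinarith [norm_nonneg (y ^ (m + 1))]
  obtain ⟨Φ, hΦ⟩ := H A C π ((3 : ℂ)⁻¹ • X) (by rw [norm_smul, h3]; linarith) (ε₁ / 3)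
    (by positivity) (ε₂ / 3) (by positivity) ((hpow X).trans h1)
    (by rw [map_smul]; exact (hpow _).trans h2)
  have e : Φ X - X = (3 : ℂ) • (Φ ((3 : ℂ)⁻¹ • X) - (3 : ℂ)⁻¹ • X) := by
    rw [map_smul, smul_sub, smul_smul, smul_smul]; norm_num
  refine ⟨Φ, hΦ.quasiLocal, hΦ.pow_eq_zero, ?_, ?_, ?_, ?_⟩
  · intro b hb Z
    exact hΦ.ker_le b (by rw [smul_mul_assoc, hb, smul_zero]) Z
  · intro P hP hP' Z hZ
    refine hΦ.commute P (hP.smul_left _) ?_ Z hZ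
    rw [star_smul]; exact hP'.smul_left _
  · rw [e, norm_smul]
    have := hΦ.close
    rw [show ‖(3 : ℂ)‖ = 3 by simp]
    linarith
  · rw [e, map_smul, norm_smul]
    have := hΦ.close_map
    rw [show ‖(3 : ℂ)‖ = 3 by simp]
    linarith

end Nilpotent

/-! ### Block triangular elements -/

section Triangular
variable {A C : Type u} [CStarAlgebra A] [CStarAlgebra C]

/-- A sequence of mutually orthogonal projections. -/
structure OrthProj (P : ℕ → A) : Prop where
  sa : ∀ i, IsSelfAdjoint (P i)
  idem : ∀ i, P i * P i = P i
  orth : ∀ i j, i ≠ j → P i * P j = 0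

variable {P : ℕ → A}

lemma OrthProj.map (hP : OrthProj P) (π : A →⋆ₐ[ℂ] C) : OrthProj fun i => π (P i) where
  sa i := (hP.sa i).map π
  idem i := by rw [← map_mul, hP.idem]
  orth i j h := by rw [← map_mul, hP.orth i j h, map_zero]

lemma OrthProj.mul (hP : OrthProj P) (i j : ℕ) : P i * P j = if i = j then P i else 0 := by
  split_ifs with h
  · rw [h, hP.idem]
  · exact hP.orth i j h

lemma OrthProj.norm_le (hP : OrthProj P) (i : ℕ) : ‖P i‖ ≤ 1 := norm_proj_le (hP.sa i) (hP.idem i)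

lemma norm_proj_conj_le {p a b : A} {M : ℝ} (hp : IsSelfAdjoint p) (hp2 : p * p = p)
    (ha : ‖a‖ ≤ M) (hb : ‖b‖ ≤ M) : ‖p * b * p + (1 - p) * a * (1 - p)‖ ≤ M :=
  norm_conj_add_le hp ((IsSelfAdjoint.one A).sub hp) (by noncomm_ring)
    (by rw [mul_sub, sub_mul, sub_mul, hp2]; noncomm_ring) ha hb

lemma OrthProj.sum_mul (hP : OrthProj P) (T : Finset ℕ) (i : ℕ) :
    (∑ j ∈ T, P j) * P i = if i ∈ T then P i else 0 := by
  rw [Finset.sum_mul]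
  simp only [hP.mul]
  rw [Finset.sum_ite_eq' T i P]

lemma OrthProj.mul_sum (hP : OrthProj P) (T : Finset ℕ) (i : ℕ) :
    P i * (∑ j ∈ T, P j) = if i ∈ T then P i else 0 := by
  rw [Finset.mul_sum]
  simp only [hP.mul]
  rw [Finset.sum_ite_eq T i fun _ => P i]

lemma OrthProj.sum_sa (hP : OrthProj P) (T : Finset ℕ) : IsSelfAdjoint (∑ j ∈ T, P j) :=
  isSelfAdjoint_sum T fun i _ => hP.sa i

lemma OrthProj.sum_idem (hP : OrthProj P) (T : Finset ℕ) :
    (∑ j ∈ T, P j) * (∑ j ∈ T, P j) = ∑ j ∈ T, P j := by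
  rw [Finset.mul_sum]
  refine Finset.sum_congr rfl fun i hi => ?_
  rw [hP.sum_mul, if_pos hi]

lemma OrthProj.norm_diag_le (hP : OrthProj P) (T : Finset ℕ) (lam : ℕ → ℂ) {d : ℝ} (hd : 0 ≤ d)
    (hl : ∀ i ∈ T, ‖lam i‖ ≤ d) : ‖∑ i ∈ T, lam i • P i‖ ≤ d := by
  classical
  induction T using Finset.induction_on with
  | empty => simpa using hd
  | insert a T ha ih =>
    have h1 := ih fun i hi => hl i (Finset.mem_insert_of_mem hi)
    have h2 : ‖lam a • P a‖ ≤ d := by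
      rw [norm_smul]
      calc _ ≤ d * 1 := by
            gcongr
            · exact hl a (Finset.mem_insert_self _ _)
            · exact hP.norm_le a
        _ = d := mul_one d
    have h3 := norm_proj_conj_le (hP.sum_sa T) (hP.sum_idem T) h2 h1
    have e1 : (∑ j ∈ T, P j) * (∑ i ∈ T, lam i • P i) * (∑ j ∈ T, P j) =
        ∑ i ∈ T, lam i • P i := by
      rw [Finset.mul_sum T _ (∑ j ∈ T, P j), Finset.sum_mul T _ (∑ j ∈ T, P j)]
      refine Finset.sum_congr rfl fun i hi => ?_
      rw [mul_smul_comm, hP.sum_mul, if_pos hi, smul_mul_assoc, hP.mul_sum, if_pos hi]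
    have e2 : (1 - ∑ j ∈ T, P j) * (lam a • P a) * (1 - ∑ j ∈ T, P j) = lam a • P a := by
      rw [mul_smul_comm, sub_mul, hP.sum_mul, if_neg ha, smul_mul_assoc, mul_sub, sub_mul,
        zero_mul, one_mul, mul_one, sub_zero, hP.mul_sum, if_neg ha, sub_zero]
    rw [e1, e2] at h3
    rw [Finset.sum_insert ha, add_comm]
    exact h3


/-- Pairs of indices on or above the diagonal. -/
def upper (T : Finset ℕ) : Finset (ℕ × ℕ) := (T ×ˢ T).filter fun q => q.1 ≤ q.2

lemma mem_upper {T : Finset ℕ} {q : ℕ × ℕ} : q ∈ upper T ↔ q.1 ∈ T ∧ q.2 ∈ T ∧ q.1 ≤ q.2 := by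
  simp [upper, and_assoc]

/-- The truncation of `Z` to its upper triangular part with respect to the blocks `P i`, `i ∈ T`. -/
noncomputable def truncU (T : Finset ℕ) (P : ℕ → A) : A →L[ℂ] A :=
  ∑ q ∈ upper T, mulLR (P q.1) (P q.2)

lemma truncU_apply (T : Finset ℕ) (P : ℕ → A) (Z : A) :
    truncU T P Z = ∑ q ∈ upper T, P q.1 * (Z * P q.2) := by
  rw [truncU, _root_.sum_apply]; rfl

lemma map_truncU (π : A →⋆ₐ[ℂ] C) (T : Finset ℕ) (P : ℕ → A) (Z : A) :
    π (truncU T P Z) = truncU T (fun i => π (P i)) (π Z) := by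
  rw [truncU_apply, truncU_apply, map_sum]
  simp only [map_mul]

lemma OrthProj.corner_truncU (hP : OrthProj P) {T : Finset ℕ} {i j : ℕ} (Z : A) :
    P i * truncU T P Z * P j = if (i, j) ∈ upper T then P i * Z * P j else 0 := by
  rw [truncU_apply, Finset.mul_sum, Finset.sum_mul]
  have : ∀ q ∈ upper T, P i * (P q.1 * (Z * P q.2)) * P j =
      if (i, j) = q then P i * Z * P j else 0 := by
    rintro ⟨a, b⟩ -
    have e : P i * (P a * (Z * P b)) * P j = (P i * P a) * Z * (P b * P j) := by
      simp only [mul_assoc]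
    simp only [Prod.mk.injEq]
    rw [e, hP.mul, hP.mul]
    by_cases h1 : i = a
    · by_cases h2 : b = j
      · subst h1 h2; simp
      · rw [if_neg h2, mul_zero, if_neg (fun h => h2 h.2.symm)]
    · rw [if_neg h1, zero_mul, zero_mul, if_neg fun h => h1 h.1]
  rw [Finset.sum_congr rfl this, Finset.sum_ite_eq (upper T) (i, j) fun _ => P i * Z * P j]

lemma OrthProj.truncU_truncU (hP : OrthProj P) {T : Finset ℕ} (Z : A) :
    truncU T P (truncU T P Z) = truncU T P Z := by
  rw [truncU_apply, truncU_apply]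
  refine Finset.sum_congr rfl fun q hq => ?_
  rw [← truncU_apply, ← mul_assoc, hP.corner_truncU, if_pos hq, mul_assoc]

lemma OrthProj.norm_truncU_le (hP : OrthProj P) (T : Finset ℕ) (Z : A) :
    ‖truncU T P Z‖ ≤ ((upper T).card + 1) * ‖Z‖ := by
  rw [truncU_apply]
  refine (norm_sum_le _ _).trans ?_
  calc _ ≤ ∑ _q ∈ upper T, ‖Z‖ := by
        refine Finset.sum_le_sum fun q _ => ?_
        have h1 := hP.norm_le q.1
        have h2 := hP.norm_le q.2
        calc _ ≤ ‖P q.1‖ * (‖Z‖ * ‖P q.2‖) := (norm_mul_le _ _).trans (by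
              gcongr; exact norm_mul_le _ _)
          _ ≤ 1 * (‖Z‖ * 1) := by gcongr
          _ = ‖Z‖ := by ring
    _ = (upper T).card * ‖Z‖ := by rw [Finset.sum_const, nsmul_eq_mul]
    _ ≤ _ := by gcongr; linarith

/-- `Y` is block upper triangular for the blocks `P i`, `i ∈ T`, and its `i`-th diagonal block is
`lam i` plus an element of nilpotency order `k i`. -/
structure Tri (T : Finset ℕ) (P : ℕ → A) (lam : ℕ → ℂ) (k : ℕ → ℕ) (Y : A) : Prop where
  upper : truncU T P Y = Y
  diag : ∀ i ∈ T, (P i * Y * P i - lam i • P i) ^ k i = 0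

lemma isClosed_tri (T : Finset ℕ) (P : ℕ → A) (lam : ℕ → ℂ) (k : ℕ → ℕ) :
    IsClosed {Y | Tri T P lam k Y} := by
  have : {Y | Tri T P lam k Y} = {Y | truncU T P Y = Y} ∩
      ⋂ i ∈ T, {Y | (P i * Y * P i - lam i • P i) ^ k i = 0} := by
    ext Y
    simp only [Set.mem_ofPred_eq, Set.mem_inter_iff, Set.mem_iInter]
    exact ⟨fun h => ⟨h.1, h.2⟩, fun h => ⟨h.1, h.2⟩⟩
  rw [this]
  refine (isClosed_eq (truncU T P).continuous continuous_id).inter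
    (isClosed_biInter fun i _ => isClosed_eq (by fun_prop) continuous_const)

/-- The block diagonal element `∑ lam i P i`. -/
noncomputable def diagEl (T : Finset ℕ) (P : ℕ → A) (lam : ℕ → ℂ) : A := ∑ i ∈ T, lam i • P i

variable {T : Finset ℕ} {lam : ℕ → ℂ} {k : ℕ → ℕ}

lemma OrthProj.corner_diagEl (hP : OrthProj P) {i j : ℕ} (hi : i ∈ T) :
    P i * diagEl T P lam * P j = if i = j then lam i • P i else 0 := by
  rw [diagEl, Finset.mul_sum, Finset.sum_mul]
  have : ∀ a ∈ T, P i * (lam a • P a) * P j =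
      if i = a then (if i = j then lam i • P i else 0) else 0 := by
    intro a _
    rw [mul_smul_comm, smul_mul_assoc, hP.mul i a]
    split_ifs with h1 h2
    · rw [hP.mul, if_pos h2, h1]
    · rw [hP.mul, if_neg h2, smul_zero]
    · rw [zero_mul, smul_zero]
  rw [Finset.sum_congr rfl this, Finset.sum_ite_eq, if_pos hi]

lemma OrthProj.truncU_diagEl (hP : OrthProj P) : truncU T P (diagEl T P lam) = diagEl T P lam := by
  rw [truncU_apply]
  have : ∀ q ∈ upper T, P q.1 * (diagEl T P lam * P q.2) =
      if q.1 = q.2 then lam q.1 • P q.1 else 0 := by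
    intro q hq
    rw [← mul_assoc, hP.corner_diagEl (mem_upper.1 hq).1]
  rw [Finset.sum_congr rfl this, ← Finset.sum_filter, diagEl]
  refine Finset.sum_bij' (fun q _ => q.1) (fun i _ => (i, i)) ?_ ?_ ?_ ?_ ?_
  · intro q hq
    exact (mem_upper.1 (Finset.mem_filter.1 hq).1).1
  · intro i hi
    exact Finset.mem_filter.2 ⟨mem_upper.2 ⟨hi, hi, le_rfl⟩, rfl⟩
  · rintro ⟨a, b⟩ hq
    have : a = b := (Finset.mem_filter.1 hq).2
    rw [this]
  · intro i _; rfl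
  · intro q _; rfl

lemma map_diagEl (π : A →⋆ₐ[ℂ] C) :
    π (diagEl T P lam) = diagEl T (fun i => π (P i)) lam := by
  rw [diagEl, diagEl, map_sum]
  simp only [map_smul]

lemma OrthProj.tri_diagEl (hP : OrthProj P) (hk : ∀ i, 1 ≤ k i) :
    Tri T P lam k (diagEl T P lam) := by
  refine ⟨hP.truncU_diagEl, fun i hi => ?_⟩
  rw [hP.corner_diagEl hi, if_pos rfl, sub_self, zero_pow]
  have := hk i
  omega

/-- Triangular elements with the given diagonal behaviour are star shaped about `diagEl`. -/
lemma OrthProj.tri_segment (hP : OrthProj P) {x : A} (hx : Tri T P lam k x) (s : ℂ) :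
    Tri T P lam k (diagEl T P lam + s • (x - diagEl T P lam)) := by
  refine ⟨?_, fun i hi => ?_⟩
  · rw [map_add, map_smul, map_sub, hP.truncU_diagEl, hx.upper]
  · have e : P i * (diagEl T P lam + s • (x - diagEl T P lam)) * P i - lam i • P i =
        s • (P i * x * P i - lam i • P i) := by
      have := hP.corner_diagEl (lam := lam) hi (j := i)
      rw [if_pos rfl] at this
      rw [mul_add, add_mul, mul_smul_comm, smul_mul_assoc, mul_sub, sub_mul, this]
      abel
    rw [e, smul_pow, hx.diag i hi, smul_zero]

end Triangular

/-! ### Correcting the diagonal blocks -/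

section Step
variable {A C : Type u} [CStarAlgebra A] [CStarAlgebra C]
variable {P : ℕ → A} {T : Finset ℕ} {lam : ℕ → ℂ} {k : ℕ → ℕ}

lemma norm_pow_sub_pow_le {a b : A} (ha : ‖a‖ ≤ 3) (hb : ‖b‖ ≤ 3) (m : ℕ) :
    ‖a ^ m - b ^ m‖ ≤ m * 3 ^ m * ‖a - b‖ := by
  induction m with
  | zero => simp
  | succ m ih =>
    have e : a ^ (m + 1) - b ^ (m + 1) = (a ^ m - b ^ m) * a + b ^ m * (a - b) := by
      rw [pow_succ, pow_succ]; noncomm_ring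
    have hbm : ‖b ^ m * (a - b)‖ ≤ 3 ^ (m + 1) * ‖a - b‖ := by
      rcases Nat.eq_zero_or_pos m with rfl | hm
      · rw [pow_zero, one_mul]
        norm_num
        linarith [norm_nonneg (a - b)]
      · calc _ ≤ ‖b ^ m‖ * ‖a - b‖ := norm_mul_le _ _
          _ ≤ ‖b‖ ^ m * ‖a - b‖ := by gcongr; exact norm_pow_le' b hm
          _ ≤ 3 ^ m * ‖a - b‖ := by gcongr
          _ ≤ 3 ^ (m + 1) * ‖a - b‖ := by gcongr <;> norm_num
    rw [e]
    calc _ ≤ ‖a ^ m - b ^ m‖ * ‖a‖ + 3 ^ (m + 1) * ‖a - b‖ :=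
          (norm_add_le _ _).trans (add_le_add (norm_mul_le _ _) hbm)
      _ ≤ (m * 3 ^ m * ‖a - b‖) * 3 + 3 ^ (m + 1) * ‖a - b‖ := by gcongr
      _ = _ := by push_cast; ring

lemma exists_pos_le (T : Finset ℕ) (f : ℕ → ℝ) (hf : ∀ i, 0 < f i) :
    ∃ g > 0, ∀ i ∈ T, g ≤ f i := by
  classical
  induction T using Finset.induction_on with
  | empty => exact ⟨1, one_pos, by simp⟩
  | insert a T _ ih =>
    obtain ⟨g, hg, h⟩ := ih
    refine ⟨min g (f a), lt_min hg (hf a), fun i hi => ?_⟩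
    rcases Finset.mem_insert.1 hi with rfl | hi
    · exact min_le_right _ _
    · exact (min_le_left _ _).trans (h i hi)

/-- The upper triangular truncation, with the map `Ψ i` applied to the `i`-th diagonal block. -/
noncomputable def blockMap (T : Finset ℕ) (P : ℕ → A) (Ψ : ℕ → A →L[ℂ] A) : A →L[ℂ] A :=
  truncU T P + ∑ i ∈ T, (mulLR (P i) (P i)).comp
    ((Ψ i + mulLR (-1) 1).comp (mulLR (P i) (P i)))

lemma blockMap_apply (Ψ : ℕ → A →L[ℂ] A) (Z : A) :
    blockMap T P Ψ Z = truncU T P Z +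
      ∑ i ∈ T, P i * ((Ψ i (P i * (Z * P i)) - P i * (Z * P i)) * P i) := by
  rw [blockMap, _root_.add_apply, _root_.sum_apply]
  congr 1
  refine Finset.sum_congr rfl fun i _ => ?_
  simp only [ContinuousLinearMap.comp_apply, mulLR_apply, _root_.add_apply, neg_mul, one_mul,
    mul_one, sub_eq_add_neg]

lemma quasiLocal_blockMap {Ψ : ℕ → A →L[ℂ] A} (hΨ : ∀ i ∈ T, QuasiLocal (Ψ i)) :
    QuasiLocal (blockMap T P Ψ) :=
  (QuasiLocal.sum _ _ fun _ _ => QuasiLocal.mulLR _ _).add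
    (QuasiLocal.sum _ _ fun i hi => (QuasiLocal.mulLR _ _).comp
      (((hΨ i hi).add (QuasiLocal.mulLR _ _)).comp (QuasiLocal.mulLR _ _)))

lemma OrthProj.truncU_corner (hP : OrthProj P) {i : ℕ} (hi : i ∈ T) (V : A) :
    truncU T P (P i * (V * P i)) = P i * (V * P i) := by
  rw [truncU_apply]
  have : ∀ q ∈ upper T, P q.1 * (P i * (V * P i) * P q.2) =
      if (i, i) = q then P i * (V * P i) else 0 := by
    rintro ⟨a, b⟩ -
    have e : P a * (P i * (V * P i) * P b) = (P a * P i) * V * (P i * P b) := by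
      simp only [mul_assoc]
    simp only [Prod.mk.injEq]
    rw [e, hP.mul, hP.mul]
    by_cases h1 : a = i
    · by_cases h2 : i = b
      · subst h1 h2; simp [mul_assoc]
      · rw [if_neg h2, mul_zero, if_neg (fun h => h2 h.2)]
    · rw [if_neg h1, zero_mul, zero_mul, if_neg fun h => h1 h.1.symm]
  rw [Finset.sum_congr rfl this, Finset.sum_ite_eq, if_pos (mem_upper.2 ⟨hi, hi, le_rfl⟩)]

/-- All values of `diagEl + blockMap` are triangular of the prescribed type. -/
lemma OrthProj.tri_blockMap (hP : OrthProj P) {Ψ : ℕ → A →L[ℂ] A}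
    (hΨ : ∀ i ∈ T, ∀ Z, Ψ i Z ^ k i = 0)
    (hc : ∀ i ∈ T, ∀ Z, Commute Z (P i) → Commute (Ψ i Z) (P i)) (Z : A) :
    Tri T P lam k (diagEl T P lam + blockMap T P Ψ Z) := by
  refine ⟨?_, fun i hi => ?_⟩
  · rw [map_add, hP.truncU_diagEl, blockMap_apply, map_add, hP.truncU_truncU, map_sum]
    rw [Finset.sum_congr rfl fun i hi => hP.truncU_corner hi _]
  · have h1 := hP.corner_diagEl (lam := lam) hi (j := i)
    rw [if_pos rfl] at h1
    have h2 : P i * blockMap T P Ψ Z * P i = P i * Ψ i (P i * (Z * P i)) * P i := by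
      rw [blockMap_apply, mul_add, add_mul, hP.corner_truncU,
        if_pos (mem_upper.2 ⟨hi, hi, le_rfl⟩), Finset.mul_sum, Finset.sum_mul]
      have : ∀ j ∈ T, P i * (P j * ((Ψ j (P j * (Z * P j)) - P j * (Z * P j)) * P j)) * P i =
          if i = j then P i * (Ψ i (P i * (Z * P i))) * P i - P i * Z * P i else 0 := by
        intro j _
        by_cases h : i = j
        · subst h
          rw [if_pos rfl]
          have e : P i * (P i * ((Ψ i (P i * (Z * P i)) - P i * (Z * P i)) * P i)) * P i =
            (P i * P i) * Ψ i (P i * (Z * P i)) * (P i * P i) -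
              ((P i * P i) * P i) * Z * (P i * (P i * P i)) := by noncomm_ring
          rw [e, hP.idem, hP.idem]
        · rw [if_neg h, ← mul_assoc, hP.orth i j h, zero_mul, zero_mul]
      rw [Finset.sum_congr rfl this, Finset.sum_ite_eq, if_pos hi]
      abel
    have hcZ : Commute (P i * (Z * P i)) (P i) := by
      show P i * (Z * P i) * P i = P i * (P i * (Z * P i))
      rw [mul_assoc, mul_assoc Z, hP.idem, ← mul_assoc (P i) (P i), hP.idem]
    have hcΨ := hc i hi _ hcZ
    rw [mul_add, add_mul, h1, h2, add_sub_cancel_left]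
    have h3 : P i * Ψ i (P i * (Z * P i)) * P i = Ψ i (P i * (Z * P i)) * P i := by
      rw [← hcΨ.eq, mul_assoc, hP.idem]
    rw [h3, hcΨ.mul_pow, hΨ i hi, zero_mul]

/-- `blockMap` changes an upper triangular `X` only on the diagonal blocks. -/
lemma OrthProj.blockMap_sub (hP : OrthProj P) {Ψ : ℕ → A →L[ℂ] A} {X : A}
    (hX : truncU T P X = X) :
    diagEl T P lam + blockMap T P Ψ (X - diagEl T P lam) - X =
      ∑ i ∈ T, P i * ((Ψ i (P i * X * P i - lam i • P i) - (P i * X * P i - lam i • P i)) * P i) := by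
  rw [blockMap_apply, map_sub, hX, hP.truncU_diagEl]
  have : ∀ i ∈ T, P i * ((X - diagEl T P lam) * P i) = P i * X * P i - lam i • P i := by
    intro i hi
    have h1 := hP.corner_diagEl (lam := lam) hi (j := i)
    rw [if_pos rfl] at h1
    rw [sub_mul, mul_sub, ← mul_assoc, ← mul_assoc, h1]
  rw [Finset.sum_congr rfl fun i hi => by rw [this i hi]]
  abel

lemma OrthProj.norm_corner_le (hP : OrthProj P) (i j : ℕ) (V : A) : ‖P i * (V * P j)‖ ≤ ‖V‖ := by
  have h1 := hP.norm_le i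
  have h2 := hP.norm_le j
  calc _ ≤ ‖P i‖ * (‖V‖ * ‖P j‖) := (norm_mul_le _ _).trans (by
        gcongr; exact norm_mul_le _ _)
    _ ≤ 1 * (‖V‖ * 1) := by gcongr
    _ = ‖V‖ := by ring

end Step

/-! ### The improvement step -/

section Lift
variable {A C : Type u} [CStarAlgebra A] [CStarAlgebra C]
variable {P : ℕ → A} {T : Finset ℕ} {lam : ℕ → ℂ} {k : ℕ → ℕ}

set_option maxHeartbeats 1000000 in
/-- One improvement step: a triangular contraction whose image is close to the triangular
contraction `x` can be moved by a small amount so that its image is as close to `x` as desired. -/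
lemma OrthProj.step (hP : OrthProj P) (π : A →⋆ₐ[ℂ] C)
    (hq : ∀ c : C, ∀ ε, ‖c‖ < ε → ∃ b, π b = c ∧ ‖b‖ < ε) (hk : ∀ i, 1 ≤ k i) {d : ℝ}
    (hd0 : 0 ≤ d) (hd1 : d < 1) (hl : ∀ i ∈ T, ‖lam i‖ ≤ d) {ε : ℝ} (hε : 0 < ε) :
    ∃ γ₀ > 0, ∀ Y : A, Tri T P lam k Y → ‖Y‖ ≤ 1 →
      ∀ x : C, Tri T (fun i => π (P i)) lam k x → ‖x‖ ≤ 1 → ‖π Y - x‖ < γ₀ →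
      ∀ ε' > 0, ∃ Y', Tri T P lam k Y' ∧ ‖Y'‖ ≤ 1 ∧ ‖π Y' - x‖ < ε' ∧ ‖Y' - Y‖ ≤ ε := by
  choose γ hγ H using fun i => nil_approx_three.{u} (k i) (hk i)
  obtain ⟨c, hc⟩ : ∃ c, c = 1 - d := ⟨_, rfl⟩
  have hc0 : 0 < c := by linarith
  have hc1 : c ≤ 1 := by linarith
  -- `ω` bounds the excess of the norm over `1`; contracting towards `D` by the factor `ω / c` removes
  -- it, so `ω / c` has to be small compared with `ε`
  obtain ⟨ω, hω⟩ : ∃ ω, ω = min c (c * ε / 8) := ⟨_, rfl⟩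
  have hω0 : 0 < ω := by rw [hω]; positivity
  have hωc : ω ≤ c := by rw [hω]; exact min_le_left _ _
  have hωε : ω ≤ c * ε / 8 := by rw [hω]; exact min_le_right _ _
  obtain ⟨m, hm⟩ : ∃ m : ℝ, m = T.card + 1 := ⟨_, rfl⟩
  have hm0 : 0 < m := by rw [hm]; positivity
  obtain ⟨L, hL⟩ : ∃ L : ℝ, L = (upper T).card + 1 := ⟨_, rfl⟩
  have hL0 : 0 < L := by rw [hL]; positivity
  have hε₁ : 0 < ω / (2 * m) := by positivity
  obtain ⟨g, hg0, hg⟩ := exists_pos_le T (fun i => γ i (ω / (2 * m)) / (k i * 3 ^ k i + 1))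
    fun i => by have := hγ i _ hε₁; positivity
  refine ⟨min g (ω / 2) / L, by positivity, fun Y hY hY1 x hx hx1 hYx ε' hε' => ?_⟩
  have hD := hP.norm_diag_le T lam hd0 hl
  rw [← diagEl] at hD
  obtain ⟨D, hDd⟩ : ∃ D, D = diagEl T P lam := ⟨_, rfl⟩
  rw [← hDd] at hD
  -- `X` is an exact, upper triangular lift of `x` near `Y`; only the nilpotency of its diagonal
  -- blocks fails, and only slightly
  obtain ⟨w, hw, hwn⟩ := hq (x - π Y) _ (by rw [norm_sub_rev]; exact hYx)
  obtain ⟨X, hX⟩ : ∃ X, X = Y + truncU T P w := ⟨_, rfl⟩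
  have hXY : ‖X - Y‖ ≤ min g (ω / 2) := by
    rw [hX, add_sub_cancel_left]
    refine (hP.norm_truncU_le T w).trans ?_
    rw [← hL]
    calc _ ≤ L * (min g (ω / 2) / L) := by gcongr
      _ = _ := by field_simp
  have hXg := hXY.trans (min_le_left _ _)
  have hXω := hXY.trans (min_le_right _ _)
  have hXu : truncU T P X = X := by rw [hX, map_add, hP.truncU_truncU, hY.upper]
  have hπX : π X = x := by
    rw [hX, map_add, map_truncU, hw, map_sub, hx.upper, ← map_truncU, hY.upper]; abel
  have hX2 : ‖X‖ ≤ 2 := by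
    have : X = Y + (X - Y) := by abel
    rw [this]
    exact (norm_add_le _ _).trans (by linarith)
  have hlP : ∀ i ∈ T, ‖lam i • P i‖ ≤ 1 := by
    intro i hi
    rw [norm_smul]
    calc _ ≤ d * 1 := by
          gcongr
          · exact hl i hi
          · exact hP.norm_le i
      _ ≤ 1 := by linarith
  have hN3 : ∀ V : A, ‖V‖ ≤ 2 → ∀ i ∈ T, ‖P i * V * P i - lam i • P i‖ ≤ 3 := by
    intro V hV i hi
    have h1 := hP.norm_corner_le i i V
    rw [← mul_assoc] at h1
    exact (norm_sub_le _ _).trans (by linarith [hlP i hi])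
  obtain ⟨μ, hμ⟩ : ∃ μ, μ = min 1 (min ε ε') := ⟨_, rfl⟩
  have hμ0 : 0 < μ := by rw [hμ]; positivity
  have hμ1 : μ ≤ 1 := by rw [hμ]; exact min_le_left _ _
  have hμε : μ ≤ ε := by rw [hμ]; exact (min_le_right _ _).trans (min_le_left _ _)
  have hμε' : μ ≤ ε' := by rw [hμ]; exact (min_le_right _ _).trans (min_le_right _ _)
  obtain ⟨η, hη⟩ : ∃ η, η = c * μ / 32 := ⟨_, rfl⟩
  have hη0 : 0 < η := by rw [hη]; positivity
  have hημ : η ≤ μ / 32 := by rw [hη]; gcongr; exact mul_le_of_le_one_left hμ0.le hc1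
  -- the tolerance in `A` depends on `ε` only, whereas the one in `C` may be as small as `ε'` requires,
  -- because the diagonal blocks of `x` are exactly nilpotent
  have hex : ∀ i ∈ T, ∃ Φ, NilApprox π (k i) (P i * X * P i - lam i • P i)
      (ω / (2 * m)) (η / m) Φ := by
    intro i hi
    refine H i A C π _ (hN3 X hX2 i hi) _ hε₁ _ (by positivity) ?_ ?_
    · have h1 := norm_pow_sub_pow_le (hN3 X hX2 i hi) (hN3 Y (by linarith) i hi) (k i)
      rw [hY.diag i hi, sub_zero] at h1
      have e : P i * X * P i - lam i • P i - (P i * Y * P i - lam i • P i) =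
          P i * ((X - Y) * P i) := by noncomm_ring
      rw [e] at h1
      have h2 := (hP.norm_corner_le i i (X - Y)).trans (hXg.trans (hg i hi))
      have h3 := hγ i _ hε₁
      calc _ ≤ _ := h1
        _ ≤ (k i * 3 ^ k i + 1) * (γ i (ω / (2 * m)) / (k i * 3 ^ k i + 1)) := by
            gcongr; linarith
        _ = _ := by field_simp
    · have e : π (P i * X * P i - lam i • P i) = π (P i) * x * π (P i) - lam i • π (P i) := by
        rw [map_sub, map_mul, map_mul, hπX, map_smul]
      rw [e, hx.diag i hi, norm_zero]
      exact (hγ i _ (by positivity)).le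
  classical
  choose! Ψ hΨ using hex
  obtain ⟨Φ, hΦ⟩ : ∃ Φ, Φ = blockMap T P Ψ := ⟨_, rfl⟩
  have hΦq : QuasiLocal Φ := by
    rw [hΦ]; exact quasiLocal_blockMap fun i hi => (hΨ i hi).quasiLocal
  have hcomm : ∀ i, Commute (P i * X * P i - lam i • P i) (P i) := by
    intro i
    refine Commute.sub_left ?_ ((Commute.refl _).smul_left _)
    show P i * X * P i * P i = P i * (P i * X * P i)
    rw [mul_assoc, hP.idem, ← mul_assoc, ← mul_assoc, hP.idem]
  have hTri : ∀ Z, Tri T P lam k (D + Φ Z) := by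
    rw [hDd, hΦ]
    refine hP.tri_blockMap (fun i hi => (hΨ i hi).pow_eq_zero) fun i hi Z hZ =>
      (hΨ i hi).commute (P i) (hcomm i) ?_ Z hZ
    have := (hcomm i).star_star
    rwa [(hP.sa i).star_eq] at this
  obtain ⟨Z₀, hZ₀⟩ : ∃ Z₀, Z₀ = X - D := ⟨_, rfl⟩
  have hsub : D + Φ Z₀ - X = ∑ i ∈ T, P i * ((Ψ i (P i * X * P i - lam i • P i) -
      (P i * X * P i - lam i • P i)) * P i) := by
    rw [hZ₀, hΦ, hDd]; exact hP.blockMap_sub hXu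
  have hsum : ∀ r : ℝ, 0 ≤ r → ∑ _i ∈ T, r / m ≤ r := by
    intro r hr
    rw [Finset.sum_const, nsmul_eq_mul]
    calc _ ≤ m * (r / m) := by gcongr; linarith
      _ = r := by field_simp
  have hY0X : ‖D + Φ Z₀ - X‖ ≤ ω / 2 := by
    rw [hsub]
    refine (norm_sum_le _ _).trans (le_trans (Finset.sum_le_sum fun i hi => ?_)
      (hsum (ω / 2) (by positivity)))
    refine (hP.norm_corner_le i i _).trans ((hΨ i hi).close.trans (le_of_eq ?_))
    field_simp
  have hπY0 : ‖π (D + Φ Z₀ - X)‖ ≤ η := by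
    rw [hsub, map_sum]
    refine (norm_sum_le _ _).trans (le_trans (Finset.sum_le_sum fun i hi => ?_)
      (hsum η hη0.le))
    rw [map_mul, map_mul]
    exact ((hP.map π).norm_corner_le i i _).trans (hΨ i hi).close_map
  have hY0 : ‖D + Φ Z₀‖ ≤ 1 + ω := by
    have : D + Φ Z₀ = Y + (X - Y) + (D + Φ Z₀ - X) := by abel
    rw [this]
    exact norm_add₃_le.trans (by linarith)
  have hπY0' : ‖π (D + Φ Z₀)‖ ≤ 1 + η := by
    have : π (D + Φ Z₀) = x + π (D + Φ Z₀ - X) := by rw [map_sub, hπX]; abel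
    rw [this]
    exact (norm_add_le _ _).trans (by linarith)
  have ht0 : 0 ≤ ω / c := by positivity
  have htc : ω / c * c = ω := by field_simp
  obtain ⟨Z₁, -, hZ1, hZ2, hZ3, -⟩ := norm_correction π hq hΦq D Z₀ hη0 ht0
    ((div_le_one hc0).2 hωc) hD hY0 hπY0' (by
      have : d = 1 - c := by linarith
      rw [this]
      have h0 := mul_nonneg ht0 hω0.le
      linear_combination h0 - htc)
  have htε : ω / c ≤ ε / 8 := by
    rw [div_le_iff₀ hc0]; linarith
  have hΦ0 : ‖Φ Z₀‖ ≤ 3 := by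
    have : Φ Z₀ = (D + Φ Z₀) - D := by abel
    rw [this]
    exact (norm_sub_le _ _).trans (by linarith)
  have hΦ1 : ‖Φ Z₁‖ ≤ 4 := by
    have : Φ Z₁ = (D + Φ Z₁) - D := by abel
    rw [this]
    exact (norm_sub_le _ _).trans (by linarith)
  -- the last, small, contraction towards `D` absorbs the excess `2 * η` of the norm
  obtain ⟨s, hs⟩ : ∃ s, s = μ / 16 := ⟨_, rfl⟩
  have hs0 : 0 < s := by rw [hs]; positivity
  have hY2 : D + Φ (((1 - s : ℝ) : ℂ) • Z₁) =
      ((1 - s : ℝ) : ℂ) • (D + Φ Z₁) + ((s : ℝ) : ℂ) • D := by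
    rw [map_smul, smul_add]
    push_cast
    rw [sub_smul, sub_smul, one_smul, one_smul]; abel
  have hdiff : D + Φ (((1 - s : ℝ) : ℂ) • Z₁) - (D + Φ Z₀) =
      (Φ Z₁ - Φ Z₀) - ((s : ℝ) : ℂ) • Φ Z₁ := by
    rw [map_smul]
    push_cast
    rw [sub_smul, one_smul]; abel
  have hsn : ‖((s : ℝ) : ℂ) • Φ Z₁‖ ≤ 4 * s := by
    rw [norm_smul, Complex.norm_of_nonneg hs0.le, mul_comm]; gcongr
  refine ⟨D + Φ (((1 - s : ℝ) : ℂ) • Z₁), hTri _, ?_, ?_, ?_⟩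
  · rw [hY2]
    refine (norm_add_le _ _).trans ?_
    rw [norm_smul, norm_smul, Complex.norm_of_nonneg hs0.le,
      Complex.norm_of_nonneg (by linarith)]
    calc _ ≤ (1 - s) * (1 + 2 * η) + s * d := by
          gcongr
          linarith
      _ ≤ 1 := by
          have : 2 * η = s * c := by rw [hη, hs]; ring
          have hd : d = 1 - c := by linarith
          rw [hd]
          have h0 := mul_pos hs0 hη0
          linear_combination 2 * h0 + this
  · have e : π (D + Φ (((1 - s : ℝ) : ℂ) • Z₁)) - x = π (Φ Z₁ - Φ Z₀) -
        π (((s : ℝ) : ℂ) • Φ Z₁) + π (D + Φ Z₀ - X) := by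
      rw [← map_sub, ← hdiff, ← map_add, ← hπX, ← map_sub]; congr 1; abel
    rw [e]
    have h1 := (norm_map_le' π _).trans hsn
    refine (norm_add_le _ _).trans_lt ?_
    have h2 := norm_sub_le (π (Φ Z₁ - Φ Z₀)) (π (((s : ℝ) : ℂ) • Φ Z₁))
    linarith
  · have e : D + Φ (((1 - s : ℝ) : ℂ) • Z₁) - Y = (Φ Z₁ - Φ Z₀) - ((s : ℝ) : ℂ) • Φ Z₁ +
        (D + Φ Z₀ - X) + (X - Y) := by rw [← hdiff]; abel
    rw [e]
    refine norm_add₃_le.trans ?_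
    have h2 := norm_sub_le (Φ Z₁ - Φ Z₀) (((s : ℝ) : ℂ) • Φ Z₁)
    have h3 : ω / c * ‖Φ Z₀‖ ≤ ε / 8 * 3 := by gcongr
    have h4 : c * ε / 8 ≤ ε / 8 := by gcongr; exact mul_le_of_le_one_left hε.le hc1
    linarith

end Lift

/-! ### Lifting triangular contractions -/

section LiftTri
variable {A C : Type u} [CStarAlgebra A] [CStarAlgebra C]
variable {P : ℕ → A} {T : Finset ℕ} {lam : ℕ → ℂ} {k : ℕ → ℕ}

/-- Iterating the improvement step and passing to the limit gives an exact lift near a given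
approximate one. -/
lemma OrthProj.lift_near (hP : OrthProj P) (π : A →⋆ₐ[ℂ] C)
    (hq : ∀ c : C, ∀ ε, ‖c‖ < ε → ∃ b, π b = c ∧ ‖b‖ < ε) (hk : ∀ i, 1 ≤ k i) {d : ℝ}
    (hd0 : 0 ≤ d) (hd1 : d < 1) (hl : ∀ i ∈ T, ‖lam i‖ ≤ d) :
    ∃ γ₀ > 0, ∀ Y : A, Tri T P lam k Y → ‖Y‖ ≤ 1 →
      ∀ x : C, Tri T (fun i => π (P i)) lam k x → ‖x‖ ≤ 1 → ‖π Y - x‖ < γ₀ →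
      ∃ Y', Tri T P lam k Y' ∧ ‖Y'‖ ≤ 1 ∧ π Y' = x := by
  choose g hg H using fun n : ℕ => hP.step (T := T) (lam := lam) π hq hk hd0 hd1 hl
    (ε := (1 / 2) ^ n) (by positivity)
  have hpos : ∀ n, 0 < min (g n) ((1 / 2) ^ n) := fun n => lt_min (hg n) (by positivity)
  refine ⟨_, hpos 0, fun Y hY hY1 x hx hx1 hYx => ?_⟩
  let S : ℕ → Type u := fun n =>
    {V : A // Tri T P lam k V ∧ ‖V‖ ≤ 1 ∧ ‖π V - x‖ < min (g n) ((1 / 2) ^ n)}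
  have next : ∀ n (V : S n), ∃ V' : S (n + 1), ‖V'.1 - V.1‖ ≤ (1 / 2) ^ n := by
    rintro n ⟨V, h1, h2, h3⟩
    obtain ⟨V', h1', h2', h3', h4'⟩ := H n V h1 h2 x hx hx1 (h3.trans_le (min_le_left _ _)) _
      (hpos (n + 1))
    exact ⟨⟨V', h1', h2', h3'⟩, h4'⟩
  choose f hf using next
  let y : ∀ n, S n := fun n => Nat.rec (motive := S) ⟨Y, hY, hY1, hYx⟩ (fun n V => f n V) n
  have hy : ∀ n, ‖(y (n + 1)).1 - (y n).1‖ ≤ (1 / 2) ^ n := fun n => hf n (y n)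
  have hcau : CauchySeq fun n => (y n).1 := by
    refine cauchySeq_of_le_geometric (1 / 2) 1 (by norm_num) fun n => ?_
    rw [dist_comm, dist_eq_norm, one_mul]
    exact hy n
  obtain ⟨Y', hY'⟩ := cauchySeq_tendsto_of_complete hcau
  have hπc : Continuous π :=
    AddMonoidHomClass.continuous_of_bound π 1 (fun a => by rw [one_mul]; exact norm_map_le' π a)
  refine ⟨Y', ?_, ?_, ?_⟩
  · exact (isClosed_tri T P lam k).mem_of_tendsto hY' (Filter.Eventually.of_forall fun n =>
      (y n).2.1)
  · exact le_of_tendsto hY'.norm (Filter.Eventually.of_forall fun n => (y n).2.2.1)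
  · have h1 : Filter.Tendsto (fun n => π (y n).1) Filter.atTop (nhds (π Y')) :=
      (hπc.tendsto Y').comp hY'
    refine tendsto_nhds_unique h1 ?_
    rw [tendsto_iff_norm_sub_tendsto_zero]
    refine squeeze_zero (fun n => norm_nonneg _)
      (fun n => ((y n).2.2.2.trans_le (min_le_right _ _)).le) ?_
    exact tendsto_pow_atTop_nhds_zero_of_lt_one (by norm_num) (by norm_num)

/-- Triangular contractions lift to triangular contractions, provided that all the eigenvalues on
the diagonal lie in the open unit disc: the lift is transported along the segment joining the
diagonal part to the given element. -/
lemma OrthProj.lift_tri (hP : OrthProj P) (π : A →⋆ₐ[ℂ] C)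
    (hq : ∀ c : C, ∀ ε, ‖c‖ < ε → ∃ b, π b = c ∧ ‖b‖ < ε) (hk : ∀ i, 1 ≤ k i) {d : ℝ}
    (hd0 : 0 ≤ d) (hd1 : d < 1) (hl : ∀ i ∈ T, ‖lam i‖ ≤ d) {x : C}
    (hx : Tri T (fun i => π (P i)) lam k x) (hx1 : ‖x‖ ≤ 1) :
    ∃ Y, Tri T P lam k Y ∧ ‖Y‖ ≤ 1 ∧ π Y = x := by
  obtain ⟨γ₀, hγ₀, H⟩ := hP.lift_near (T := T) (lam := lam) π hq hk hd0 hd1 hl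
  -- the segment has length at most `2`, so `M` steps of length less than `γ₀` suffice
  obtain ⟨M, hM⟩ := exists_nat_gt (2 / γ₀)
  have hM0 : (0 : ℝ) < M := lt_of_le_of_lt (by positivity) hM
  have hD := (hP.map π).norm_diag_le T lam hd0 hl
  have hD' := hP.norm_diag_le T lam hd0 hl
  rw [← diagEl] at hD hD'
  set D := diagEl T (fun i => π (P i)) lam with hDd
  have key : ∀ i : ℕ, i ≤ M → ∃ Y, Tri T P lam k Y ∧ ‖Y‖ ≤ 1 ∧
      π Y = D + ((i / M : ℝ) : ℂ) • (x - D) := by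
    intro i
    induction i with
    | zero =>
      intro _
      refine ⟨diagEl T P lam, hP.tri_diagEl hk, by linarith, ?_⟩
      rw [map_diagEl]; simp [hDd]
    | succ i ih =>
      intro hi
      obtain ⟨Y, h1, h2, h3⟩ := ih (by omega)
      refine H Y h1 h2 _ ((hP.map π).tri_segment hx _) ?_ ?_
      · have e : D + (((i + 1 : ℕ) / M : ℝ) : ℂ) • (x - D) =
            ((1 - ((i + 1 : ℕ) / M : ℝ) : ℝ) : ℂ) • D + (((i + 1 : ℕ) / M : ℝ) : ℂ) • x := by
          push_cast
          rw [smul_sub, sub_smul, one_smul]; abel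
        have hs1 : ((i + 1 : ℕ) / M : ℝ) ≤ 1 := by
          rw [div_le_one hM0]; exact_mod_cast hi
        have hs0 : (0 : ℝ) ≤ ((i + 1 : ℕ) / M : ℝ) := by positivity
        rw [e]
        refine (norm_add_le _ _).trans ?_
        rw [norm_smul, norm_smul, Complex.norm_of_nonneg hs0,
          Complex.norm_of_nonneg (by linarith)]
        calc _ ≤ (1 - ((i + 1 : ℕ) / M : ℝ)) * 1 + ((i + 1 : ℕ) / M : ℝ) * 1 := by
              gcongr
              linarith
          _ = 1 := by ring
      · have e : D + ((i / M : ℝ) : ℂ) • (x - D) - (D + (((i + 1 : ℕ) / M : ℝ) : ℂ) • (x - D)) =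
            (((1 / M : ℝ)) : ℂ) • (D - x) := by
          have : (((i + 1 : ℕ) / M : ℝ) : ℂ) = ((i / M : ℝ) : ℂ) + ((1 / M : ℝ) : ℂ) := by
            push_cast; ring
          rw [this, add_smul, ← neg_sub x D, smul_neg]; abel
        rw [h3, e, norm_smul, Complex.norm_of_nonneg (by positivity)]
        have : ‖D - x‖ ≤ 2 := (norm_sub_le _ _).trans (by linarith)
        calc _ ≤ 1 / (M : ℝ) * 2 := by gcongr
          _ < γ₀ := by
            rw [div_lt_iff₀ hγ₀] at hM
            rw [one_div_mul_eq_div, div_lt_iff₀ hM0]; linarith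
  obtain ⟨Y, h1, h2, h3⟩ := key M le_rfl
  refine ⟨Y, h1, h2, ?_⟩
  rw [h3, div_self hM0.ne']
  simp

end LiftTri

/-! ### Invariant flags -/

section Flag
variable {A : Type u} [CStarAlgebra A]

/-- The range projection of an idempotent. -/
lemma exists_range_proj {G : A} (hG : G * G = G) :
    ∃ Q : A, IsSelfAdjoint Q ∧ Q * Q = Q ∧ Q * G = G ∧ G * Q = Q := by
  obtain ⟨e, he⟩ : ∃ e, e = G * star G := ⟨_, rfl⟩
  have hsa : IsSelfAdjoint e := by rw [he]; exact IsSelfAdjoint.mul_star_self G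
  have hG' : star G * star G = star G := by rw [← star_mul, hG]
  have hspec : ∀ t ∈ spectrum ℝ e, t = 0 ∨ 1 ≤ t := by
    intro t ht
    have h0 : 0 ≤ t := by
      have : e = star (star G) * star G := by rw [star_star, he]
      rw [this] at ht
      exact (spectrum_star_mul_self ht).1
    have h1 : 0 ≤ t * t - t := by
      have e1 : star (star (G * (1 - star G))) * star (G * (1 - star G)) =
          cfc (fun t : ℝ => t * t - t) e := by
        rw [cfc_sub (fun t : ℝ => t * t) (fun t : ℝ => t) e, cfc_mul (fun t : ℝ => t)
          (fun t : ℝ => t) e, cfc_id' ℝ e, star_star, star_mul, star_sub, star_one, star_star]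
        have : G * (1 - star G) * ((1 - G) * star G) = G * star G - G * (star G * star G) -
          (G * G) * star G + (G * star G) * (G * star G) := by noncomm_ring
        rw [this, hG, hG', ← he]; abel
      have h2 : t * t - t ∈ spectrum ℝ (cfc (fun t : ℝ => t * t - t) e) := by
        rw [cfc_map_spectrum (fun t : ℝ => t * t - t) e]
        exact ⟨t, ht, rfl⟩
      rw [← e1] at h2
      exact (spectrum_star_mul_self h2).1
    rcases h0.eq_or_lt with h | h
    · exact Or.inl h.symm
    · right
      by_contra! hlt
      nlinarith
  have hQ : Continuous fun t : ℝ => min 1 t := by fun_prop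
  obtain ⟨Q, hQd⟩ : ∃ Q, Q = cfc (fun t : ℝ => min 1 t) e := ⟨_, rfl⟩
  have hQsa : IsSelfAdjoint Q := by rw [hQd]; exact cfc_predicate _ e
  have hmul : (1 - Q) * e = 0 := by
    have h1 : (1 - Q) * e = cfc (fun t : ℝ => (1 - min 1 t) * t) e := by
      rw [cfc_mul (fun t : ℝ => 1 - min 1 t) (fun t : ℝ => t) e,
        cfc_sub (fun _ : ℝ => (1 : ℝ)) (fun t : ℝ => min 1 t) e, cfc_id' ℝ e,
        cfc_const_one ℝ e, hQd]
    rw [h1, ← cfc_const_zero ℝ e]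
    refine cfc_congr fun t ht => ?_
    rcases hspec t ht with h | h
    · simp [h]
    · simp [min_eq_left h]
  refine ⟨Q, hQsa, ?_, ?_, ?_⟩
  · rw [hQd, ← cfc_mul (fun t : ℝ => min 1 t) (fun t : ℝ => min 1 t) e]
    refine cfc_congr fun t ht => ?_
    rcases hspec t ht with h | h
    · simp [h]
    · simp [min_eq_left h]
  · have h1 : ((1 - Q) * G) * star ((1 - Q) * G) = 0 := by
      rw [star_mul, ← mul_assoc, mul_assoc (1 - Q), ← he, hmul, zero_mul]
    have h2 := CStarRing.mul_star_self_eq_zero_iff _ |>.1 h1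
    rw [sub_mul, one_mul, sub_eq_zero] at h2
    exact h2.symm
  · have hg : Continuous fun t : ℝ => (max 1 t)⁻¹ :=
      (continuous_const.max continuous_id).inv₀ fun t =>
        (lt_of_lt_of_le one_pos (le_max_left 1 t)).ne'
    have h1 : Q = e * cfc (fun t : ℝ => (max 1 t)⁻¹) e := by
      nth_rewrite 1 [← cfc_id' ℝ e]
      rw [← cfc_mul (fun t : ℝ => t) (fun t : ℝ => (max 1 t)⁻¹) e continuousOn_id
        hg.continuousOn, hQd]
      refine cfc_congr fun t ht => ?_
      rcases hspec t ht with h | h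
      · simp [h]
      · have : t ≠ 0 := by linarith
        simp only [min_eq_left h, max_eq_right h]
        field_simp
    have h2 : G * e = e := by rw [he, ← mul_assoc, hG]
    rw [h1, ← mul_assoc, h2]

open Polynomial in
/-- An element annihilated by `∏ (t - lam i) ^ k i` leaves invariant an increasing flag of
projections, the range projections of its spectral idempotents, on whose successive quotients it
is `lam j` plus a nilpotent. -/
lemma exists_flag (x : A) (n : ℕ) (lam : ℕ → ℂ) (k : ℕ → ℕ)
    (hinj : ∀ i < n, ∀ j < n, lam i = lam j → i = j)
    (hp : aeval x (∏ i ∈ Finset.range n, (X - C (lam i)) ^ k i) = 0) :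
    ∃ Q : ℕ → A, (∀ j, IsSelfAdjoint (Q j)) ∧ (∀ i j, i ≤ j → Q j * Q i = Q i) ∧ Q 0 = 0 ∧
      (∀ j, n ≤ j → Q j = 1) ∧ (∀ j, Q j * (x * Q j) = x * Q j) ∧
      ∀ j < n, Q j * ((x - lam j • 1) ^ k j * Q (j + 1)) = (x - lam j • 1) ^ k j * Q (j + 1) := by
  let F : ℕ → ℂ[X] := fun i => (X - C (lam i)) ^ k i
  let s : ℕ → ℂ[X] := fun j => ∏ i ∈ Finset.range j, F i
  let r : ℕ → ℂ[X] := fun j => ∏ i ∈ Finset.Ico j n, F i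
  have hsr : ∀ j ≤ n, s j * r j = s n := fun j hj => Finset.prod_range_mul_prod_Ico F hj
  have hsn : aeval x (s n) = 0 := hp
  have hcop : ∀ j ≤ n, IsCoprime (s j) (r j) := by
    intro j hj
    refine IsCoprime.prod_left fun a ha => IsCoprime.prod_right fun b hb => IsCoprime.pow ?_
    rw [Finset.mem_range] at ha
    rw [Finset.mem_Ico] at hb
    refine isCoprime_X_sub_C_of_isUnit_sub (Ne.isUnit (sub_ne_zero.2 fun h => ?_))
    have := hinj a (by omega) b hb.2 h
    omega
  -- `G j` is the spectral idempotent of `x` for the first `j` roots: the projection onto the kernel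
  -- of `s j` along the kernel of `r j`
  have hG : ∀ j, ∃ G : A, j ≤ n → (aeval x (s j) * G = 0 ∧ Commute x G ∧
      ∀ z, aeval x (s j) * z = 0 → G * z = z) := by
    intro j
    by_cases hj : j ≤ n
    · obtain ⟨a, b, hab⟩ := hcop j hj
      refine ⟨aeval x (b * r j), fun _ => ⟨?_, ?_, fun z hz => ?_⟩⟩
      · rw [← map_mul, show s j * (b * r j) = b * (s j * r j) by ring, hsr j hj, map_mul, hsn,
          mul_zero]
      · have := (Commute.all X (b * r j)).map (aeval x)
        rwa [aeval_X] at this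
      · have h1 : b * r j = 1 - a * s j := by rw [← hab]; ring
        rw [h1, map_sub, map_one, map_mul, sub_mul, one_mul, mul_assoc, hz, mul_zero, sub_zero]
    · exact ⟨0, fun h => absurd h hj⟩
  choose G hG using hG
  have hGG : ∀ i j, i ≤ j → j ≤ n → G j * G i = G i := by
    intro i j hij hj
    refine (hG j hj).2.2 _ ?_
    have : s j = (∏ a ∈ Finset.Ico i j, F a) * s i := by
      rw [mul_comm]; exact (Finset.prod_range_mul_prod_Ico F hij).symm
    rw [this, map_mul, mul_assoc, (hG i (hij.trans hj)).1, mul_zero]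
  choose Q₀ hQ1 hQ2 hQ3 hQ4 using fun j : ℕ =>
    exists_range_proj (hGG (min j n) (min j n) le_rfl (min_le_right _ _))
  refine ⟨Q₀, hQ1, fun i j hij => ?_, ?_, fun j hj => ?_, fun j => ?_, fun j hj => ?_⟩
  · calc Q₀ j * Q₀ i = Q₀ j * (G (min j n) * G (min i n)) * Q₀ i := by
          rw [hGG _ _ (min_le_min_right n hij) (min_le_right _ _), mul_assoc, hQ4]
      _ = Q₀ i := by
          rw [← mul_assoc, hQ3, hGG _ _ (min_le_min_right n hij) (min_le_right _ _), hQ4]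
  · have h := (hG 0 (Nat.zero_le _)).1
    have h0 : s 0 = 1 := by simp [s]
    rw [h0, map_one, one_mul] at h
    have h2 := hQ4 0
    rwa [Nat.zero_min, h, zero_mul, eq_comm] at h2
  · have h := (hG n le_rfl).2.2 1 (by rw [hsn, zero_mul])
    rw [mul_one] at h
    have h2 := hQ3 j
    rwa [min_eq_right hj, h, mul_one] at h2
  · have h := (hG (min j n) (min_le_right _ _)).2.1
    have h1 : x * Q₀ j = G (min j n) * (x * Q₀ j) := by
      conv_lhs => rw [← hQ4 j]
      rw [← mul_assoc, h.eq, mul_assoc]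
    rw [h1, ← mul_assoc (Q₀ j), hQ3]
  · have hF : aeval x (F j) = (x - lam j • 1) ^ k j := by
      simp only [F, map_pow, map_sub, aeval_X, aeval_C, Algebra.algebraMap_eq_smul_one]
    have hm1 : min j n = j := min_eq_left hj.le
    have hm2 : min (j + 1) n = j + 1 := min_eq_left hj
    have h1 : aeval x (s j) * ((x - lam j • 1) ^ k j * Q₀ (j + 1)) = 0 := by
      rw [← hF, ← mul_assoc, ← map_mul]
      have : s j * F j = s (j + 1) := (Finset.prod_range_succ F j).symm
      have h4 := hQ4 (j + 1)
      rw [hm2] at h4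
      rw [this, ← h4, ← mul_assoc, (hG (j + 1) hj).1, zero_mul]
    have h2 := (hG j hj.le).2.2 _ h1
    have h3 := hQ3 j
    rw [hm1] at h3
    rw [← h2, ← mul_assoc, h3]

end Flag

/-! ### Block decomposition of algebraic elements -/

section Blocks
variable {A : Type u} [CStarAlgebra A]

lemma invariant_pow {R W : A} (hR : R * R = R) (hW : R * (W * R) = W * R) (m : ℕ) :
    R * (W ^ m * R) = W ^ m * R := by
  induction m with
  | zero => simp [hR]
  | succ m ih =>
    have e : W ^ (m + 1) * R = W * R * (W ^ m * R) := by
      rw [mul_assoc W R, ih, pow_succ', mul_assoc]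
    rw [e, ← mul_assoc, hW]

/-- Compression to a subquotient of an invariant flag is multiplicative on powers. -/
lemma compress_pow {R R' W : A} (hR : R * R = R) (hR' : R' * R' = R') (h1 : R * R' = R)
    (h2 : R' * R = R) (hW : R * (W * R) = W * R) (hW' : R' * (W * R') = W * R') (m : ℕ) :
    (R' - R) * (W ^ (m + 1) * (R' - R)) = ((R' - R) * (W * (R' - R))) ^ (m + 1) := by
  have hPP : (R' - R) * (R' - R) = R' - R := by
    rw [mul_sub, sub_mul, sub_mul, hR, hR', h1, h2]; abel
  have hR'P : R' * (R' - R) = R' - R := by rw [mul_sub, hR', h2]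
  have hPR : (R' - R) * R = 0 := by rw [sub_mul, h2, hR, sub_self]
  induction m with
  | zero => simp
  | succ m ih =>
    have e1 : W ^ (m + 1) * (R' - R) = R' * (W ^ (m + 1) * (R' - R)) := by
      have := invariant_pow hR' hW' (m + 1)
      calc _ = W ^ (m + 1) * R' * (R' - R) := by rw [mul_assoc, hR'P]
        _ = R' * (W ^ (m + 1) * R') * (R' - R) := by rw [this]
        _ = _ := by rw [mul_assoc, mul_assoc, hR'P]
    have e2 : (R' - R) * (W * R') = (R' - R) * (W * (R' - R)) := by
      have : (R' - R) * (W * R) = 0 := by rw [← hW, ← mul_assoc, hPR, zero_mul]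
      rw [mul_sub W, mul_sub (R' - R), this, sub_zero]
    calc (R' - R) * (W ^ (m + 1 + 1) * (R' - R)) =
          (R' - R) * (W * (W ^ (m + 1) * (R' - R))) := by rw [pow_succ' W (m + 1), mul_assoc]
      _ = (R' - R) * (W * R') * (W ^ (m + 1) * (R' - R)) := by
          conv_lhs => rw [e1]
          simp only [mul_assoc]
      _ = (R' - R) * (W * (R' - R)) * ((R' - R) * (W ^ (m + 1) * (R' - R))) := by
          rw [e2]
          have : (R' - R) * (W * (R' - R)) * ((R' - R) * (W ^ (m + 1) * (R' - R))) =
            (R' - R) * (W * ((R' - R) * (R' - R))) * (W ^ (m + 1) * (R' - R)) := by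
              simp only [mul_assoc]
          rw [this, hPP]
      _ = _ := by rw [ih, ← pow_succ']

lemma invariant_sub_smul {R x : A} (hR : R * R = R) (h : R * (x * R) = x * R) (z : ℂ) :
    R * ((x - z • 1) * R) = (x - z • 1) * R := by
  rw [sub_mul, mul_sub, h, smul_mul_assoc, one_mul, mul_smul_comm, hR]

lemma corner_sub_smul {P : A} (hP : P * P = P) (x : A) (z : ℂ) :
    P * ((x - z • 1) * P) = P * x * P - z • P := by
  rw [sub_mul, mul_sub, smul_mul_assoc, one_mul, mul_smul_comm, hP, mul_assoc]

/-- An element annihilated by `∏ (t - lam i) ^ k i` is block upper triangular, with `i`-th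
diagonal block `lam i` plus an element of nilpotency order `k i`. -/
lemma exists_blocks (x : A) (n : ℕ) (lam : ℕ → ℂ) (k : ℕ → ℕ) (hk : ∀ i, 1 ≤ k i)
    (hinj : ∀ i < n, ∀ j < n, lam i = lam j → i = j)
    (hp : ((List.range n).map fun i => (x - lam i • 1) ^ k i).prod = 0) :
    ∃ P : ℕ → A, OrthProj P ∧ ∑ i ∈ Finset.range n, P i = 1 ∧
      (∀ i j, j < i → P i * x * P j = 0) ∧
      ∀ j < n, (P j * x * P j - lam j • P j) ^ k j = 0 := by
  have hp' : Polynomial.aeval x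
      (∏ i ∈ Finset.range n, (Polynomial.X - Polynomial.C (lam i)) ^ k i) = 0 := by
    have : ∏ i ∈ Finset.range n, (Polynomial.X - Polynomial.C (lam i)) ^ k i =
        ((List.range n).map fun i => (Polynomial.X - Polynomial.C (lam i)) ^ k i).prod := by
      simp [Finset.prod, Finset.range, Multiset.range]
    rw [this, map_list_prod, List.map_map, ← hp]
    congr 2
    funext i
    simp only [Function.comp_apply, map_pow, map_sub, Polynomial.aeval_X, Polynomial.aeval_C,
      Algebra.algebraMap_eq_smul_one]
  obtain ⟨Q, hsa, hle, h0, h1, hinv, hF⟩ := exists_flag x n lam k hinj hp'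
  have hle' : ∀ i j, i ≤ j → Q i * Q j = Q i := by
    intro i j hij
    have := congrArg star (hle i j hij)
    rwa [star_mul, (hsa i).star_eq, (hsa j).star_eq] at this
  have horth : ∀ i j, i < j → (Q (i + 1) - Q i) * (Q (j + 1) - Q j) = 0 := by
    intro i j hij
    rw [sub_mul, mul_sub, mul_sub, hle' _ _ (by omega), hle' _ _ (by omega),
      hle' _ _ (by omega), hle' _ _ (by omega)]
    simp
  have hPsa : ∀ i, IsSelfAdjoint (Q (i + 1) - Q i) := fun i => (hsa _).sub (hsa _)
  have hPi : ∀ i, (Q (i + 1) - Q i) * (Q (i + 1) - Q i) = Q (i + 1) - Q i := by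
    intro i
    rw [sub_mul, mul_sub, mul_sub, hle _ _ le_rfl, hle _ _ le_rfl, hle _ _ (Nat.le_succ i),
      hle' _ _ (Nat.le_succ i)]
    abel
  refine ⟨fun j => Q (j + 1) - Q j, ⟨hPsa, hPi, fun i j hij => ?_⟩, ?_, fun i j hij => ?_,
    fun j hj => ?_⟩
  · rcases lt_or_gt_of_ne hij with h | h
    · exact horth i j h
    · have := congrArg star (horth j i h)
      rwa [star_mul, (hPsa i).star_eq, (hPsa j).star_eq, star_zero] at this
  · rw [Finset.sum_range_sub, h1 n le_rfl, h0, sub_zero]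
  · have e1 : Q (j + 1) * (Q (j + 1) - Q j) = Q (j + 1) - Q j := by
      rw [mul_sub, hle _ _ le_rfl, hle _ _ (Nat.le_succ j)]
    have e2 : (Q (i + 1) - Q i) * Q (j + 1) = 0 := by
      rw [sub_mul, hle _ _ (by omega), hle _ _ (by omega), sub_self]
    calc (Q (i + 1) - Q i) * x * (Q (j + 1) - Q j) =
          (Q (i + 1) - Q i) * (x * Q (j + 1)) * (Q (j + 1) - Q j) := by
            conv_lhs => rw [← e1]
            simp only [mul_assoc]
      _ = 0 := by rw [← hinv, ← mul_assoc, e2, zero_mul, zero_mul]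
  · obtain ⟨m, hm⟩ : ∃ m, k j = m + 1 := ⟨k j - 1, by have := hk j; omega⟩
    have hF := hF j hj
    rw [← corner_sub_smul (hPi j), hm, ← compress_pow (hle _ _ le_rfl) (hle _ _ le_rfl)
      (hle' _ _ (Nat.le_succ j)) (hle _ _ (Nat.le_succ j))
      (invariant_sub_smul (hle _ _ le_rfl) (hinv j) _)
      (invariant_sub_smul (hle _ _ le_rfl) (hinv (j + 1)) _), ← hm]
    have e1 : Q (j + 1) * (Q (j + 1) - Q j) = Q (j + 1) - Q j := by
      rw [mul_sub, hle _ _ le_rfl, hle _ _ (Nat.le_succ j)]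
    have e2 : (Q (j + 1) - Q j) * Q j = 0 := by
      rw [sub_mul, hle _ _ (Nat.le_succ j), hle _ _ le_rfl, sub_self]
    calc _ = (Q (j + 1) - Q j) * ((x - lam j • 1) ^ k j * Q (j + 1)) * (Q (j + 1) - Q j) := by
            conv_lhs => rw [← e1]
            rw [e1]
            conv_lhs => enter [2, 2]; rw [← e1]
            simp only [mul_assoc]
      _ = 0 := by rw [← hF, ← mul_assoc, e2, zero_mul, zero_mul]

/-- Conversely, a block upper triangular element with such diagonal blocks is annihilated by
`∏ (t - lam i) ^ k i`. -/
lemma prod_eq_zero_of_blocks {P : ℕ → A} (hP : OrthProj P) {Y : A} {n : ℕ} {lam : ℕ → ℂ}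
    {k : ℕ → ℕ} (hk : ∀ i, 1 ≤ k i) (hsum : ∑ i ∈ Finset.range n, P i = 1)
    (hup : ∀ i < n, ∀ j < i, P i * Y * P j = 0)
    (hdiag : ∀ j < n, (P j * Y * P j - lam j • P j) ^ k j = 0) :
    ((List.range n).map fun i => (Y - lam i • 1) ^ k i).prod = 0 := by
  let R : ℕ → A := fun j => ∑ i ∈ Finset.range j, P i
  have hle : ∀ i j, i ≤ j → R j * R i = R i := by
    intro i j hij
    show R j * (∑ a ∈ Finset.range i, P a) = _
    rw [Finset.mul_sum]
    refine Finset.sum_congr rfl fun a ha => ?_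
    rw [hP.sum_mul, if_pos]
    rw [Finset.mem_range] at ha ⊢; omega
  have hle' : ∀ i j, i ≤ j → R i * R j = R i := by
    intro i j hij
    show (∑ a ∈ Finset.range i, P a) * R j = _
    rw [Finset.sum_mul]
    refine Finset.sum_congr rfl fun a ha => ?_
    rw [hP.mul_sum, if_pos]
    rw [Finset.mem_range] at ha ⊢; omega
  have hinv : ∀ j ≤ n, R j * (Y * R j) = Y * R j := by
    intro j hj
    have h1 : Y * R j = (∑ i ∈ Finset.range n, P i) * (Y * R j) := by rw [hsum, one_mul]
    have h2 : (∑ i ∈ Finset.Ico j n, P i) * (Y * R j) = 0 := by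
      rw [Finset.sum_mul]
      refine Finset.sum_eq_zero fun i hi => ?_
      rw [Finset.mem_Ico] at hi
      show P i * (Y * ∑ a ∈ Finset.range j, P a) = 0
      rw [← mul_assoc, Finset.mul_sum]
      refine Finset.sum_eq_zero fun a ha => ?_
      rw [Finset.mem_range] at ha
      exact hup i hi.2 a (by omega)
    conv_rhs => rw [h1, ← Finset.sum_range_add_sum_Ico P hj, add_mul, h2, add_zero]
  have hstep : ∀ j < n, (Y - lam j • 1) ^ k j * R (j + 1) =
      R j * ((Y - lam j • 1) ^ k j * R (j + 1)) := by
    intro j hj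
    have hRP : R (j + 1) - R j = P j := by
      simp only [R, Finset.sum_range_succ, add_sub_cancel_left]
    obtain ⟨m, hm⟩ : ∃ m, k j = m + 1 := ⟨k j - 1, by have := hk j; omega⟩
    have hW := invariant_sub_smul (hle j j le_rfl) (hinv j hj.le) (lam j)
    have hW' := invariant_sub_smul (hle (j + 1) (j + 1) le_rfl) (hinv (j + 1) hj) (lam j)
    have h1 := compress_pow (hle j j le_rfl) (hle _ _ le_rfl) (hle' _ _ (Nat.le_succ j))
      (hle _ _ (Nat.le_succ j)) hW hW' m
    rw [hRP, corner_sub_smul (hP.idem j), ← hm, hdiag j hj] at h1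
    have hPR : P j * R j = 0 := by
      rw [← hRP, sub_mul, hle _ _ (Nat.le_succ j), hle _ _ le_rfl, sub_self]
    have h2 : P j * ((Y - lam j • 1) ^ k j * R j) = 0 := by
      rw [← invariant_pow (hle j j le_rfl) hW, ← mul_assoc, hPR, zero_mul]
    have h3 : P j * ((Y - lam j • 1) ^ k j * R (j + 1)) = 0 := by
      have : R (j + 1) = P j + R j := by rw [← hRP]; abel
      rw [this, mul_add, mul_add, h1, h2, add_zero]
    rw [← hRP, sub_mul, invariant_pow (hle (j + 1) (j + 1) le_rfl) hW', sub_eq_zero] at h3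
    exact h3
  have key : ∀ j ≤ n, ((List.range j).map fun i => (Y - lam i • 1) ^ k i).prod * R j = 0 := by
    intro j
    induction j with
    | zero => intro _; simp [R]
    | succ j ih =>
      intro hj
      rw [List.range_succ, List.map_append, List.prod_append, List.map_singleton,
        List.prod_singleton, mul_assoc, hstep j hj, ← mul_assoc, ih (by omega), zero_mul]
  have := key n le_rfl
  simp only [R] at this
  rwa [hsum, mul_one] at this

end Blocks

/-! ### Eigenvalues on and outside the unit circle -/

section Peripheral
variable {A : Type u} [CStarAlgebra A]

/-- Power boundedness excludes a Jordan chain of length two at a unimodular eigenvalue. -/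
lemma eq_zero_of_jordan {a v w : A} {z : ℂ} (ha : ‖a‖ ≤ 1) (hz : ‖z‖ = 1)
    (h1 : a * w = z • w + v) (h2 : a * v = z • v) : v = 0 := by
  have hpow : ∀ r : ℕ, z • (a ^ r * w) = z ^ (r + 1) • w + ((r : ℂ) * z ^ r) • v := by
    intro r
    induction r with
    | zero => simp
    | succ r ih =>
      rw [pow_succ', mul_assoc, ← mul_smul_comm, ih, mul_add, mul_smul_comm, mul_smul_comm, h1, h2,
        smul_add, smul_smul, smul_smul, add_assoc, ← add_smul]
      congr 2
      push_cast; ring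
  have hn : ∀ r : ℕ, ‖a ^ r * w‖ ≤ ‖w‖ := by
    intro r
    induction r with
    | zero => simp
    | succ r ih =>
      rw [pow_succ', mul_assoc]
      refine (norm_mul_le _ _).trans ?_
      calc _ ≤ 1 * ‖w‖ := by gcongr
        _ = _ := one_mul _
  have hb : ∀ r : ℕ, r * ‖v‖ ≤ 2 * ‖w‖ := by
    intro r
    have e : ((r : ℂ) * z ^ r) • v = z • (a ^ r * w) - z ^ (r + 1) • w := by
      rw [hpow r]; abel
    have := congrArg norm e
    rw [norm_smul, norm_mul, norm_pow, hz, one_pow, mul_one, Complex.norm_natCast] at this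
    rw [this]
    refine (norm_sub_le _ _).trans ?_
    rw [norm_smul, norm_smul, norm_pow, hz, one_pow, one_mul, one_mul]
    linarith [hn r]
  by_contra hv
  have hv' : 0 < ‖v‖ := norm_pos_iff.2 hv
  obtain ⟨r, hr⟩ := exists_nat_gt (2 * ‖w‖ / ‖v‖)
  rw [div_lt_iff₀ hv'] at hr
  linarith [hb r]

/-- For a contraction `a`, an eigenvalue `z` with `1 < ‖z‖` does not occur. -/
lemma eq_zero_of_eigen {a v : A} {z : ℂ} (ha : ‖a‖ ≤ 1) (hz : 1 < ‖z‖) (h : a * v = z • v) :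
    v = 0 := by
  by_contra hv
  have hv' : 0 < ‖v‖ := norm_pos_iff.2 hv
  have h1 := congrArg norm h
  rw [norm_smul] at h1
  have h2 := norm_mul_le a v
  nlinarith

lemma diag_large {P x : A} {z : ℂ} {k : ℕ} (hPs : IsSelfAdjoint P) (hP : P * P = P)
    (hx : ‖x‖ ≤ 1) (hN : (P * x * P - z • P) ^ k = 0) (hz : 1 < ‖z‖) : P = 0 := by
  have ha : ‖P * x * P‖ ≤ 1 := by
    have h := norm_proj_le hPs hP
    calc _ ≤ ‖P‖ * ‖x‖ * ‖P‖ := norm_mul₃_le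
      _ ≤ 1 * 1 * 1 := by gcongr
      _ = 1 := by norm_num
  set N := P * x * P - z • P with hNd
  have hPN : P * N = N := by
    rw [hNd, mul_sub, mul_smul_comm, hP, ← mul_assoc, ← mul_assoc, hP]
  have hPp : ∀ m, P * (N ^ m * P) = N ^ m * P := by
    intro m
    cases m with
    | zero => simp [hP]
    | succ m => rw [pow_succ', mul_assoc, ← mul_assoc, hPN]
  have key : ∀ m, N ^ m * P = 0 → P = 0 := by
    intro m
    induction m with
    | zero => simp
    | succ m ih =>
      intro h
      refine ih (eq_zero_of_eigen ha hz ?_)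
      have e : P * x * P = N + z • P := by rw [hNd]; abel
      rw [e, add_mul, ← mul_assoc, ← pow_succ', h, zero_add, smul_mul_assoc, hPp]
  exact key k (by rw [hN, zero_mul])

lemma diag_unimodular {P x : A} {z : ℂ} {k : ℕ} (hPs : IsSelfAdjoint P) (hP : P * P = P)
    (hx : ‖x‖ ≤ 1) (hN : (P * x * P - z • P) ^ k = 0) (hz : ‖z‖ = 1) : P * x * P = z • P := by
  have ha : ‖P * x * P‖ ≤ 1 := by
    have h := norm_proj_le hPs hP
    calc _ ≤ ‖P‖ * ‖x‖ * ‖P‖ := norm_mul₃_le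
      _ ≤ 1 * 1 * 1 := by gcongr
      _ = 1 := by norm_num
  rw [← sub_eq_zero]
  set N := P * x * P - z • P with hNd
  have hPN : P * N = N := by
    rw [hNd, mul_sub, mul_smul_comm, hP, ← mul_assoc, ← mul_assoc, hP]
  have hNP : N * P = N := by
    rw [hNd, sub_mul, smul_mul_assoc, hP, mul_assoc, hP]
  have hPp : ∀ m, P * (N ^ m * P) = N ^ m * P := by
    intro m
    cases m with
    | zero => simp [hP]
    | succ m => rw [pow_succ', mul_assoc, ← mul_assoc, hPN]
  have e : P * x * P = N + z • P := by rw [hNd]; abel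
  have key : ∀ m, N ^ (m + 1) * P = 0 → N = 0 := by
    intro m
    induction m with
    | zero => intro h; rwa [zero_add, pow_one, hNP] at h
    | succ m ih =>
      intro h
      refine ih (eq_zero_of_jordan (w := N ^ m * P) ha hz ?_ ?_)
      · rw [e, add_mul, ← mul_assoc, ← pow_succ', smul_mul_assoc, hPp, add_comm]
      · rw [e, add_mul, ← mul_assoc, ← pow_succ', h, zero_add, smul_mul_assoc, hPp]
  exact key k (by rw [pow_succ, hN, zero_mul, zero_mul])

/-- A unimodular compression of a contraction to a projection forces the projection to reduce it. -/
lemma mul_proj_of_unimodular {P x : A} {z : ℂ} (hPs : IsSelfAdjoint P) (hP : P * P = P)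
    (hx : ‖x‖ ≤ 1) (hz : ‖z‖ = 1) (h : P * x * P = z • P) : x * P = z • P := by
  let _ := CStarAlgebra.spectralOrder A
  have := CStarAlgebra.spectralOrderedRing A
  obtain ⟨y, hy⟩ : ∃ y, y = x * P - z • P := ⟨_, rfl⟩
  have hPy : P * y = 0 := by rw [hy, mul_sub, mul_smul_comm, hP, ← mul_assoc, h, sub_self]
  have hyP : y * P = y := by rw [hy, sub_mul, smul_mul_assoc, hP, mul_assoc, hP]
  have hxP : x * P = z • P + y := by rw [hy]; abel
  have hPy' : star y * P = 0 := by
    have := congrArg star hPy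
    rwa [star_mul, hPs.star_eq, star_zero] at this
  have hyP' : P * star y = star y := by
    have := congrArg star hyP
    rwa [star_mul, hPs.star_eq] at this
  have h1 : star (x * P) * (x * P) = P + star y * y := by
    rw [hxP, star_add, star_smul, hPs.star_eq, add_mul, mul_add, mul_add, mul_smul_comm,
      smul_mul_assoc, hP, smul_mul_assoc, hPy, mul_smul_comm, hPy', smul_zero, smul_zero,
      smul_smul]
    have : z * star z = 1 := by
      rw [Complex.star_def, Complex.mul_conj, Complex.normSq_eq_norm_sq, hz]; simp
    rw [this, one_smul, add_zero, zero_add]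
  have h2 : ‖star (x * P) * (x * P)‖ ≤ 1 := by
    have h := norm_proj_le hPs hP
    have : ‖x * P‖ ≤ 1 := (norm_mul_le _ _).trans (mul_le_one₀ hx (norm_nonneg _) h)
    rw [CStarRing.norm_star_mul_self]
    exact mul_le_one₀ this (norm_nonneg _) this
  have h3 : star (x * P) * (x * P) ≤ 1 :=
    (CStarAlgebra.norm_le_one_iff_of_nonneg _ (star_mul_self_nonneg _)).1 h2
  have h4 := star_left_conjugate_le_conjugate h3 P
  rw [h1, hPs.star_eq, mul_one, hP, mul_add, add_mul, hP, hP, ← mul_assoc, hyP', mul_assoc,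
    hyP] at h4
  have h5 : star y * y ≤ 0 := by simpa using h4
  have h6 : star y * y = 0 := le_antisymm h5 (star_mul_self_nonneg y)
  rw [CStarRing.star_mul_self_eq_zero_iff, hy, sub_eq_zero] at h6
  exact h6

lemma proj_mul_of_unimodular {P x : A} {z : ℂ} (hPs : IsSelfAdjoint P) (hP : P * P = P)
    (hx : ‖x‖ ≤ 1) (hz : ‖z‖ = 1) (h : P * x * P = z • P) : P * x = z • P := by
  have h1 := mul_proj_of_unimodular (x := star x) (z := star z) hPs hP (by rwa [norm_star])
    (by rwa [norm_star]) (by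
      have := congrArg star h
      rwa [star_mul, star_mul, hPs.star_eq, star_smul, hPs.star_eq, ← mul_assoc] at this)
  have := congrArg star h1
  rwa [star_mul, star_star, hPs.star_eq, star_smul, hPs.star_eq, star_star] at this

lemma OrthProj.mul_diagEl {P : ℕ → A} (hP : OrthProj P) {T : Finset ℕ} {lam : ℕ → ℂ} (i : ℕ) :
    P i * diagEl T P lam = if i ∈ T then lam i • P i else 0 := by
  rw [diagEl, Finset.mul_sum]
  have : ∀ j ∈ T, P i * (lam j • P j) = if i = j then lam i • P i else 0 := by
    intro j _
    rw [mul_smul_comm, hP.mul]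
    split_ifs with h
    · rw [h]
    · exact smul_zero _
  rw [Finset.sum_congr rfl this, Finset.sum_ite_eq]

/-- A block triangular contraction splits as the orthogonal sum of a triangular contraction with
eigenvalues in the open unit disc and a diagonal unitary. -/
lemma exists_peripheral {P : ℕ → A} (hP : OrthProj P) {x : A} {n : ℕ} {lam : ℕ → ℂ}
    {k : ℕ → ℕ} (hsum : ∑ i ∈ Finset.range n, P i = 1) (hx : ‖x‖ ≤ 1)
    (hup : ∀ i j, j < i → P i * x * P j = 0)
    (hdiag : ∀ j < n, (P j * x * P j - lam j • P j) ^ k j = 0) :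
    ∃ T T' : Finset ℕ, ∃ d x₀, Disjoint T T' ∧ (∀ i < n, i ∉ T → i ∉ T' → P i = 0) ∧
      (∀ i ∈ T, i < n) ∧ (∀ i ∈ T', i < n) ∧
      0 ≤ d ∧ d < 1 ∧ (∀ i ∈ T, ‖lam i‖ ≤ d) ∧ (∀ i ∈ T', ‖lam i‖ ≤ 1) ∧
      Tri T P lam k x₀ ∧ ‖x₀‖ ≤ 1 ∧ x = x₀ + diagEl T' P lam := by
  classical
  let T := (Finset.range n).filter fun i => P i ≠ 0 ∧ ‖lam i‖ < 1
  let T' := (Finset.range n).filter fun i => P i ≠ 0 ∧ ¬ ‖lam i‖ < 1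
  have hT : ∀ {i}, i ∈ T ↔ i < n ∧ P i ≠ 0 ∧ ‖lam i‖ < 1 := by intro i; simp [T]
  have hT' : ∀ {i}, i ∈ T' ↔ i < n ∧ P i ≠ 0 ∧ ¬ ‖lam i‖ < 1 := by
    intro i; simp only [T', Finset.mem_filter, Finset.mem_range]
  have hdisj : Disjoint T T' := by
    rw [Finset.disjoint_left]
    intro i h1 h2
    exact (hT'.1 h2).2.2 (hT.1 h1).2.2
  have huni : ∀ i ∈ T', ‖lam i‖ = 1 := by
    intro i hi
    obtain ⟨h1, h2, h3⟩ := hT'.1 hi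
    refine le_antisymm ?_ (not_lt.1 h3)
    by_contra! h
    exact h2 (diag_large (hP.sa i) (hP.idem i) hx (hdiag i h1) h)
  have hdu : ∀ i ∈ T', P i * x * P i = lam i • P i := fun i hi =>
    diag_unimodular (hP.sa i) (hP.idem i) hx (hdiag i (hT'.1 hi).1) (huni i hi)
  have hxP : ∀ i ∈ T', x * P i = lam i • P i := fun i hi =>
    mul_proj_of_unimodular (hP.sa i) (hP.idem i) hx (huni i hi) (hdu i hi)
  have hPx : ∀ i ∈ T', P i * x = lam i • P i := fun i hi =>
    proj_mul_of_unimodular (hP.sa i) (hP.idem i) hx (huni i hi) (hdu i hi)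
  have hzero : ∀ i < n, i ∉ T → i ∉ T' → P i = 0 := by
    intro i hi h1 h2
    by_contra h
    by_cases h3 : ‖lam i‖ < 1
    · exact h1 (hT.2 ⟨hi, h, h3⟩)
    · exact h2 (hT'.2 ⟨hi, h, h3⟩)
  have hsum' : ∑ i ∈ T, P i + ∑ i ∈ T', P i = 1 := by
    rw [← Finset.sum_union hdisj, ← hsum]
    refine Finset.sum_subset ?_ ?_
    · intro i hi
      rw [Finset.mem_range]
      rcases Finset.mem_union.1 hi with h | h
      · exact (hT.1 h).1
      · exact (hT'.1 h).1
    · intro i hi h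
      rw [Finset.mem_union, not_or] at h
      exact hzero i (Finset.mem_range.1 hi) h.1 h.2
  obtain ⟨d, hd0, hd1, hd⟩ : ∃ d : ℝ, 0 ≤ d ∧ d < 1 ∧ ∀ i ∈ T, ‖lam i‖ ≤ d := by
    obtain ⟨g, hg0, hg⟩ := exists_pos_le T
      (fun i => if ‖lam i‖ < 1 then 1 - ‖lam i‖ else 1) fun i => by
        split_ifs with h
        · linarith
        · norm_num
    refine ⟨max 0 (1 - g), le_max_left _ _, max_lt one_pos (by linarith), fun i hi => ?_⟩
    have := hg i hi
    simp only [if_pos (hT.1 hi).2.2] at this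
    exact le_max_of_le_right (by linarith)
  set p := ∑ i ∈ T, P i with hp
  set p' := ∑ i ∈ T', P i with hp'
  have e1 : x * p' = diagEl T' P lam := by
    rw [hp', Finset.mul_sum, diagEl]; exact Finset.sum_congr rfl hxP
  have e2 : p' * x = diagEl T' P lam := by
    rw [hp', Finset.sum_mul, diagEl]; exact Finset.sum_congr rfl hPx
  have e3 : p = 1 - p' := by rw [← hsum']; abel
  have hpp : p' * p' = p' := hP.sum_idem T'
  have e4 : p * x * p = x - diagEl T' P lam := by
    have : p * x * p = x - x * p' - p' * x + p' * x * p' := by rw [e3]; noncomm_ring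
    rw [this, mul_assoc, e1, e2, ← e1]
    have : p' * (x * p') = x * p' := by rw [← mul_assoc, e2, ← e1, mul_assoc, hpp]
    rw [this]; abel
  have e5 : p * x * p = truncU T P x := by
    rw [truncU_apply, hp, Finset.sum_mul, Finset.sum_mul_sum, ← Finset.sum_product']
    symm
    refine Finset.sum_subset_zero_on_sdiff (Finset.filter_subset _ _) ?_ ?_
    · intro q hq
      rw [Finset.mem_sdiff] at hq
      refine hup _ _ ?_
      by_contra h
      have h1 := Finset.mem_product.1 hq.1
      exact hq.2 (mem_upper.2 ⟨h1.1, h1.2, not_lt.1 h⟩)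
    · intro q _
      rw [mul_assoc]
  refine ⟨T, T', d, p * x * p, hdisj, hzero, fun i hi => (hT.1 hi).1, fun i hi => (hT'.1 hi).1,
    hd0, hd1, hd, fun i hi => (huni i hi).le, ⟨?_, fun i hi => ?_⟩, ?_, ?_⟩
  · rw [e5, hP.truncU_truncU]
  · rw [e5, hP.corner_truncU, if_pos (mem_upper.2 ⟨hi, hi, le_rfl⟩), hdiag i (hT.1 hi).1]
  · have h := norm_proj_le (hP.sum_sa T) (hP.sum_idem T)
    calc _ ≤ ‖p‖ * ‖x‖ * ‖p‖ := norm_mul₃_le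
      _ ≤ 1 * 1 * 1 := by gcongr
      _ = 1 := by norm_num
  · rw [e4]; abel

end Peripheral

/-! ### Lifting along lifted projections -/

section Assemble
variable {A C : Type u} [CStarAlgebra A] [CStarAlgebra C]

/-- Once the block projections of `x` have been lifted, `x` itself lifts. -/
lemma lift_of_proj (π : A →⋆ₐ[ℂ] C)
    (hq : ∀ c : C, ∀ ε, ‖c‖ < ε → ∃ b, π b = c ∧ ‖b‖ < ε) {P : ℕ → A} (hP : OrthProj P)
    {x : C} {n : ℕ} {lam : ℕ → ℂ} {k : ℕ → ℕ} (hk : ∀ i, 1 ≤ k i)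
    (hsum : ∑ i ∈ Finset.range n, P i = 1) (h0 : ∀ i, π (P i) = 0 → P i = 0) (hx : ‖x‖ ≤ 1)
    (hup : ∀ i j, j < i → π (P i) * x * π (P j) = 0)
    (hdiag : ∀ j < n, (π (P j) * x * π (P j) - lam j • π (P j)) ^ k j = 0) :
    ∃ Y : A, ((List.range n).map fun i => (Y - lam i • 1) ^ k i).prod = 0 ∧ ‖Y‖ ≤ 1 ∧
      π Y = x := by
  have hsumC : ∑ i ∈ Finset.range n, π (P i) = 1 := by rw [← map_sum, hsum, map_one]
  obtain ⟨T, T', d, x₀, hdisj, hzero, hTn, hTn', hd0, hd1, hl, hl', htri, hx₀, hxx⟩ :=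
    exists_peripheral (hP.map π) hsumC hx hup hdiag
  obtain ⟨Y₀, hY₀, hY₀n, hπY₀⟩ := hP.lift_tri π hq hk hd0 hd1 hl htri hx₀
  have hdisj' : ∀ i ∈ T, i ∉ T' := fun i hi =>
    Finset.disjoint_left.1 hdisj hi
  have hcorner : ∀ i j, P i * Y₀ * P j = if (i, j) ∈ upper T then P i * Y₀ * P j else 0 := by
    intro i j
    conv_lhs => rw [← hY₀.upper, hP.corner_truncU]
  refine ⟨Y₀ + diagEl T' P lam, ?_, ?_, ?_⟩
  · refine prod_eq_zero_of_blocks hP hk hsum (fun i _ j hj => ?_) fun j hj => ?_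
    · rw [mul_add, add_mul, hcorner, if_neg fun h => absurd (mem_upper.1 h).2.2 (by simpa using hj),
        hP.mul_diagEl]
      split_ifs
      · rw [smul_mul_assoc, hP.orth i j (by omega), smul_zero, add_zero]
      · rw [zero_mul, add_zero]
    · rw [mul_add, add_mul, hP.mul_diagEl]
      by_cases h1 : j ∈ T
      · rw [if_neg (hdisj' j h1), zero_mul, add_zero, hY₀.diag j h1]
      · have hkj : k j ≠ 0 := by have := hk j; omega
        rw [hcorner, if_neg fun h => h1 (mem_upper.1 h).1, zero_add]
        by_cases h2 : j ∈ T'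
        · rw [if_pos h2, smul_mul_assoc, hP.idem, sub_self, zero_pow hkj]
        · rw [if_neg h2, h0 j (hzero j hj h1 h2), smul_zero, zero_mul, sub_zero, zero_pow hkj]
  · obtain ⟨p, hp⟩ : ∃ p, p = ∑ i ∈ T, P i := ⟨_, rfl⟩
    have e1 : p * Y₀ * p = Y₀ := by
      rw [← hY₀.upper, truncU_apply, Finset.mul_sum, Finset.sum_mul]
      refine Finset.sum_congr rfl fun q hq => ?_
      have h := mem_upper.1 hq
      have : p * (P q.1 * (Y₀ * P q.2)) * p = (p * P q.1) * Y₀ * (P q.2 * p) := by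
        simp only [mul_assoc]
      rw [this, hp, hP.sum_mul, hP.mul_sum, if_pos h.1, if_pos h.2.1, mul_assoc]
    have e2 : (1 - p) * diagEl T' P lam * (1 - p) = diagEl T' P lam := by
      rw [diagEl, Finset.mul_sum, Finset.sum_mul]
      refine Finset.sum_congr rfl fun i hi => ?_
      have hiT : i ∉ T := fun h => hdisj' i h hi
      rw [mul_smul_comm, smul_mul_assoc, sub_mul, one_mul, hp, hP.sum_mul, if_neg hiT, sub_zero,
        mul_sub, mul_one, hP.mul_sum, if_neg hiT, sub_zero]
    have h := norm_proj_conj_le (hP.sum_sa T) (hP.sum_idem T)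
      (hP.norm_diag_le T' lam zero_le_one hl') hY₀n
    rw [← diagEl, ← hp, e1, e2] at h
    exact h
  · rw [map_add, hπY₀, map_diagEl, ← hxx]

end Assemble

/-! ### Lifting finite partitions of unity by projections -/

section LiftProj
variable {A C : Type u} [CStarAlgebra A] [CStarAlgebra C]

/-- Functional calculus of a selfadjoint element which is diagonal with finite spectrum. -/
lemma cfc_diag {S : Finset ℕ} {P : ℕ → C} (hP : OrthProj P) (hsum : ∑ i ∈ S, P i = 1) {h : C}
    (hh : h = ∑ i ∈ S, i • P i) (f : ℝ → ℝ) : cfc f h = ∑ i ∈ S, f i • P i := by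
  have hsa : IsSelfAdjoint h := by
    rw [hh]
    refine isSelfAdjoint_sum S fun i _ => ?_
    rw [nsmul_eq_mul]
    exact (IsSelfAdjoint.natCast i).commute_iff (hP.sa i) |>.1 (Nat.cast_commute i _)
  have h1 : ∀ i ∈ S, P i * h = (i : ℝ) • P i := by
    intro i hi
    rw [hh, Finset.mul_sum]
    have : ∀ j ∈ S, P i * (j • P j) = if i = j then (i : ℝ) • P i else 0 := by
      intro j _
      rw [mul_smul_comm, hP.mul]
      split_ifs with hij
      · rw [← hij, Nat.cast_smul_eq_nsmul]
      · exact smul_zero _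
    rw [Finset.sum_congr rfl this, Finset.sum_ite_eq, if_pos hi]
  have h2 : ∀ i ∈ S, ∀ m : ℕ, P i * h ^ m = (i : ℝ) ^ m • P i := by
    intro i hi m
    induction m with
    | zero => simp
    | succ m ih => rw [pow_succ, ← mul_assoc, ih, smul_mul_assoc, h1 i hi, smul_smul, pow_succ]
  have h3 : ∀ i ∈ S, ∀ p : Polynomial ℝ, P i * Polynomial.aeval h p = p.eval (i : ℝ) • P i := by
    intro i hi p
    rw [Polynomial.aeval_eq_sum_range, Polynomial.eval_eq_sum_range, Finset.mul_sum,
      Finset.sum_smul]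
    refine Finset.sum_congr rfl fun m _ => ?_
    rw [mul_smul_comm, h2 i hi, smul_smul]
  have h4 : ∀ p : Polynomial ℝ, Polynomial.aeval h p = ∑ i ∈ S, p.eval (i : ℝ) • P i := by
    intro p
    calc _ = (∑ i ∈ S, P i) * Polynomial.aeval h p := by rw [hsum, one_mul]
      _ = _ := by rw [Finset.sum_mul]; exact Finset.sum_congr rfl fun i hi => h3 i hi p
  have hspec : ∀ t ∈ spectrum ℝ h, ∃ i ∈ S, t = i := by
    intro t ht
    let p : Polynomial ℝ := ∏ i ∈ S, (Polynomial.X - Polynomial.C (i : ℝ))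
    have hp0 : Polynomial.aeval h p = 0 := by
      rw [h4]
      refine Finset.sum_eq_zero fun i hi => ?_
      rw [Polynomial.eval_prod, Finset.prod_eq_zero hi (by simp), zero_smul]
    have h5 := spectrum.subset_polynomial_aeval h p ⟨t, ht, rfl⟩
    rw [hp0] at h5
    have h6 : p.eval t = 0 := by
      by_contra hne
      refine h5 ?_
      rw [spectrum.mem_resolventSet_iff, sub_zero]
      exact (Ne.isUnit hne).map (algebraMap ℝ C)
    rw [Polynomial.eval_prod, Finset.prod_eq_zero_iff] at h6
    obtain ⟨i, hi, h7⟩ := h6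
    refine ⟨i, hi, ?_⟩
    simpa [sub_eq_zero] using h7
  have hinj : Set.InjOn (fun i : ℕ => (i : ℝ)) S := fun i _ j _ hij =>
    Nat.cast_injective (R := ℝ) hij
  let p := Lagrange.interpolate S (fun i : ℕ => (i : ℝ)) fun i => f i
  have hp : ∀ i ∈ S, p.eval (i : ℝ) = f i := fun i hi =>
    Lagrange.eval_interpolate_at_node (v := fun i : ℕ => (i : ℝ)) (fun i => f i) hinj hi
  have h5 : cfc f h = cfc (fun t => p.eval t) h := by
    refine cfc_congr fun t ht => ?_
    obtain ⟨i, hi, rfl⟩ := hspec t ht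
    exact (hp i hi).symm
  rw [h5, cfc_polynomial p h, h4]
  exact Finset.sum_congr rfl fun i hi => by rw [hp i hi]

/-- A tent of height one and half-width one half at `j`. -/
noncomputable def tent (j : ℕ) (t : ℝ) : ℝ := max 0 (1 - 2 * |t - j|)

/-- A plateau equal to one within distance one quarter of `j`, and vanishing at distance at least
one half. -/
noncomputable def plateau (j : ℕ) (t : ℝ) : ℝ := max 0 (min 1 (2 - 4 * |t - j|))

lemma continuous_tent (j : ℕ) : Continuous (tent j) := by unfold tent; fun_prop

lemma continuous_plateau (j : ℕ) : Continuous (plateau j) := by unfold plateau; fun_prop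

lemma tent_self (j : ℕ) : tent j j = 1 := by simp [tent]

lemma plateau_self (j : ℕ) : plateau j j = 1 := by simp [plateau]

lemma abs_lt_of_tent {j : ℕ} {t : ℝ} (h : tent j t ≠ 0) : |t - j| < 1 / 2 := by
  by_contra! h'
  exact h (max_eq_left (by linarith))

lemma abs_lt_of_plateau {j : ℕ} {t : ℝ} (h : plateau j t ≠ 0) : |t - j| < 1 / 2 := by
  by_contra! h'
  exact h (max_eq_left ((min_le_right _ _).trans (by linarith)))

lemma nat_eq_of_near {i j : ℕ} {t : ℝ} (hi : |t - i| < 1 / 2) (hj : |t - j| < 1 / 2) : i = j := by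
  rw [abs_lt] at hi hj
  have h1 : (i : ℝ) < j + 1 := by linarith
  have h2 : (j : ℝ) < i + 1 := by linarith
  have h3 : i < j + 1 := by exact_mod_cast h1
  have h4 : j < i + 1 := by exact_mod_cast h2
  omega

/-- The real numbers where the tents over `S` nearly sum to one are close to exactly one point
of `S`. -/
lemma plateau_of_tent {S : Finset ℕ} {t : ℝ} (h : ‖1 - ∑ i ∈ S, tent i t‖ < 1 / 2) :
    ∃ j ∈ S, ∀ i, plateau i t = if j = i then 1 else 0 := by
  have h1 : ∑ i ∈ S, tent i t ≠ 0 := by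
    intro h0
    rw [h0] at h
    norm_num at h
  obtain ⟨j, hj, hj0⟩ := Finset.exists_ne_zero_of_sum_ne_zero h1
  have hjn := abs_lt_of_tent hj0
  have h2 : ∑ i ∈ S, tent i t = tent j t := by
    refine Finset.sum_eq_single j (fun i _ hij => ?_) (fun h => absurd hj h)
    by_contra h0
    exact hij (nat_eq_of_near (abs_lt_of_tent h0) hjn)
  rw [h2, Real.norm_eq_abs, abs_lt] at h
  refine ⟨j, hj, fun i => ?_⟩
  split_ifs with hij
  · subst hij
    have h3 : 1 - 2 * |t - j| > 1 / 2 := by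
      by_contra! h4
      have : tent j t ≤ 1 / 2 := max_le (by norm_num) h4
      linarith [h.2]
    have h4 : min 1 (2 - 4 * |t - j|) = 1 := min_eq_left (by linarith)
    rw [plateau, h4]; norm_num
  · by_contra h0
    exact hij (nat_eq_of_near hjn (abs_lt_of_plateau h0))

/-- Orthogonal projections with sum one lift to any intermediate quotient `B` in which a certain
element `c` of the kernel of `q` becomes small. -/
lemma exists_lift_proj (q : A →⋆ₐ[ℂ] C) (hq : Function.Surjective q) {P : ℕ → C}
    (hP : OrthProj P) {n : ℕ} (hsum : ∑ i ∈ Finset.range n, P i = 1) :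
    ∃ c : A, q c = 0 ∧ ∀ (B : Type u) [CStarAlgebra B] (qB : A →⋆ₐ[ℂ] B) (π : B →⋆ₐ[ℂ] C),
      (∀ a, π (qB a) = q a) → ‖qB c‖ < 1 / 2 → ∃ P' : ℕ → B, OrthProj P' ∧
        ∑ i ∈ Finset.range n, P' i = 1 ∧ (∀ i, π (P' i) = P i) ∧ ∀ i, P i = 0 → P' i = 0 := by
  classical
  -- vanishing projections are left out, so that their lifts can be taken to be zero
  let S := (Finset.range n).filter fun i => P i ≠ 0
  have hS : ∀ {i}, i ∈ S ↔ i < n ∧ P i ≠ 0 := by intro i; simp [S]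
  have hS0 : ∀ i ∉ S, P i = 0 := by
    intro i hi
    by_cases h : i < n
    · by_contra h0
      exact hi (hS.2 ⟨h, h0⟩)
    · rw [← mul_one (P i), ← hsum, hP.mul_sum, if_neg (by simpa using h)]
  have hsumS : ∑ i ∈ S, P i = 1 := by
    rw [← hsum]
    exact Finset.sum_subset (Finset.filter_subset _ _) fun i _ h => hS0 i h
  obtain ⟨h, hh⟩ : ∃ h, h = ∑ i ∈ S, i • P i := ⟨_, rfl⟩
  have hsa : IsSelfAdjoint h := by
    rw [hh]
    refine isSelfAdjoint_sum S fun i _ => ?_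
    rw [nsmul_eq_mul]
    exact (IsSelfAdjoint.natCast i).commute_iff (hP.sa i) |>.1 (Nat.cast_commute i _)
  obtain ⟨Z, hZ⟩ := hq h
  obtain ⟨H, hH⟩ : ∃ H, H = (1 / 2 : ℝ) • (Z + star Z) := ⟨_, rfl⟩
  have hHsa : IsSelfAdjoint H := by
    rw [hH]; exact IsSelfAdjoint.smul (IsSelfAdjoint.all _) (IsSelfAdjoint.add_star_self Z)
  have hqH : q H = h := by
    have e : H = (1 / 2 : ℂ) • (Z + star Z) := by
      rw [hH, ← Complex.coe_smul]; norm_num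
    rw [e, map_smul, map_add, map_star, hZ, hsa.star_eq, ← two_smul ℂ h, smul_smul]
    norm_num
  have hcont : ∀ {D E : Type u} [CStarAlgebra D] [CStarAlgebra E] (φ : D →⋆ₐ[ℂ] E),
      Continuous φ := fun φ =>
    AddMonoidHomClass.continuous_of_bound φ 1 (fun a => by rw [one_mul]; exact norm_map_le' φ a)
  have hf : Continuous fun t : ℝ => 1 - ∑ i ∈ S, tent i t :=
    continuous_const.sub (continuous_finsetSum S fun i _ => continuous_tent i)
  -- `c` vanishes under `q` since the spectrum of `q H` lies in `S`; where `c` is small, the spectrum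
  -- has gaps around the half-integers
  refine ⟨cfc (fun t : ℝ => 1 - ∑ i ∈ S, tent i t) H, ?_, ?_⟩
  · rw [StarAlgHom.map_cfc q _ H hf.continuousOn (hcont q) hHsa (hHsa.map q), hqH,
      cfc_diag hP hsumS hh]
    refine Finset.sum_eq_zero fun i hi => ?_
    have : ∑ j ∈ S, tent j i = 1 := by
      rw [Finset.sum_eq_single i (fun j _ hij => ?_) fun h => absurd hi h, tent_self]
      by_contra h0
      exact hij (nat_eq_of_near (abs_lt_of_tent h0) (by simp))
    rw [this, sub_self, zero_smul]
  · intro B _ qB π hπ hsmall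
    rw [StarAlgHom.map_cfc qB _ H hf.continuousOn (hcont qB) hHsa (hHsa.map qB)] at hsmall
    have hBsa : IsSelfAdjoint (qB H) := hHsa.map qB
    have hspec : ∀ t ∈ spectrum ℝ (qB H), ∃ j ∈ S, ∀ i, plateau i t = if j = i then 1 else 0 :=
      fun t ht => plateau_of_tent ((norm_apply_le_norm_cfc
        (fun t : ℝ => 1 - ∑ i ∈ S, tent i t) (qB H) ht hf.continuousOn hBsa).trans_lt hsmall)
    have hmul : ∀ i j, cfc (plateau i) (qB H) * cfc (plateau j) (qB H) =
        cfc (fun t => plateau i t * plateau j t) (qB H) := fun i j =>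
      (cfc_mul (plateau i) (plateau j) (qB H) (continuous_plateau i).continuousOn
        (continuous_plateau j).continuousOn).symm
    refine ⟨fun i => if i ∈ S then cfc (plateau i) (qB H) else 0, ⟨fun i => ?_, fun i => ?_,
      fun i j hij => ?_⟩, ?_, fun i => ?_, fun i hi => ?_⟩
    · split_ifs
      · exact cfc_predicate _ _
      · exact IsSelfAdjoint.zero B
    · split_ifs
      · rw [hmul]
        refine cfc_congr fun t ht => ?_
        obtain ⟨j, _, hj⟩ := hspec t ht
        simp only [hj i]
        split_ifs <;> simp
      · exact mul_zero _
    · split_ifs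
      · rw [hmul, ← cfc_const_zero ℝ (qB H)]
        refine cfc_congr fun t _ => ?_
        by_contra h0
        rw [mul_eq_zero, not_or] at h0
        exact hij (nat_eq_of_near (abs_lt_of_plateau h0.1) (abs_lt_of_plateau h0.2))
      · exact mul_zero _
      · exact zero_mul _
      · exact zero_mul _
    · rw [← Finset.sum_filter]
      have e : (Finset.range n).filter (fun i => i ∈ S) = S := by
        ext i
        rw [Finset.mem_filter, Finset.mem_range]
        exact ⟨fun h => h.2, fun h => ⟨(hS.1 h).1, h⟩⟩
      rw [e, ← cfc_sum plateau (qB H) S fun i _ => (continuous_plateau i).continuousOn,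
        ← cfc_const_one ℝ (qB H)]
      refine cfc_congr fun t ht => ?_
      obtain ⟨j, hjS, hj⟩ := hspec t ht
      rw [Finset.sum_apply, Finset.sum_congr rfl fun i _ => hj i, Finset.sum_ite_eq, if_pos hjS]
    · dsimp only
      split_ifs with hi
      · rw [StarAlgHom.map_cfc π _ (qB H) (continuous_plateau i).continuousOn (hcont π) hBsa
          (hBsa.map π), hπ, hqH, cfc_diag hP hsumS hh,
          Finset.sum_eq_single i (fun j _ hij => ?_) fun h => absurd hi h, plateau_self, one_smul]
        have : plateau i j = 0 := by
          by_contra h0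
          exact hij (nat_eq_of_near (t := j) (by simp) (abs_lt_of_plateau h0))
        rw [this, zero_smul]
      · rw [map_zero, hS0 i hi]
    · exact if_neg fun h => (hS.1 h).2 hi

end LiftProj

/-! ### Passage to the chain of ideals -/

/-- A surjective ⋆-homomorphism `q₁` factors every ⋆-homomorphism that vanishes on its kernel. -/
lemma exists_factor {A B C : Type u} [CStarAlgebra A] [CStarAlgebra B] [CStarAlgebra C]
    (q₁ : A →⋆ₐ[ℂ] B) (q : A →⋆ₐ[ℂ] C) (h1 : Function.Surjective q₁)
    (hker : ∀ a, q₁ a = 0 → q a = 0) : ∃ π : B →⋆ₐ[ℂ] C, ∀ a, π (q₁ a) = q a := by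
  have hwd : ∀ a b, q₁ a = q₁ b → q a = q b := fun a b h => by
    rw [← sub_eq_zero, ← map_sub]
    exact hker _ (by rw [map_sub, h, sub_self])
  let s := Function.surjInv h1
  have hs : ∀ b, q₁ (s b) = b := Function.surjInv_eq h1
  refine ⟨{ toFun := fun b => q (s b)
            map_one' := ?_
            map_mul' := fun x y => ?_
            map_zero' := ?_
            map_add' := fun x y => ?_
            commutes' := fun r => ?_
            map_star' := fun x => ?_ }, fun a => hwd _ _ (hs _)⟩
  · rw [← map_one q]
    exact hwd _ _ (by rw [hs, map_one])
  · rw [← map_mul]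
    exact hwd _ _ (by rw [hs, map_mul, hs, hs])
  · rw [← map_zero q]
    exact hwd _ _ (by rw [hs, map_zero])
  · rw [← map_add]
    exact hwd _ _ (by rw [hs, map_add, hs, hs])
  · rw [← AlgHomClass.commutes q r]
    exact hwd _ _ (by rw [hs, AlgHomClass.commutes])
  · rw [← map_star]
    exact hwd _ _ (by rw [hs, map_star, hs])

/-- The closure of the union of an increasing chain of two-sided ideals, as an ideal. -/
lemma exists_closure_ideal {A : Type u} [CStarAlgebra A] (I : ℕ → TwoSidedIdeal A)
    (hImono : ∀ M N, M ≤ N → (I M : Set A) ⊆ (I N : Set A)) :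
    ∃ K : Ideal A, K.IsTwoSided ∧ (K : Set A) = closure (⋃ N, (I N : Set A)) := by
  let U : Set A := ⋃ N, (I N : Set A)
  have hU : ∀ a, a ∈ U ↔ ∃ N, a ∈ I N := fun a => by simp [U]
  have hadd : ∀ a ∈ U, ∀ b ∈ U, a + b ∈ U := fun a ha b hb => by
    obtain ⟨M, hM⟩ := (hU a).1 ha
    obtain ⟨N, hN⟩ := (hU b).1 hb
    exact (hU _).2 ⟨max M N, (I (max M N)).add_mem (hImono _ _ (le_max_left _ _) hM)
      (hImono _ _ (le_max_right _ _) hN)⟩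
  refine ⟨{ carrier := closure U
            add_mem' := fun {a b} ha hb => map_mem_closure₂ continuous_add ha hb hadd
            zero_mem' := subset_closure ((hU 0).2 ⟨0, (I 0).zero_mem⟩)
            smul_mem' := fun c a ha => ?_ }, ⟨fun {a} b ha => ?_⟩, rfl⟩
  · refine map_mem_closure (continuous_const_mul c) ha fun z hz => ?_
    obtain ⟨N, hN⟩ := (hU z).1 hz
    exact (hU _).2 ⟨N, (I N).mul_mem_left _ _ hN⟩
  · refine map_mem_closure (f := fun x => x * b) (continuous_mul_const b) ha fun z hz => ?_
    obtain ⟨N, hN⟩ := (hU z).1 hz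
    exact (hU _).2 ⟨N, (I N).mul_mem_right _ _ hN⟩

lemma map_prod_pow {A C : Type u} [CStarAlgebra A] [CStarAlgebra C] (q : A →⋆ₐ[ℂ] C) (X : A)
    (n : ℕ) (lam : ℕ → ℂ) (k : ℕ → ℕ) :
    q ((List.range n).map fun i => (X - lam i • 1) ^ k i).prod =
      ((List.range n).map fun i => (q X - lam i • 1) ^ k i).prod := by
  rw [map_list_prod, List.map_map]
  congr 1
  refine List.map_congr_left fun i _ => ?_
  simp [map_pow, map_sub, map_smul]

/-- The lifting theorem with the roots and multiplicities indexed by `ℕ`. -/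
theorem lift_range {A : Type u} [CStarAlgebra A]
    (I : ℕ → TwoSidedIdeal A) (hIclosed : ∀ N, IsClosed (I N : Set A))
    (hImono : ∀ M N, M ≤ N → (I M : Set A) ⊆ (I N : Set A))
    (n : ℕ) (lam : ℕ → ℂ) (hlam : ∀ i < n, ∀ j < n, lam i = lam j → i = j)
    (k : ℕ → ℕ) (hk : ∀ i, 1 ≤ k i) (X : A)
    (hX0 : ((List.range n).map fun i => (X - lam i • 1) ^ k i).prod ∈
      closure (⋃ N, (I N : Set A)))
    (hX1 : Metric.infDist X (closure (⋃ N, (I N : Set A))) ≤ 1) :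
    ∃ (N : ℕ) (Y : A), Y - X ∈ closure (⋃ N, (I N : Set A)) ∧
      ((List.range n).map fun i => (Y - lam i • 1) ^ k i).prod ∈ (I N : Set A) ∧
      Metric.infDist Y (I N : Set A) ≤ 1 := by
  obtain ⟨K, hK2, hK⟩ := exists_closure_ideal I hImono
  have hKc : IsClosed (K : Set A) := hK ▸ isClosed_closure
  rw [← hK] at hX0 hX1
  obtain ⟨C, _, q, hq, hqK, hqn⟩ := exists_quotient K hKc
  have hp : ((List.range n).map fun i => (q X - lam i • 1) ^ k i).prod = 0 := by
    rw [← map_prod_pow]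
    exact (hqK _).2 hX0
  obtain ⟨P, hP, hsum, hup, hdiag⟩ := exists_blocks (q X) n lam k hk hlam hp
  obtain ⟨c, hc, hlift⟩ := exists_lift_proj q hq hP hsum
  have hcK : c ∈ closure (⋃ N, (I N : Set A)) := hK ▸ (hqK c).1 hc
  obtain ⟨z, hz, hcz⟩ := Metric.mem_closure_iff.1 hcK (1 / 2) (by norm_num)
  obtain ⟨N, hzN⟩ := Set.mem_iUnion.1 hz
  have hNset : (((I N).asIdeal : Ideal A) : Set A) = (I N : Set A) := by
    ext a
    exact TwoSidedIdeal.mem_asIdeal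
  obtain ⟨B, _, qN, hqN, hqNK, hqNn⟩ := exists_quotient (I N).asIdeal
    (hNset ▸ hIclosed N)
  have hNK : ∀ a, qN a = 0 → q a = 0 := fun a ha => by
    refine (hqK a).2 ?_
    have h1 : a ∈ (I N : Set A) := hNset ▸ (hqNK a).1 ha
    have h2 : a ∈ (K : Set A) := hK ▸ subset_closure (Set.mem_iUnion.2 ⟨N, h1⟩)
    exact h2
  obtain ⟨π, hπ⟩ := exists_factor qN q hqN hNK
  have hcN : ‖qN c‖ < 1 / 2 := by
    rw [hqNn, hNset]
    exact (Metric.infDist_le_dist_of_mem hzN).trans_lt hcz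
  obtain ⟨P', hP', hsum', hπP, hP0⟩ := hlift B qN π hπ hcN
  have hπlift : ∀ c : C, ∀ ε, ‖c‖ < ε → ∃ b, π b = c ∧ ‖b‖ < ε := by
    intro c ε hε
    obtain ⟨a, rfl⟩ := hq c
    rw [hqn, Metric.infDist_lt_iff ⟨0, K.zero_mem⟩] at hε
    obtain ⟨w, hw, haw⟩ := hε
    refine ⟨qN (a - w), ?_, (norm_map_le' qN _).trans_lt (by rwa [← dist_eq_norm])⟩
    rw [hπ, map_sub, (hqK w).2 hw, sub_zero]
  obtain ⟨y, hy0, hy1, hyx⟩ := lift_of_proj π hπlift hP' (x := q X) (n := n) (lam := lam) (k := k)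
    hk hsum' (fun i hi => hP0 i (by rw [← hπP, hi])) (by rw [hqn]; exact hX1)
    (fun i j hij => by rw [hπP, hπP]; exact hup i j hij)
    (fun j hj => by rw [hπP]; exact hdiag j hj)
  obtain ⟨Y, rfl⟩ := hqN y
  refine ⟨N, Y, ?_, ?_, ?_⟩
  · rw [← hK]
    exact (hqK _).1 (by rw [map_sub, ← hπ Y, hyx, sub_self])
  · rw [← hNset]
    exact (hqNK _).1 (by rw [map_prod_pow, hy0])
  · rw [← hNset, ← hqNn]
    exact hy1

end PolyLift

/-- Let `p(t) = (t−λ₁)^{k₁}⋯(t−λₙ)^{kₙ}` with distinct roots and all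
`kᵢ ≥ 2`. The relation `p(x) = 0, ‖x‖ ≤ 1` is stable (its universal C*-algebra is
semiprojective): for every C*-algebra `A` and increasing chain of closed two-sided ideals
`I₁ ⊆ I₂ ⊆ ⋯` with `I = closure (⋃ I_N)`, every element of `A/I` annihilated by `p` and
of norm `≤ 1` lifts, for some `N`, to an element of `A/I_N` annihilated by `p` and of
norm `≤ 1`. Here elements of the quotients are encoded by representatives: an `x ∈ A/I`
with `p(x) = 0` and `‖x‖ ≤ 1` is an `X : A` with `p(X) ∈ I` and `infDist X I ≤ 1` (the
quotient norm); `y ∈ A/I_N` mapping to `x` under the canonical surjection `A/I_N → A/I`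
is a `Y : A` with `Y - X ∈ I`, and `p(y) = 0`, `‖y‖ ≤ 1` mean `p(Y) ∈ I_N`,
`infDist Y I_N ≤ 1`. -/
theorem stmt_6 {A : Type*} [CStarAlgebra A]
    (I : ℕ → TwoSidedIdeal A) (hIclosed : ∀ N, IsClosed (I N : Set A))
    (hImono : ∀ M N, M ≤ N → (I M : Set A) ⊆ (I N : Set A))
    (n : ℕ) (lam : Fin n → ℂ) (hlam : Function.Injective lam)
    (k : Fin n → ℕ) (hk : ∀ i, 2 ≤ k i)
    (X : A)
    (hX0 : (List.ofFn fun i => (X - lam i • 1) ^ k i).prod ∈ closure (⋃ N, (I N : Set A)))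
    (hX1 : Metric.infDist X (closure (⋃ N, (I N : Set A))) ≤ 1) :
    ∃ (N : ℕ) (Y : A), Y - X ∈ closure (⋃ N, (I N : Set A)) ∧
      (List.ofFn fun i => (Y - lam i • 1) ^ k i).prod ∈ (I N : Set A) ∧
      Metric.infDist Y (I N : Set A) ≤ 1 := by
  let lam' : ℕ → ℂ := fun i => if h : i < n then lam ⟨i, h⟩ else 0
  let k' : ℕ → ℕ := fun i => if h : i < n then k ⟨i, h⟩ else 1
  have hconv : ∀ Z : A, (List.ofFn fun i => (Z - lam i • 1) ^ k i) =
      (List.range n).map fun i => (Z - lam' i • 1) ^ k' i := fun Z => by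
    refine List.ext_getElem (by simp) fun i h1 h2 => ?_
    have hi : i < n := by simpa using h1
    simp [lam', k', hi]
  simp only [hconv] at hX0 ⊢
  refine PolyLift.lift_range I hIclosed hImono n lam' (fun i hi j hj hij => ?_) k' (fun i => ?_) X
    hX0 hX1
  · have h : lam ⟨i, hi⟩ = lam ⟨j, hj⟩ := by simpa [lam', hi, hj] using hij
    exact congrArg Fin.val (hlam h)
  · by_cases h : i < n
    · simpa [k', h] using (one_le_two.trans (hk ⟨i, h⟩))
    · simp [k', h]
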